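/- arXiv:2510.26248 — 3 statements merged into one kernel-verified Lean document; each statement's English description precedes it below -/
import Mathlib

section
/- Let (K, ∂) be a differential field of characteristic zero with field of constants C = {x ∈ K : ∂x = 0}, and let k be an algebraically closed differential subfield (∂(k) ⊆ k) with C ⊆ k which is self-sufficient in K. Let t ∈ K with ∂t ∈ k, and assume that t belongs to an algebraically closed differential intermediate field L (∂(L) ⊆ L) with k ⊆ L ⊆ K, trdeg(L/k) finite and δ(L/k) = 0. Then there exist n ≥ 0, an element a ∈ k, constants λ₁, …, λₙ ∈ C, and nonzero elements b₁, …, bₙ ∈ k such that ∂t = ∂a + λ₁·∂b₁/b₁ + ⋯ + λₙ·∂bₙ/bₙ (a Liouville-type expression for the antiderivative). -/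
/-!
Work in the space `V` of `k`-linear derivations of `L`, whose dimension over `L` is at most
`N = trdeg(L/k)` (`not_linearIndependent_dual`). As `δ(L/k) = 0`, there are `n ≥ N` pairs
`(yᵢ, xᵢ) ∈ Γ(L)` independent modulo `Γ(k)`. The `n + 1` functionals `dt` and
`ωᵢ = dyᵢ / yᵢ - dxᵢ` on `V` are therefore linearly dependent over `L`. They are horizontal for the
action of `∂` on `V` by commutators (for `ωᵢ` because `∂yᵢ = yᵢ ∂xᵢ`, for `dt` because `∂t ∈ k`), so
there is a nontrivial relation with constant coefficients (`exists_constant_relation`), and the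
constants lie in `k`.

The other main ingredient, `key_log`, is a theorem in the spirit of Ax and Rosenlicht: if
`∑ eⱼ dYⱼ / Yⱼ` is exact, with `ℤ`-linearly independent `eⱼ ∈ k`, then all `Yⱼ` belong to `k`. If some
`Yⱼ` were transcendental over `k`, a derivation extending the Euler derivation in the variable `Yⱼ`
would, after taking norms and traces, contradict a residue computation on rational functions
(`residue`). Grouping a constant relation along a basis `e` of the `ℤ`-span of its coefficients,
one gets elements `(Yⱼ, Xⱼ)` of `Γ(L)`, products of powers of the `(yᵢ, xᵢ)`, with `Yⱼ ∈ k`, such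
that `∑ eⱼ Xⱼ ∈ k` when `dt` does not occur, and `a = t + ∑ eⱼ Xⱼ ∈ k` when it does (`claimA`). The
first case contradicts self-sufficiency (`not_selfSufficient`). In the second case, applying `∂`
gives `∂t = ∂a - ∑ eⱼ ∂Yⱼ / Yⱼ`, as `eⱼ` is constant and `∂Xⱼ = ∂Yⱼ / Yⱼ`.
-/

open scoped Classical

noncomputable section

variable {K : Type*} [Field K]

/-- Membership in `Γ(L)` for a subfield `L` of the differential field `(K, der)`:
pairs `(y, x) ∈ L^× × L` with `dery = y·derx`. -/
def GammaMem (der : K → K) (L : Subfield K) (p : Kˣ × K) : Prop :=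
  (p.1 : K) ∈ L ∧ p.2 ∈ L ∧ der (p.1 : K) = (p.1 : K) * der p.2

/-- A family of elements of `Γ(K)` is `ℚ`-linearly independent modulo `Γ(k)`
(equivalently, `ℤ`-linearly independent, since the quotient is torsion-free):
no nontrivial integer combination lies in `Γ(k)`. -/
def GammaIndep (der : K → K) (k : Subfield K) {n : ℕ} (f : Fin n → Kˣ × K) : Prop :=
  ∀ m : Fin n → ℤ,
    GammaMem der k (∏ i, (f i).1 ^ m i, ∑ i, (m i : K) * (f i).2) → m = 0

/-- `dim_ℚ (Γ(L)/Γ(k))` as an extended natural number: the supremum of the sizes of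
finite families of elements of `Γ(L)` that are independent modulo `Γ(k)`. -/
def gammaDim (der : K → K) (k L : Subfield K) : ℕ∞ :=
  ⨆ (n : ℕ) (_ : ∃ f : Fin n → Kˣ × K, (∀ i, GammaMem der L (f i)) ∧ GammaIndep der k f),
    (n : ℕ∞)

/-- A finite family of elements of `K` is algebraically independent over the subfield `k`. -/
def AlgIndepOver (k : Subfield K) {n : ℕ} (x : Fin n → K) : Prop :=
  ∀ P : MvPolynomial (Fin n) K, (∀ m, MvPolynomial.coeff m P ∈ k) →
    MvPolynomial.eval x P = 0 → P = 0

/-- The transcendence degree of `L` over `k` as an extended natural number: the supremum of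
the sizes of finite families of elements of `L` algebraically independent over `k`. -/
def trdegE (k L : Subfield K) : ℕ∞ :=
  ⨆ (n : ℕ) (_ : ∃ x : Fin n → K, (∀ i, x i ∈ L) ∧ AlgIndepOver k x), (n : ℕ∞)

/-- The exponential predimension `δ(L/k) = trdeg(L/k) − dim_ℚ(Γ(L)/Γ(k)) ∈ ℤ ∪ {−∞}`,
with `δ(L/k) = −∞` when the dimension is infinite. -/
def deltaPre (der : K → K) (k L : Subfield K) : WithBot ℤ :=
  if gammaDim der k L = ⊤ then ⊥
  else (((trdegE k L).toNat : ℤ) - ((gammaDim der k L).toNat : ℤ) : ℤ)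

/-- A subfield `k` of `K` is self-sufficient in `K` if `δ(L/k) ≥ 0` for every algebraically
closed intermediate field `L ⊇ k` of finite transcendence degree over `k`. -/
def SelfSufficientIn (der : K → K) (k : Subfield K) : Prop :=
  ∀ L : Subfield K, k ≤ L → IsAlgClosed ↥L → trdegE k L ≠ ⊤ → 0 ≤ deltaPre der k L

end

/-!
STATEMENT 11: Let `(K, der)` have constants `C ⊆ k`, with `k` an algebraically closed
self-sufficient differential subfield. Let `t ∈ K` with `der t ∈ k`, and suppose `t` lies
in an algebraically closed differential intermediate field `L` with `trdeg(L/k)` finite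
and `δ(L/k) = 0`. Then `der t = der a + λ₁·(der b₁)/b₁ + ⋯ + λₙ·(der bₙ)/bₙ` for some
`a ∈ k`, constants `λᵢ` and nonzero `bᵢ ∈ k` (Liouville-type expression).
-/

section DifferentialAlgebra

open Polynomial

/-! ### Derivations and residues on rational functions -/

/-- Derivations extend along formally étale maps, since `Ω[S⁄R]` base-changes to `Ω[T⁄R]`. -/
theorem exists_der_extension {R S T : Type*} [CommRing R] [CommRing S] [CommRing T] [Algebra R S]
    [Algebra R T] [Algebra S T] [IsScalarTower R S T] [Algebra.FormallyEtale S T]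
    (d : Derivation R S T) : ∃ D : Derivation R T T, ∀ s, D (algebraMap S T s) = d s := by
  have hb := KaehlerDifferential.isBaseChange_of_formallyEtale R S T
  refine ⟨(hb.lift d.liftKaehlerDifferential).compDer (KaehlerDifferential.D R T), fun s => ?_⟩
  have := hb.lift_eq d.liftKaehlerDifferential (KaehlerDifferential.D R S s)
  simpa using this

/-- Factorization of a nonzero rational function as a power of `X` times a unit at `0`. -/
theorem ratFunc_exists_zpow {F : Type*} [Field F] (z : RatFunc F) (hz : z ≠ 0) :
    ∃ (m : ℤ) (p q : F[X]), p.eval 0 ≠ 0 ∧ q.eval 0 ≠ 0 ∧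
      z = RatFunc.X ^ m * (algebraMap F[X] (RatFunc F) p / algebraMap F[X] (RatFunc F) q) := by
  have key : ∀ p : F[X], p ≠ 0 → ∃ (n : ℕ) (r : F[X]), r.eval 0 ≠ 0 ∧ p = X ^ n * r := by
    intro p hp
    obtain ⟨r, hr, hr'⟩ := Polynomial.exists_eq_pow_rootMultiplicity_mul_and_not_dvd p hp 0
    refine ⟨_, r, ?_, by simpa using hr⟩
    rwa [Polynomial.dvd_iff_isRoot] at hr'
  obtain ⟨a, p, hp, hp'⟩ := key z.num (RatFunc.num_ne_zero hz)
  obtain ⟨b, q, hq, hq'⟩ := key z.denom z.denom_ne_zero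
  refine ⟨a - b, p, q, hp, hq, ?_⟩
  rw [← RatFunc.num_div_denom z, hp', hq', zpow_sub₀ RatFunc.X_ne_zero]
  simp only [map_mul, map_pow, RatFunc.algebraMap_X, zpow_natCast]
  rw [mul_div_mul_comm]

/-- The Euler derivation `X · d/dX` on `F(X)`. -/
theorem exists_eulerDer (F : Type*) [Field F] :
    ∃ θ : Derivation F (RatFunc F) (RatFunc F), ∀ p : F[X],
      θ (algebraMap _ _ p) = algebraMap _ _ (X * derivative p) := by
  have : Algebra.FormallyEtale F[X] (RatFunc F) :=
    Algebra.FormallyEtale.of_isLocalization (nonZeroDivisors F[X])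
  obtain ⟨D, hD⟩ := exists_der_extension (R := F) (S := F[X]) (T := RatFunc F)
    ((Algebra.linearMap F[X] (RatFunc F)).compDer ((X : F[X]) • Polynomial.derivative'))
  exact ⟨D, fun p => by rw [hD]; simp [Algebra.smul_def]⟩

theorem der_logDeriv_prod_zpow {k L : Type*} [Field L] [CommRing k] [Algebra k L]
    (D : Derivation k L L) {ι : Type*} (s : Finset ι) (y : ι → L) (hy : ∀ i, y i ≠ 0) (m : ι → ℤ) :
    D (∏ i ∈ s, y i ^ m i) / (∏ i ∈ s, y i ^ m i) = ∑ i ∈ s, (m i : L) * (D (y i) / y i) := by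
  classical
  induction s using Finset.induction_on with
  | empty => simp
  | insert a s ha ih =>
    rw [Finset.prod_insert ha, Finset.sum_insert ha, ← ih]
    have h1 : (∏ i ∈ s, y i ^ m i) ≠ 0 := Finset.prod_ne_zero_iff.2 fun i _ => zpow_ne_zero _ (hy i)
    have h2 := zpow_ne_zero (m a) (hy a)
    have h3 := hy a
    rw [D.leibniz, D.leibniz_zpow, zpow_sub_one₀ h3]
    simp only [smul_eq_mul, zsmul_eq_mul]
    field_simp
    ring

/-- The residue computation at `X = 0`. For the Euler derivation `θ`, the value of `θ N / N` at `0` is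
the order of `N` at `0`, whereas `θ w`, if regular at `0`, vanishes there. Hence
`∑ cᵢ θ Nᵢ / Nᵢ = θ w` forces `∑ cᵢ · ord₀ Nᵢ = 0`, and all the orders vanish when the `cᵢ` are
`ℤ`-linearly independent. -/
theorem residue {F : Type*} [Field F] [CharZero F]
    (θ : Derivation F (RatFunc F) (RatFunc F))
    (hθ : ∀ p : F[X], θ (algebraMap _ _ p) = algebraMap _ _ (X * derivative p))
    {ι : Type*} [Fintype ι] (c : ι → F) (N : ι → RatFunc F) (hN : ∀ i, N i ≠ 0) (w : RatFunc F)
    (h : ∑ i, algebraMap F (RatFunc F) (c i) * (θ (N i) / N i) = θ w) (hc : LinearIndependent ℤ c)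
    (i₀ : ι) (d : ℕ) (hd : N i₀ = RatFunc.X ^ d) : d = 0 := by
  classical
  -- `A` is only known through `hAd`, so that the simplifier treats it as an abstract homomorphism.
  obtain ⟨A, hAd⟩ : ∃ A : F[X] →+* RatFunc F, A = algebraMap F[X] (RatFunc F) := ⟨_, rfl⟩
  have hA : Function.Injective A := hAd ▸ IsFractionRing.injective F[X] (RatFunc F)
  have hAX : A X = RatFunc.X := hAd ▸ RatFunc.algebraMap_X
  have hfac := ratFunc_exists_zpow (F := F)
  rw [← hAd] at hθ hfac
  have hA0 : ∀ q : F[X], q.eval 0 ≠ 0 → A q ≠ 0 := fun q hq h0 => by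
    rw [map_eq_zero_iff _ hA] at h0; simp [h0] at hq
  have hθX : θ RatFunc.X = RatFunc.X := by
    have := hθ X
    rwa [derivative_X, mul_one, hAX] at this
  have hlog : ∀ (m : ℤ) (p q : F[X]), p.eval 0 ≠ 0 → q.eval 0 ≠ 0 →
      θ (RatFunc.X ^ m * (A p / A q)) / (RatFunc.X ^ m * (A p / A q)) =
        (m : RatFunc F) + RatFunc.X * (A (derivative p * q - p * derivative q) / A (p * q)) := by
    intro m p q hp hq
    have h1 := hA0 p hp
    have h2 := hA0 q hq
    have h3 : (RatFunc.X : RatFunc F) ≠ 0 := RatFunc.X_ne_zero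
    have h4 : (RatFunc.X : RatFunc F) ^ m ≠ 0 := zpow_ne_zero _ h3
    rw [θ.leibniz, θ.leibniz_div, θ.leibniz_zpow, hθX, zpow_sub_one₀ h3, hθ, hθ]
    simp only [smul_eq_mul, zsmul_eq_mul, map_mul, map_sub, hAX]
    field_simp
    ring
  choose m p q hp hq hz using fun i => hfac (N i) (hN i)
  -- The left-hand side is `∑ cᵢ mᵢ` plus a multiple of `X` by a function regular at `0`.
  have hreg : ∀ s : Finset ι, ∃ G H : F[X], H.eval 0 ≠ 0 ∧
      ∑ i ∈ s, algebraMap F (RatFunc F) (c i) * (θ (N i) / N i) =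
        A (C (∑ i ∈ s, c i * m i)) + RatFunc.X * (A G / A H) := by
    intro s
    induction s using Finset.induction_on with
    | empty => exact ⟨0, 1, by simp, by simp⟩
    | insert a s ha ih =>
      obtain ⟨G, H, hH, ih⟩ := ih
      refine ⟨C (c a) * (derivative (p a) * q a - p a * derivative (q a)) * H + G * (p a * q a),
        H * (p a * q a), ?_, ?_⟩
      · simp [hH, hp, hq]
      have h1 := hA0 _ hH
      have h2 := hA0 _ (hp a)
      have h3 := hA0 _ (hq a)
      have hcA : algebraMap F (RatFunc F) (c a) = A (C (c a)) := by
        rw [IsScalarTower.algebraMap_apply F F[X] (RatFunc F), hAd]; rfl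
      have e := hlog (m a) _ _ (hp a) (hq a)
      rw [← hz a] at e
      rw [Finset.sum_insert ha, Finset.sum_insert ha, ih, e, hcA]
      simp only [map_mul, map_add, map_sub, map_intCast]
      simp only [map_mul, map_sub] at *
      field_simp
      ring
  obtain ⟨G, H, hH, hGH⟩ := hreg Finset.univ
  rw [h] at hGH
  -- Evaluation at `0`, after clearing denominators; a pole of `w` would give `θ w` a pole.
  have hsum : ∑ i, c i * m i = 0 := by
    generalize ∑ i, c i * m i = c0 at hGH ⊢
    by_cases hw : w = 0
    · rw [hw, map_zero] at hGH
      have h1 := hA0 _ hH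
      have : A (C c0 * H + X * G) = 0 := by
        simp only [map_add, map_mul]
        rw [hAX]
        field_simp at hGH
        rw [← hGH]; ring
      rw [map_eq_zero_iff _ hA] at this
      have := congrArg (Polynomial.eval 0) this
      simpa [hH] using this
    · obtain ⟨n, P, Q, hP, hQ, hw'⟩ := hfac w hw
      have e := hlog n _ _ hP hQ
      rw [← hw', div_eq_iff hw, hGH, hw'] at e
      have h1 := hA0 _ hH
      have h2 := hA0 _ hP
      have h3 := hA0 _ hQ
      have hX : (RatFunc.X : RatFunc F) ≠ 0 := RatFunc.X_ne_zero
      have hXA : (RatFunc.X : RatFunc F) = A X := hAX.symm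
      obtain ⟨n, rfl | rfl⟩ := n.eq_nat_or_neg
      · have : A (Q ^ 2 * (C c0 * H + X * G)) =
            A (H * X ^ n * (C (n : F) * P * Q + X * (derivative P * Q - P * derivative Q))) := by
          simp only [map_add, map_mul, map_pow, map_sub, map_natCast, zpow_natCast] at e ⊢
          rw [← hXA]
          push_cast at e
          field_simp at e
          linear_combination e
        have := congrArg (Polynomial.eval 0) (hA this)
        rcases Nat.eq_zero_or_pos n with rfl | hn
        · simpa [hH, hQ] using this
        · simpa [hH, hQ, hn.ne'] using this
      · rcases Nat.eq_zero_or_pos n with rfl | hn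
        · have : A (Q ^ 2 * (C c0 * H + X * G)) =
              A (H * (X * (derivative P * Q - P * derivative Q))) := by
            simp only [map_add, map_mul, map_pow, map_sub] at e ⊢
            rw [← hXA]
            simp at e
            field_simp at e
            linear_combination e
          have := congrArg (Polynomial.eval 0) (hA this)
          simpa [hH, hQ] using this
        · exfalso
          have : A (X ^ n * Q ^ 2 * (C c0 * H + X * G)) =
              A (H * (- C (n : F) * P * Q + X * (derivative P * Q - P * derivative Q))) := by
            simp only [map_add, map_mul, map_pow, map_sub, map_natCast, zpow_neg, zpow_natCast,
              map_neg] at e ⊢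
            rw [← hXA]
            push_cast at e
            field_simp at e
            linear_combination e
          have := congrArg (Polynomial.eval 0) (hA this)
          simp [hH, hQ, hP, hn.ne'] at this
  have hm : m i₀ = 0 := by
    refine Fintype.linearIndependent_iff.1 hc m ?_ i₀
    rw [← hsum]
    exact Finset.sum_congr rfl fun i _ => by rw [zsmul_eq_mul, mul_comm]
  -- `X ^ d` is a unit at `0` only for `d = 0`.
  have h1 := hz i₀
  rw [hm, zpow_zero, one_mul, hd] at h1
  have : A (X ^ d * q i₀) = A (p i₀) := by
    have h3 := hA0 _ (hq i₀)
    rw [map_mul, map_pow, hAX, h1]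
    exact div_mul_cancel₀ _ h3
  have := congrArg (Polynomial.eval 0) (hA this)
  by_contra hd0
  simp [hd0] at this
  exact hp i₀ this.symm

/-! ### Exact logarithmic differentials -/

/-- The differential ring structure given by a derivation over an arbitrary base ring. -/
abbrev toDifferential {k M : Type*} [CommRing k] [CommRing M] [Algebra k M]
    (d : Derivation k M M) : Differential M :=
  ⟨d.restrictScalars ℤ⟩

/-- Over an algebraically closed field `L` algebraic over `F(X)`, with `D` extending the Euler
derivation, the logarithmic derivatives of elements `Yᵢ`, one of which is `X`, satisfy no relation
`∑ cᵢ D Yᵢ / Yᵢ = D u` with `ℤ`-linearly independent constants `cᵢ`. Norm and trace from the finite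
extension `F(X)(u, Y)` bring the relation down to `F(X)`, where `residue` applies: the norm of `X` is
`X ^ [E : F(X)]`. -/
theorem no_log_primitive {F L : Type*} [Field F] [CharZero F] [Field L] [IsAlgClosed L]
    [Algebra (RatFunc F) L] [Algebra.IsAlgebraic (RatFunc F) L]
    (θ : Derivation F (RatFunc F) (RatFunc F))
    (hθ : ∀ p : F[X], θ (algebraMap _ _ p) = algebraMap _ _ (X * derivative p))
    (D : Derivation ℤ L L)
    (hD : ∀ z, D (algebraMap (RatFunc F) L z) = algebraMap (RatFunc F) L (θ z))
    {ι : Type*} [Fintype ι] (c : ι → F) (hc : LinearIndependent ℤ c)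
    (Y : ι → L) (hY : ∀ i, Y i ≠ 0) (u : L)
    (h : ∑ i, algebraMap (RatFunc F) L (algebraMap F _ (c i)) * (D (Y i) / Y i) = D u)
    (i₀ : ι) (hi₀ : Y i₀ = algebraMap (RatFunc F) L RatFunc.X) : False := by
  classical
  let E := IntermediateField.adjoin (RatFunc F) (insert u (Set.range Y))
  have : CharZero L := charZero_of_injective_algebraMap (algebraMap (RatFunc F) L).injective
  have : FiniteDimensional (RatFunc F) E :=
    IntermediateField.finiteDimensional_adjoin
      fun x _ => (Algebra.IsAlgebraic.isAlgebraic x).isIntegral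
  let : Differential (RatFunc F) := toDifferential θ
  let : Differential L := ⟨D⟩
  have : DifferentialAlgebra (RatFunc F) L := ⟨hD⟩
  have huE : u ∈ E := IntermediateField.subset_adjoin _ _ (Set.mem_insert _ _)
  have hYE : ∀ i, Y i ∈ E := fun i =>
    IntermediateField.subset_adjoin _ _ (Set.mem_insert_of_mem _ ⟨i, rfl⟩)
  let u' : E := ⟨u, huE⟩
  let Y' : ι → E := fun i => ⟨Y i, hYE i⟩
  have hY' : ∀ i, Y' i ≠ 0 := fun i h0 => hY i (congrArg Subtype.val h0)
  have hval : ∀ (σ : E →ₐ[RatFunc F] L) (z : E), σ (Differential.deriv z) = D (σ z) := fun σ z =>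
    Differential.algHom_deriv' σ σ.injective z
  have hE : ∑ i, algebraMap (RatFunc F) E (algebraMap F _ (c i)) *
      (Differential.deriv (Y' i) / Y' i) = Differential.deriv u' := by
    refine E.val.injective ?_
    change E.val _ = E.val _
    rw [hval, map_sum]
    simp only [map_mul, map_div₀, hval, AlgHom.commutes]
    exact h
  have hσ : ∀ σ : E →ₐ[RatFunc F] L, ∑ i, algebraMap (RatFunc F) L (algebraMap F _ (c i)) *
      (D (σ (Y' i)) / σ (Y' i)) = D (σ u') := fun σ => by
    rw [← hval, ← hE, map_sum]
    simp only [map_mul, map_div₀, hval, AlgHom.commutes]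
  have hprod : ∀ z : E, z ≠ 0 →
      D (algebraMap (RatFunc F) L (Algebra.norm (RatFunc F) z)) /
        algebraMap (RatFunc F) L (Algebra.norm (RatFunc F) z) =
      ∑ σ : E →ₐ[RatFunc F] L, D (σ z) / σ z := by
    intro z hz
    rw [Algebra.norm_eq_prod_embeddings]
    have := der_logDeriv_prod_zpow D Finset.univ (fun σ : E →ₐ[RatFunc F] L => σ z)
      (fun σ => by simpa using hz) (fun _ => 1)
    simpa using this
  have hsum : ∑ i, algebraMap F (RatFunc F) (c i) *
      (θ (Algebra.norm (RatFunc F) (Y' i)) / Algebra.norm (RatFunc F) (Y' i)) =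
      θ (Algebra.trace (RatFunc F) E u') := by
    apply (algebraMap (RatFunc F) L).injective
    rw [← hD, trace_eq_sum_embeddings, map_sum, map_sum]
    simp only [map_mul, map_div₀, ← hD]
    simp only [hprod _ (hY' _), ← hσ, Finset.mul_sum]
    exact Finset.sum_comm
  refine (Module.finrank_pos (R := RatFunc F) (M := E)).ne'
    (residue θ hθ c _ (fun i => ?_) _ hsum hc i₀ _ ?_)
  · exact Algebra.norm_ne_zero_iff.2 (hY' i)
  · rw [← Algebra.norm_algebraMap]
    congr 1
    apply Subtype.ext
    exact hi₀

theorem isAlgebraic_mem_range {k L : Type*} [Field k] [Field L] [Algebra k L]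
    [IsAlgClosed k] {s : L} (hs : IsAlgebraic k s) : s ∈ Set.range (algebraMap k L) := by
  have : Algebra.IsAlgebraic k (IntermediateField.adjoin k {s}) :=
    IntermediateField.isAlgebraic_adjoin_simple hs.isIntegral
  have h := IntermediateField.eq_bot_of_isAlgClosed_of_isAlgebraic
    (IntermediateField.adjoin k {s})
  have h2 := IntermediateField.mem_adjoin_simple_self k s
  rw [h] at h2
  exact IntermediateField.mem_bot.1 h2

theorem isAlgebraic_toAlgebra_of_subset_range {R L : Type*} [Field R] [Field L] (M : Subfield L)
    (hM : Algebra.IsAlgebraic M L) (φ : R →+* L) (hle : M ≤ φ.fieldRange) :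
    @Algebra.IsAlgebraic R L _ _ φ.toAlgebra := by
  let : Algebra R L := φ.toAlgebra
  choose ψ hψ using fun z : M => hle z.2
  let ψ' : M →+* R :=
    { toFun := ψ
      map_one' := φ.injective (by rw [hψ, map_one]; rfl)
      map_zero' := φ.injective (by rw [hψ, map_zero]; rfl)
      map_add' := fun a b => φ.injective (by rw [map_add, hψ, hψ, hψ]; rfl)
      map_mul' := fun a b => φ.injective (by rw [map_mul, hψ, hψ, hψ]; rfl) }
  let : Algebra M R := ψ'.toAlgebra
  have : IsScalarTower M R L := IsScalarTower.of_algebraMap_eq fun z => (hψ z).symm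
  exact Algebra.IsAlgebraic.tower_top (K := M) R

/-- An element `s` outside the algebraically closed field `k` is part of a transcendence basis `B`
of `L` over `k`, so that `L` is algebraic over `F(s)` with `F = k(B ∖ {s})` and `s` transcendental
over `F`. -/
theorem exists_ratFunc_of_not_mem {k L : Type*} [Field k] [Field L] [Algebra k L]
    [IsAlgClosed k] (s : L) (hs : s ∉ Set.range (algebraMap k L)) :
    ∃ (F : IntermediateField k L) (φ : RatFunc F →ₐ[F] L), φ RatFunc.X = s ∧
      @Algebra.IsAlgebraic (RatFunc F) L _ _ φ.toRingHom.toAlgebra := by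
  have hs' : Transcendental k s := fun h => hs (isAlgebraic_mem_range h)
  have h1 : AlgebraicIndepOn k id ({s} : Set L) := by
    rw [AlgebraicIndepOn, algebraicIndependent_singleton_iff ⟨s, rfl⟩]
    exact hs'
  obtain ⟨B, hsB, hB⟩ := exists_isTranscendenceBasis_superset h1
  have hsB : s ∈ B := by simpa using hsB
  let F := IntermediateField.adjoin k (B \ {s})
  have hF : Transcendental F s := by
    have h2 := (AlgebraicIndependent.transcendental_adjoin hB.1 (s := {x | x.1 ≠ s}) (i := ⟨s, hsB⟩)
      (by simp))
    have h3 : (Set.image (↑) {x : B | x.1 ≠ s} : Set L) = B \ {s} := by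
      ext x; simp [and_comm]
    rw [h3] at h2
    exact IntermediateField.transcendental_adjoin_iff.2 h2
  let φ : RatFunc F →ₐ[F] L :=
    (IntermediateField.val _).comp (RatFunc.algEquivOfTranscendental s hF).toAlgHom
  have hφ : φ RatFunc.X = s := by simp [φ]
  refine ⟨F, φ, hφ, ?_⟩
  let : Algebra (RatFunc F) L := φ.toRingHom.toAlgebra
  have h4 := hB.isAlgebraic_field
  rw [Subtype.range_coe] at h4
  refine isAlgebraic_toAlgebra_of_subset_range (IntermediateField.adjoin k B).toSubfield
    (by exact h4) φ.toRingHom ?_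
  change (IntermediateField.adjoin k B) ≤ (φ.restrictScalars k).fieldRange
  refine IntermediateField.adjoin_le_iff.2 fun x hx => ?_
  by_cases hxs : x = s
  · exact ⟨RatFunc.X, hφ.trans hxs.symm⟩
  · exact ⟨algebraMap F _ ⟨x, IntermediateField.subset_adjoin _ _ ⟨hx, hxs⟩⟩, φ.commutes _⟩

/-- If a combination `∑ cᵢ dYᵢ / Yᵢ` with `ℤ`-linearly independent coefficients `cᵢ ∈ k` is exact in
the differentials of `L` over `k`, then every `Yᵢ` lies in `k`. Exactness is tested on all `k`-linear
derivations of `L`. -/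
theorem key_log {k L : Type*} [Field k] [Field L] [Algebra k L] [CharZero k]
    [IsAlgClosed k] [IsAlgClosed L] {ι : Type*} [Fintype ι]
    (c : ι → k) (hc : LinearIndependent ℤ c) (Y : ι → L) (hY : ∀ i, Y i ≠ 0) (u : L)
    (h : ∀ δ : Derivation k L L, ∑ i, algebraMap k L (c i) * (δ (Y i) / Y i) = δ u) (j : ι) :
    Y j ∈ Set.range (algebraMap k L) := by
  by_contra hj
  obtain ⟨F, φ, hφ, halg⟩ := exists_ratFunc_of_not_mem (Y j) hj
  let : Algebra (RatFunc F) L := φ.toRingHom.toAlgebra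
  have : CharZero F := charZero_of_injective_algebraMap (algebraMap k F).injective
  have : CharZero (RatFunc F) := charZero_of_injective_algebraMap (algebraMap F _).injective
  have htow : IsScalarTower F (RatFunc F) L :=
    IsScalarTower.of_algebraMap_eq fun z => (φ.commutes z).symm
  have : Algebra.FormallyEtale (RatFunc F) L := Algebra.FormallyEtale.of_isSeparable _ _
  obtain ⟨θ, hθ⟩ := exists_eulerDer F
  obtain ⟨D, hD⟩ := exists_der_extension (R := F) (S := RatFunc F) (T := L)
    ((Algebra.linearMap (RatFunc F) L).compDer θ)
  refine no_log_primitive (L := L) θ hθ (D.restrictScalars ℤ) hD (fun i => algebraMap k F (c i)) ?_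
    Y hY u ?_ j hφ.symm
  · exact hc.map' ((algebraMap k F).toAddMonoidHom.toIntLinearMap)
      (LinearMap.ker_eq_bot.2 (algebraMap k F).injective)
  · have := h (D.restrictScalars k)
    rw [Derivation.restrictScalars_apply] at this
    have e : ∀ x : k, algebraMap (RatFunc F) L (algebraMap F _ (algebraMap k F x)) =
        algebraMap k L x := fun x => by
      rw [← IsScalarTower.algebraMap_apply F (RatFunc F) L]
      rfl
    simp only [e]
    exact this

/-- An element killed by all `k`-linear derivations lies in the algebraically closed field `k`. -/
theorem mem_range_of_der {k L : Type*} [Field k] [Field L] [Algebra k L] [CharZero k]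
    [IsAlgClosed k] [IsAlgClosed L] (z : L) (h : ∀ δ : Derivation k L L, δ z = 0) :
    z ∈ Set.range (algebraMap k L) := by
  by_cases hz : z = 0
  · exact ⟨0, by simp [hz]⟩
  refine key_log (fun _ : Unit => (1 : k)) ?_ (fun _ => z) (fun _ => hz) 0 (fun δ => by simp [h]) ()
  exact LinearIndependent.of_subsingleton () one_ne_zero

/-- A finite family `c` in a torsion-free group is expressed through a basis `e` of its span. The
last identity records that the matrix `q` of `c` in terms of `e` has a left inverse `r`. -/
theorem exists_int_basis {M : Type*} [AddCommGroup M] [IsAddTorsionFree M] {n : ℕ}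
    (c : Fin n → M) :
    ∃ (m : ℕ) (e : Fin m → M) (q : Fin n → Fin m → ℤ) (r : Fin m → Fin n → ℤ),
      LinearIndependent ℤ e ∧ (∀ i, c i = ∑ j, q i j • e j) ∧
      (∀ j j', ∑ i, r j i * q i j' = if j = j' then 1 else 0) := by
  let S := Submodule.span ℤ (Set.range c)
  have : Module.Finite ℤ S := Module.Finite.span_of_finite ℤ (Set.finite_range c)
  have : Module.Free ℤ S := Module.free_of_finite_type_torsion_free'
  let b := Module.finBasis ℤ S
  have hr : ∀ j, ∃ r : Fin n → ℤ, ∑ i, r i • c i = b j := fun j =>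
    (Submodule.mem_span_range_iff_exists_fun ℤ).1 (b j).2
  choose r hr using hr
  let c' : Fin n → S := fun i => ⟨c i, Submodule.subset_span ⟨i, rfl⟩⟩
  refine ⟨_, fun j => (b j : M), fun i j => b.repr (c' i) j, r, ?_, fun i => ?_, fun j j' => ?_⟩
  · exact b.linearIndependent.map' S.subtype (Submodule.ker_subtype S)
  · have := congrArg Subtype.val (b.sum_repr (c' i))
    rw [← show ((c' i : S) : M) = c i from rfl]
    refine this.symm.trans ?_
    rw [AddSubmonoidClass.coe_finsetSum]
    rfl
  · have : ∑ i, r j i • c' i = b j := Subtype.ext (by simpa [c'] using hr j)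
    have := congrArg (fun z => b.repr z j') this
    simpa [Finsupp.single_apply] using this

/-- Suppose `∑ cᵢ (dyᵢ / yᵢ - dxᵢ) = dt` and rewrite the left-hand side in terms of a basis `e` of
the `ℤ`-span of the `cᵢ`. Then `key_log` puts the products `∏ yᵢ ^ qᵢⱼ` in `k`, and what remains of
the relation says that `t + ∑ eⱼ ∑ qᵢⱼ xᵢ` has zero differential. -/
theorem claimA {k L : Type*} [Field k] [Field L] [Algebra k L] [CharZero k]
    [IsAlgClosed k] [IsAlgClosed L] {n m : ℕ} (c : Fin n → k) (e : Fin m → k)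
    (q : Fin n → Fin m → ℤ) (he : LinearIndependent ℤ e) (hc : ∀ i, c i = ∑ j, q i j • e j)
    (y x : Fin n → L) (hy : ∀ i, y i ≠ 0) (t : L)
    (h : ∀ δ : Derivation k L L,
      ∑ i, algebraMap k L (c i) * (δ (y i) / y i - δ (x i)) = δ t) :
    (∀ j, ∏ i, y i ^ q i j ∈ Set.range (algebraMap k L)) ∧
    t + ∑ j, algebraMap k L (e j) * ∑ i, (q i j : L) * x i ∈ Set.range (algebraMap k L) := by
  have : CharZero L := charZero_of_injective_algebraMap (algebraMap k L).injective
  have hY : ∀ j, ∏ i, y i ^ q i j ≠ 0 := fun j =>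
    Finset.prod_ne_zero_iff.2 fun i _ => zpow_ne_zero _ (hy i)
  have key : ∀ δ : Derivation k L L,
      ∑ j, algebraMap k L (e j) * (δ (∏ i, y i ^ q i j) / ∏ i, y i ^ q i j) =
        δ (t + ∑ j, algebraMap k L (e j) * ∑ i, (q i j : L) * x i) := by
    intro δ
    have hint : ∀ (a : ℤ) (z : L), δ ((a : L) * z) = (a : L) * δ z := fun a z => by
      rw [← zsmul_eq_mul, ← zsmul_eq_mul, map_zsmul]
    have halg : ∀ (a : k) (z : L), δ (algebraMap k L a * z) = algebraMap k L a * δ z := fun a z => by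
      rw [← Algebra.smul_def, ← Algebra.smul_def, δ.map_smul]
    simp only [der_logDeriv_prod_zpow δ Finset.univ y hy, map_add, map_sum, ← h, halg, hint, hc]
    rw [← sub_eq_iff_eq_add, ← Finset.sum_sub_distrib]
    simp only [← mul_sub, ← Finset.sum_sub_distrib, Finset.mul_sum, zsmul_eq_mul, map_mul,
      map_intCast, Finset.sum_mul]
    rw [Finset.sum_comm]
    exact Finset.sum_congr rfl fun i _ => Finset.sum_congr rfl fun j _ => by ring
  have h1 := key_log e he _ hY _ key
  refine ⟨h1, mem_range_of_der _ fun δ => ?_⟩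
  rw [← key]
  refine Finset.sum_eq_zero fun j _ => ?_
  obtain ⟨a, ha⟩ := h1 j
  rw [← ha]
  simp

/-! ### Horizontal functionals on derivations -/

/-- Functionals that are horizontal, in the sense `D (φ v) = φ (β v)`, and linearly dependent over
`L`, satisfy a nontrivial relation with constant coefficients: in a relation of minimal support with
one coefficient equal to `1`, applying `D` to the coefficients gives a shorter relation. -/
theorem exists_constant_relation {L V : Type*} [Field L] [AddCommGroup V] [Module L V]
    (D : Derivation ℤ L L) (β : V → V) {ι : Type*} [Fintype ι] (φ : ι → Module.Dual L V)
    (hφ : ∀ i v, D (φ i v) = φ i (β v)) (f : ι → L) (hf : f ≠ 0) (h : ∑ i, f i • φ i = 0) :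
    ∃ c : ι → L, c ≠ 0 ∧ (∀ i, D (c i) = 0) ∧ ∑ i, c i • φ i = 0 := by
  classical
  induction hn : (Finset.univ.filter fun i => f i ≠ 0).card using Nat.strong_induction_on
    generalizing f with
  | _ n ih =>
    obtain ⟨i₀, hi₀⟩ := Function.ne_iff.1 hf
    simp only [Pi.zero_apply] at hi₀
    let g : ι → L := fun i => f i / f i₀
    have hg : ∑ i, g i • φ i = 0 := by
      have := congrArg (fun ψ => (f i₀)⁻¹ • ψ) h
      simpa [Finset.smul_sum, smul_smul, g, div_eq_inv_mul] using this
    have hgi : g i₀ = 1 := div_self hi₀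
    by_cases hDg : ∀ i, D (g i) = 0
    · exact ⟨g, fun h0 => by simp [h0] at hgi, hDg, hg⟩
    push Not at hDg
    obtain ⟨i₁, hi₁⟩ := hDg
    refine ih _ ?_ (fun i => D (g i)) (fun h0 => hi₁ (congrFun h0 i₁)) ?_ rfl
    · rw [← hn]
      refine Finset.card_lt_card (Finset.ssubset_iff_of_subset ?_ |>.2 ⟨i₀, ?_, ?_⟩)
      · intro i
        simp only [Finset.mem_filter, Finset.mem_univ, true_and]
        intro hi h0
        exact hi (by simp [g, h0])
      · simpa using hi₀
      · simp [hgi]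
    · ext v
      have h1 := congrArg (fun ψ : Module.Dual L V => D (ψ v)) hg
      have h2 := congrArg (fun ψ : Module.Dual L V => ψ (β v)) hg
      simp only [LinearMap.coe_sum, Finset.sum_apply, LinearMap.smul_apply, map_sum,
        Derivation.leibniz, hφ, smul_eq_mul, LinearMap.zero_apply, map_zero,
        Finset.sum_add_distrib] at h1 h2 ⊢
      rw [h2, zero_add] at h1
      simpa [mul_comm] using h1

/-- A `k`-linear derivation of `L` is determined by its values on any `s`
with `L` algebraic over `k(s)`. -/
theorem der_eq_zero {k L : Type*} [Field k] [Field L] [Algebra k L] [CharZero k]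
    (s : Set L) [Algebra.IsAlgebraic (IntermediateField.adjoin k s) L]
    (δ : Derivation k L L) (h : ∀ x ∈ s, δ x = 0) : δ = 0 := by
  -- The constants of `δ` form a field over which `L` is algebraic.
  let C : IntermediateField k L :=
    { carrier := {x | δ x = 0}
      mul_mem' := fun {a b} ha hb => by
        simp only [Set.mem_ofPred_eq] at *
        rw [δ.leibniz, ha, hb]; simp
      add_mem' := fun {a b} ha hb => by
        simp only [Set.mem_ofPred_eq] at *
        rw [map_add, ha, hb, add_zero]
      algebraMap_mem' := fun r => δ.map_algebraMap r
      inv_mem' := fun a ha => by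
        simp only [Set.mem_ofPred_eq] at *
        rw [δ.leibniz_inv, ha, smul_zero] }
  have hle : IntermediateField.adjoin k s ≤ C := IntermediateField.adjoin_le_iff.2 h
  have halg : ∀ z : L, IsAlgebraic C z := fun z =>  by
    have halg := Algebra.IsAlgebraic.isAlgebraic (R := IntermediateField.adjoin k s) z
    let : Algebra (IntermediateField.adjoin k s) C := (IntermediateField.inclusion hle).toAlgebra
    have : IsScalarTower (IntermediateField.adjoin k s) C L :=
      IsScalarTower.of_algebraMap_eq fun _ => rfl
    exact IsAlgebraic.tower_top C halg
  have : CharZero C := charZero_of_injective_algebraMap (algebraMap k C).injective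
  let L₁ : L →ₗ[C] L :=
    { toFun := δ
      map_add' := map_add δ
      map_smul' := fun c x => by
        have : δ (c : L) = 0 := c.2
        rw [Algebra.smul_def]
        change δ ((c : L) * x) = (c : L) * δ x
        rw [δ.leibniz, this]; simp }
  let δ' : Derivation C L L := Derivation.mk' L₁ fun a b => δ.leibniz a b
  ext z
  have h1 := (halg z).isIntegral
  have h2 := δ'.map_aeval (minpoly C z) z
  rw [minpoly.aeval, map_zero] at h2
  have h3 : (minpoly C z).Separable := (minpoly.irreducible h1).separable
  exact (smul_eq_zero.1 h2.symm).resolve_left (h3.aeval_derivative_ne_zero (minpoly.aeval _ _))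

/-- The space of `k`-linear derivations of `L` has dimension at most the transcendence degree, so
more functionals than that are linearly dependent. -/
theorem not_linearIndependent_dual {k L : Type*} [Field k] [Field L] [Algebra k L] [CharZero k]
    {N : ℕ} (hN : ∀ (n : ℕ) (x : Fin n → L), AlgebraicIndependent k x → n ≤ N)
    {ι : Type*} [Fintype ι] (hι : N < Fintype.card ι)
    (φ : ι → Module.Dual L (Derivation k L L)) : ¬ LinearIndependent L φ := by
  intro hφ
  obtain ⟨s, hs⟩ := exists_isTranscendenceBasis k L
  have hfin : ∀ t : Finset s, t.card ≤ N := fun t => by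
    have := (hs.1.comp ((↑) : t → s) Subtype.val_injective).comp _ t.equivFin.symm.injective
    exact hN _ _ this
  have hsf : Finite s := by
    by_contra h
    rw [not_finite_iff_infinite] at h
    obtain ⟨t, ht⟩ := Infinite.exists_subset_card_eq s (N + 1)
    have := hfin t
    omega
  have : Fintype s := Fintype.ofFinite s
  have hcard := hfin Finset.univ
  have := hs.isAlgebraic_field
  rw [Subtype.range_coe] at this
  let ev : Derivation k L L →ₗ[L] (s → L) :=
    { toFun := fun δ x => δ x
      map_add' := fun _ _ => rfl
      map_smul' := fun _ _ => rfl }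
  have hev : Function.Injective ev := by
    refine (injective_iff_map_eq_zero ev).2 fun δ hδ => der_eq_zero s δ fun x hx => ?_
    exact congrFun hδ ⟨x, hx⟩
  have := Module.Finite.of_injective ev hev
  have h1 := LinearMap.finrank_le_finrank_of_injective hev
  have h2 := hφ.fintype_card_le_finrank
  rw [Subspace.dual_finrank_eq] at h2
  rw [Module.finrank_fintype_fun_eq_card] at h1
  rw [Finset.card_univ] at hcard
  omega

theorem card_le_of_isAlgebraic_adjoin {k L : Type*} [Field k] [Field L] [Algebra k L]
    (S : Finset L) {n : ℕ} (x : Fin n → L) (hx : AlgebraicIndependent k x)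
    (h : ∀ i, IsAlgebraic (IntermediateField.adjoin k (S : Set L)) (x i)) : n ≤ S.card := by
  have h1 : (AlgebraicIndependent.matroid k L).Indep (Set.range x) := hx.to_subtype_range
  have h2 : Set.range x ⊆ (AlgebraicIndependent.matroid k L).closure S := by
    rw [AlgebraicIndependent.matroid_closure_eq]
    rintro _ ⟨i, rfl⟩
    exact IntermediateField.isAlgebraic_adjoin_iff.1 (h i)
  have h3 := h1.encard_le_eRk_of_subset h2
  rw [Matroid.eRk_closure_eq] at h3
  have h4 := h3.trans ((AlgebraicIndependent.matroid k L).eRk_le_encard _)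
  rw [Set.encard_coe_eq_coe_finsetCard, ← Set.image_univ, hx.injective.injOn.encard_image] at h4
  simpa using h4

/-! ### The Liouville expression -/

/-- The differential-algebraic core. Here `n` bounds the transcendence degree of `L / k`, the pairs
`(yᵢ, xᵢ)` lie in `Γ(L)`, and `hss` is the consequence of self-sufficiency that is used: a
`ℤ`-linearly independent family `e` in `k` satisfies no relation `∑ eⱼ Xⱼ ∈ k` for multiplicatively
recombined pairs `(Yⱼ, Xⱼ)` with `Yⱼ ∈ k`. -/
theorem liouville_abstract {k L : Type*} [Field k] [Field L] [Algebra k L] [CharZero k]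
    [IsAlgClosed k] [IsAlgClosed L] (D : Derivation ℤ L L)
    (hDk : ∀ a : k, D (algebraMap k L a) ∈ Set.range (algebraMap k L))
    (hC : ∀ z : L, D z = 0 → z ∈ Set.range (algebraMap k L))
    {n : ℕ} (htr : ∀ (a : ℕ) (x : Fin a → L), AlgebraicIndependent k x → a ≤ n)
    (y x : Fin n → L) (hy : ∀ i, y i ≠ 0) (hyx : ∀ i, D (y i) = y i * D (x i))
    (hss : ∀ (m : ℕ) (e : Fin m → k) (q : Fin n → Fin m → ℤ) (r : Fin m → Fin n → ℤ), m ≠ 0 →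
      LinearIndependent ℤ e → (∀ j j', ∑ i, r j i * q i j' = if j = j' then 1 else 0) →
      (∀ j, ∏ i, y i ^ q i j ∈ Set.range (algebraMap k L)) →
      ∑ j, algebraMap k L (e j) * ∑ i, (q i j : L) * x i ∉ Set.range (algebraMap k L))
    (t : L) (ht : D t ∈ Set.range (algebraMap k L)) :
    ∃ (m : ℕ) (a : k) (e b : Fin m → k), (∀ j, D (algebraMap k L (e j)) = 0) ∧ (∀ j, b j ≠ 0) ∧
      D t = D (algebraMap k L a) +
        ∑ j, algebraMap k L (e j) * (D (algebraMap k L (b j)) / algebraMap k L (b j)) := by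
  have hker : ∀ (δ : Derivation k L L) (z : L), z ∈ Set.range (algebraMap k L) → δ z = 0 := by
    rintro δ _ ⟨a, rfl⟩
    exact δ.map_algebraMap a
  -- The commutator of `D` with a `k`-linear derivation is `k`-linear because `D` preserves `k`.
  let β : Derivation k L L → Derivation k L L := fun δ => Derivation.mk'
    { toFun := fun z => D (δ z) - δ (D z)
      map_add' := fun a b => by simp only [map_add]; ring
      map_smul' := fun c z => by
        have h1 := hker δ _ (hDk c)
        have h2 := hker δ _ ⟨c, rfl⟩
        simp only [Algebra.smul_def c, Derivation.leibniz, smul_eq_mul, map_add, h1, h2,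
          RingHom.id_apply, mul_zero, add_zero]
        ring }
    (fun a b => by
      simp only [Derivation.leibniz, smul_eq_mul, map_add, LinearMap.coe_mk, AddHom.coe_mk]
      ring)
  have hβ : ∀ δ z, β δ z = D (δ z) - δ (D z) := fun _ _ => rfl
  let ev : L → Module.Dual L (Derivation k L L) := fun z =>
    { toFun := fun δ => δ z
      map_add' := fun _ _ => rfl
      map_smul' := fun _ _ => rfl }
  -- The `n + 1` functionals `dt` (index `none`) and `dyᵢ / yᵢ - dxᵢ` on `k`-linear derivations.
  let φ : Option (Fin n) → Module.Dual L (Derivation k L L) := fun o =>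
    o.elim (ev t) fun i => (y i)⁻¹ • ev (y i) - ev (x i)
  have hφ0 : ∀ δ, φ none δ = δ t := fun _ => rfl
  have hφ1 : ∀ i δ, φ (some i) δ = δ (y i) / y i - δ (x i) := fun i δ => by
    rw [div_eq_inv_mul]; rfl
  have hdep := not_linearIndependent_dual (k := k) (N := n) htr (by simp) φ
  rw [Fintype.not_linearIndependent_iff] at hdep
  obtain ⟨g, hg, i₁, hi₁⟩ := hdep
  obtain ⟨c, hc0, hcD, hc⟩ := exists_constant_relation D β φ (fun o δ => by
    cases o with
    | none => rw [hφ0, hφ0, hβ, hker δ _ ht, sub_zero]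
    | some i =>
      have h1 := hy i
      rw [hφ1, hφ1, hβ, hβ, map_sub, D.leibniz_div, hyx, δ.leibniz]
      simp only [smul_eq_mul]
      field_simp
      ring) g (fun h0 => hi₁ (congrFun h0 i₁)) hg
  choose c' hc' using fun o => hC (c o) (hcD o)
  have hrel : ∀ δ : Derivation k L L, algebraMap k L (c' none) * δ t +
      ∑ i, algebraMap k L (c' (some i)) * (δ (y i) / y i - δ (x i)) = 0 := fun δ => by
    have := congrArg (fun ψ : Module.Dual L (Derivation k L L) => ψ δ) hc
    simpa [Fintype.sum_option, hφ0, hφ1, hc'] using this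
  have hinv : ∀ {m : ℕ} (f : Fin n → k) (e : Fin m → k) (q : Fin n → Fin m → ℤ)
      (r : Fin m → Fin n → ℤ), (∀ i, f i = ∑ j, q i j • e j) →
      (∀ j j', ∑ i, r j i * q i j' = if j = j' then 1 else 0) →
      ∀ j, e j = ∑ i, r j i • f i := by
    intro m f e q r hf hrq j
    simp only [hf, Finset.smul_sum, smul_smul]
    rw [Finset.sum_comm]
    simp only [← Finset.sum_smul, hrq]
    simp
  -- A relation among the `dyᵢ / yᵢ - dxᵢ` alone contradicts self-sufficiency; otherwise the
  -- relation can be solved for `dt`.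
  by_cases h0 : c' none = 0
  · exfalso
    obtain ⟨m, e, q, r, he, hq, hrq⟩ := exists_int_basis fun i => c' (some i)
    have hA := claimA (fun i => c' (some i)) e q he hq y x hy 0 fun δ => by
      simpa [h0] using hrel δ
    refine hss m e q r ?_ he hrq hA.1 (by simpa using hA.2)
    rintro rfl
    refine hc0 (funext fun o => ?_)
    rw [← hc']
    cases o with
    | none => simp [h0]
    | some i => simp [hq]
  · have h0' : algebraMap k L (c' none) ≠ 0 := by simpa using h0
    obtain ⟨m, e, q, r, he, hq, hrq⟩ := exists_int_basis fun i => -(c' (some i) / c' none)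
    have hA := claimA (fun i => -(c' (some i) / c' none)) e q he hq y x hy t fun δ => by
      have := hrel δ
      simp only [map_neg, map_div₀, neg_mul, div_mul_eq_mul_div, Finset.sum_neg_distrib,
        ← Finset.sum_div]
      field_simp
      linear_combination -this
    have heD : ∀ j, D (algebraMap k L (e j)) = 0 := fun j => by
      rw [hinv _ e q r hq hrq j]
      simp only [map_sum, map_zsmul, map_neg, map_div₀, hc', Derivation.leibniz_div, hcD]
      simp
    choose b hb using hA.1
    obtain ⟨a, ha⟩ := hA.2
    refine ⟨m, a, fun j => -e j, b, fun j => by simp [heD], fun j hj => ?_, ?_⟩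
    · refine Finset.prod_ne_zero_iff.2 (fun i _ => zpow_ne_zero (q i j) (hy i)) ((hb j).symm.trans ?_)
      simp [hj]
    · have hX : ∀ j, D (∑ i, (q i j : L) * x i) =
          D (algebraMap k L (b j)) / algebraMap k L (b j) := fun j => by
        rw [hb, der_logDeriv_prod_zpow D _ y hy, map_sum]
        refine Finset.sum_congr rfl fun i _ => ?_
        rw [← zsmul_eq_mul, map_zsmul, zsmul_eq_mul, hyx, mul_div_cancel_left₀ _ (hy i)]
      have h1 := congrArg D ha
      rw [map_add, map_sum] at h1
      simp only [D.leibniz, heD, smul_eq_mul, mul_zero, add_zero, hX] at h1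
      rw [h1]
      simp

end DifferentialAlgebra

/-! ### Transcendence degree, the dimension of `Γ`, and self-sufficiency -/

theorem prod_zpow_eq_zpow_sum {G ι : Type*} [CommGroup G] (g : G) (s : Finset ι) (m : ι → ℤ) :
    ∏ i ∈ s, g ^ m i = g ^ ∑ i ∈ s, m i := by
  induction s using Finset.induction_on with
  | empty => simp
  | insert a s ha ih => rw [Finset.prod_insert ha, Finset.sum_insert ha, ih, zpow_add]

/-- Algebraic independence in the sense of `AlgIndepOver` agrees with Mathlib's notion. -/
theorem algIndepOver_iff {K : Type*} [Field K] {k L : Subfield K} (hkL : k ≤ L) {n : ℕ}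
    (x : Fin n → L) :
    AlgIndepOver k (fun i => (x i : K)) ↔
      @AlgebraicIndependent (Fin n) k L x _ _ (Subfield.inclusion hkL).toAlgebra := by
  let : Algebra k L := (Subfield.inclusion hkL).toAlgebra
  have hev : ∀ p : MvPolynomial (Fin n) k,
      MvPolynomial.eval (fun i => (x i : K)) (MvPolynomial.map k.subtype p) =
        ((MvPolynomial.aeval x p : L) : K) := fun p => by
    rw [MvPolynomial.eval_map]
    change _ = L.subtype (MvPolynomial.eval₂ (algebraMap k L) x p)
    rw [MvPolynomial.hom_eval₂]
    rfl
  rw [algebraicIndependent_iff]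
  constructor
  · intro h p hp
    have := h (MvPolynomial.map k.subtype p)
      (fun m => by rw [MvPolynomial.coeff_map]; exact (p.coeff m).2) (by rw [hev, hp]; rfl)
    exact MvPolynomial.map_injective _ k.subtype.injective (by rw [this, map_zero])
  · intro h P hP hP0
    have : P ∈ Set.range (MvPolynomial.map (σ := Fin n) k.subtype) := by
      rw [MvPolynomial.mem_range_map_iff_coeffs_subset]
      intro c hc
      obtain ⟨m, -, rfl⟩ := MvPolynomial.mem_coeffs_iff.1 hc
      exact ⟨⟨_, hP m⟩, rfl⟩
    obtain ⟨p, rfl⟩ := this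
    rw [hev] at hP0
    rw [h p (Subtype.ext hP0), map_zero]

theorem le_trdegE {K : Type*} [Field K] {k L : Subfield K} {n : ℕ} (x : Fin n → K)
    (hx : ∀ i, x i ∈ L) (h : AlgIndepOver k x) : (n : ℕ∞) ≤ trdegE k L :=
  le_iSup₂_of_le (f := fun (n : ℕ) (_ : ∃ x : Fin n → K, (∀ i, x i ∈ L) ∧ AlgIndepOver k x) =>
    (n : ℕ∞)) n ⟨x, hx, h⟩ le_rfl

theorem le_gammaDim {K : Type*} [Field K] {der : K → K} {k L : Subfield K} {n : ℕ}
    (f : Fin n → Kˣ × K) (hf : ∀ i, GammaMem der L (f i)) (h : GammaIndep der k f) :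
    (n : ℕ∞) ≤ gammaDim der k L :=
  le_iSup₂_of_le (f := fun (n : ℕ) (_ : ∃ f : Fin n → Kˣ × K,
    (∀ i, GammaMem der L (f i)) ∧ GammaIndep der k f) => (n : ℕ∞)) n ⟨f, hf, h⟩ le_rfl

/-- When `δ(L/k) = 0`, there are at least `trdeg(L/k)` independent elements in `Γ(L)/Γ(k)`. -/
theorem exists_gamma_family {K : Type*} [Field K] {der : K → K} {k L : Subfield K}
    (hzero : deltaPre der k L = 0) : ∃ (n : ℕ) (f : Fin n → Kˣ × K), (trdegE k L).toNat ≤ n ∧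
      (∀ i, GammaMem der L (f i)) ∧ GammaIndep der k f := by
  unfold deltaPre at hzero
  split_ifs at hzero with htop
  · exact absurd hzero WithBot.bot_ne_coe
  have h1 : (trdegE k L).toNat = (gammaDim der k L).toNat := by
    have : ((trdegE k L).toNat : ℤ) - ((gammaDim der k L).toNat : ℤ) = 0 := by
      exact_mod_cast hzero
    omega
  by_contra! hcon
  have hlt : ∀ (n : ℕ), (∃ f : Fin n → Kˣ × K, (∀ i, GammaMem der L (f i)) ∧ GammaIndep der k f) →
      n < (trdegE k L).toNat := by
    rintro n ⟨f, hf, hf'⟩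
    by_contra! hn
    exact hcon n f hn hf hf'
  have h0 : 0 < (trdegE k L).toNat :=
    hlt 0 ⟨Fin.elim0, fun i => i.elim0, fun m _ => Subsingleton.elim _ _⟩
  have h2 : gammaDim der k L ≤ ((trdegE k L).toNat - 1 : ℕ) :=
    iSup₂_le fun n hn => by
      have := hlt n hn
      exact_mod_cast (by omega : n ≤ (trdegE k L).toNat - 1)
  have h3 := ENat.toNat_le_of_le_natCast h2
  omega

/-- Let `(Yⱼ, Xⱼ)`, for `j < m`, be elements of `Γ(K)` independent modulo `Γ(k)`, with `Yⱼ ∈ k`. A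
linear relation `∑ eⱼ Xⱼ ∈ k` with a nonzero coefficient gives `k(X)` transcendence degree less than
`m`, so its algebraic closure inside `L` has negative predimension over `k`. -/
theorem not_selfSufficient {K : Type*} [Field K] {der : K → K} {k L : Subfield K} (hkL : k ≤ L)
    (hLalg : IsAlgClosed L) (hss : SelfSufficientIn der k) {m : ℕ} (f : Fin m → Kˣ × K)
    (hf : ∀ j, der ((f j).1 : K) = ((f j).1 : K) * der (f j).2)
    (hfk : ∀ j, ((f j).1 : K) ∈ k) (hfL : ∀ j, (f j).2 ∈ L) (hind : GammaIndep der k f)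
    (e : Fin m → K) (hek : ∀ j, e j ∈ k) (j₀ : Fin m) (he : e j₀ ≠ 0)
    (hrel : ∑ j, e j * (f j).2 ∈ k) : False := by
  let : Algebra k L := (Subfield.inclusion hkL).toAlgebra
  let X : Fin m → L := fun j => ⟨(f j).2, hfL j⟩
  -- The relation expresses `X j₀` through the other `X j`.
  let S : Finset L := (Finset.univ.erase j₀).image X
  have hS : S.card ≤ m - 1 := by
    refine Finset.card_image_le.trans ?_
    rw [Finset.card_erase_of_mem (Finset.mem_univ _), Finset.card_univ, Fintype.card_fin]
  let A := IntermediateField.adjoin k (S : Set L)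
  let M := algebraicClosure A L
  have hM : IsAlgClosed M := (algebraicClosure.isAlgClosure (F := A) (E := L)).isAlgClosed
  let L' : Subfield K := M.toSubfield.map L.subtype
  have hmem : ∀ z : L, (z : K) ∈ L' ↔ IsAlgebraic A z := fun z => by
    rw [← mem_algebraicClosure_iff]
    constructor
    · rintro ⟨w, hw, hwz⟩
      rwa [← Subtype.ext (a1 := w) (a2 := z) hwz]
    · exact fun h => ⟨z, h, rfl⟩
  have hL'L : L' ≤ L := by
    rintro _ ⟨w, -, rfl⟩
    exact w.2
  have hkL' : k ≤ L' := fun c hc =>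
    (hmem ⟨c, hkL hc⟩).2 (isAlgebraic_algebraMap (algebraMap k A ⟨c, hc⟩))
  have hXL' : ∀ j, (f j).2 ∈ L' := by
    have h1 : ∀ j, j ≠ j₀ → (f j).2 ∈ L' := fun j hj => (hmem (X j)).2 <| by
      have : X j ∈ A := IntermediateField.subset_adjoin _ _ <| by
        simp only [S, Finset.coe_image]
        exact ⟨j, by simpa using hj, rfl⟩
      exact isAlgebraic_algebraMap (⟨X j, this⟩ : A)
    intro j
    by_cases hj : j = j₀
    · subst hj
      rw [← Finset.add_sum_erase _ _ (Finset.mem_univ j)] at hrel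
      have h2 : ∑ i ∈ Finset.univ.erase j, e i * (f i).2 ∈ L' :=
        Subfield.sum_mem _ fun i hi =>
          L'.mul_mem (hkL' (hek i)) (h1 i (Finset.ne_of_mem_erase hi))
      have h3 := L'.sub_mem (hkL' hrel) h2
      rw [add_sub_cancel_right] at h3
      have h4 := L'.mul_mem (L'.inv_mem (hkL' (hek j))) h3
      rwa [inv_mul_cancel_left₀ he] at h4
    · exact h1 j hj
  have hL'alg : IsAlgClosed L' := by
    let e : M ≃+* L' := Subring.equivMapOfInjective M.toSubfield.toSubring L.subtype L.subtype.injective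
    exact IsAlgClosed.of_ringEquiv M L' e
  have htr : trdegE k L' ≤ (m - 1 : ℕ) := iSup₂_le fun a ⟨x, hx, hxi⟩ => by
    have := (algIndepOver_iff hkL (fun i => ⟨x i, hL'L (hx i)⟩)).1 hxi
    have := card_le_of_isAlgebraic_adjoin S _ this fun i => (hmem _).1 (hx i)
    exact_mod_cast this.trans hS
  have hdim := le_gammaDim (L := L') f (fun j => ⟨hkL' (hfk j), hXL' j, hf j⟩) hind
  have h0 := hss L' hkL' hL'alg (fun h => by simp [h] at htr)
  unfold deltaPre at h0
  split_ifs at h0 with htop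
  · simp at h0
  · have h1 := ENat.toNat_le_of_le_natCast htr
    have h2 := ENat.toNat_le_toNat hdim htop
    rw [ENat.toNat_natCast] at h2
    have h3 : (0 : ℤ) ≤ ((trdegE k L').toNat : ℤ) - ((gammaDim der k L').toNat : ℤ) := by
      exact_mod_cast h0
    have := j₀.pos
    omega

theorem stmt11 {K : Type*} [Field K] [CharZero K]
    (der : K → K)
    (hadd : ∀ a b : K, der (a + b) = der a + der b)
    (hmul : ∀ a b : K, der (a * b) = a * der b + b * der a)
    (k : Subfield K) (hkalg : IsAlgClosed ↥k)
    (hkdiff : ∀ c ∈ k, der c ∈ k)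
    (hkC : ∀ x : K, der x = 0 → x ∈ k)
    (hss : SelfSufficientIn der k)
    (t : K) (hdt : der t ∈ k)
    (L : Subfield K) (hkL : k ≤ L) (hLalg : IsAlgClosed ↥L)
    (hLdiff : ∀ x ∈ L, der x ∈ L)
    (htL : t ∈ L)
    (hfin : trdegE k L ≠ ⊤) (hzero : deltaPre der k L = 0) :
    ∃ (n : ℕ) (a : K) (lam b : Fin n → K),
      a ∈ k ∧
      (∀ i, der (lam i) = 0) ∧
      (∀ i, b i ∈ k ∧ b i ≠ 0) ∧
      der t = der a + ∑ i, lam i * (der (b i) / b i) := by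
  obtain ⟨n, f, hn, hf, hind⟩ := exists_gamma_family hzero
  let : Algebra k L := (Subfield.inclusion hkL).toAlgebra
  have hcoe : ∀ a : k, ((algebraMap k L a : L) : K) = a := fun _ => rfl
  have hrange : ∀ z : L, z ∈ Set.range (algebraMap k L) ↔ (z : K) ∈ k := fun z =>
    ⟨by rintro ⟨a, rfl⟩; exact a.2, fun h => ⟨⟨z, h⟩, rfl⟩⟩
  let dK : Derivation ℤ K K := Derivation.mk' (AddMonoidHom.mk' der hadd).toIntLinearMap
    fun a b => hmul a b
  have hdK : ∀ z, dK z = der z := fun _ => rfl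
  let D : Derivation ℤ L L := Derivation.mk'
    (AddMonoidHom.mk' (fun z : L => (⟨der z, hLdiff z z.2⟩ : L))
      fun a b => Subtype.ext (hadd a b)).toIntLinearMap
    fun a b => Subtype.ext (hmul a b)
  have hD : ∀ z : L, ((D z : L) : K) = der z := fun _ => rfl
  let y : Fin n → L := fun i => ⟨(f i).1, (hf i).1⟩
  let x : Fin n → L := fun i => ⟨(f i).2, (hf i).2.1⟩
  have hy : ∀ i, y i ≠ 0 := fun i h0 => (f i).1.ne_zero (congrArg Subtype.val h0)
  have htr : ∀ (a : ℕ) (z : Fin a → L), AlgebraicIndependent k z → a ≤ n := by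
    intro a z hz
    have h1 := le_trdegE (k := k) (fun i => (z i : K)) (fun i => (z i).2)
      ((algIndepOver_iff hkL z).2 hz)
    have h2 := ENat.toNat_le_toNat h1 hfin
    rw [ENat.toNat_natCast] at h2
    omega
  have hss' : ∀ (m : ℕ) (e : Fin m → k) (q : Fin n → Fin m → ℤ) (r : Fin m → Fin n → ℤ), m ≠ 0 →
      LinearIndependent ℤ e → (∀ j j', ∑ i, r j i * q i j' = if j = j' then 1 else 0) →
      (∀ j, ∏ i, y i ^ q i j ∈ Set.range (algebraMap k L)) →
      ∑ j, algebraMap k L (e j) * ∑ i, (q i j : L) * x i ∉ Set.range (algebraMap k L) := by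
    intro m e q r hm he hrq hY hX
    have hYK : ∀ j, ((∏ i, (f i).1 ^ q i j : Kˣ) : K) = ((∏ i, y i ^ q i j : L) : K) := fun j => by
      change _ = L.subtype _
      rw [map_prod, Units.coe_prod]
      simp only [map_zpow₀, Units.val_zpow_eq_zpow_val]
      rfl
    have hXK : ∀ j, ∑ i, (q i j : K) * (f i).2 = ((∑ i, (q i j : L) * x i : L) : K) := fun j => by
      simp [x]
    refine not_selfSufficient hkL hLalg hss
      (fun j => (∏ i, (f i).1 ^ q i j, ∑ i, (q i j : K) * (f i).2)) (fun j => ?_) (fun j => ?_)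
      (fun j => ?_) (fun m' hm' => ?_) (fun j => e j) (fun j => (e j).2)
      ⟨0, Nat.pos_of_ne_zero hm⟩ ?_ ?_
    · have h1 := der_logDeriv_prod_zpow dK Finset.univ (fun i => ((f i).1 : K))
        (fun i => (f i).1.ne_zero) fun i => q i j
      have h2 : (∏ i, ((f i).1 : K) ^ q i j) ≠ 0 :=
        Finset.prod_ne_zero_iff.2 fun i _ => zpow_ne_zero _ (f i).1.ne_zero
      rw [div_eq_iff h2] at h1
      simp only [Units.coe_prod, Units.val_zpow_eq_zpow_val, ← hdK]
      rw [h1, mul_comm, map_sum]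
      congr 1
      refine Finset.sum_congr rfl fun i _ => ?_
      rw [← zsmul_eq_mul, ← zsmul_eq_mul, map_zsmul, hdK, hdK, (hf i).2.2,
        mul_div_cancel_left₀ _ (f i).1.ne_zero]
    · change ((∏ i, (f i).1 ^ q i j : Kˣ) : K) ∈ k
      rw [hYK]
      exact (hrange _).1 (hY j)
    · change ∑ i, (q i j : K) * (f i).2 ∈ L
      rw [hXK]
      exact Subtype.property _
    · have h1 : (fun i => ∑ j, q i j * m' j) = 0 := hind _ <| by
        convert hm' using 2
        · simp only [← Finset.prod_zpow, ← zpow_mul]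
          rw [Finset.prod_comm]
          simp only [prod_zpow_eq_zpow_sum]
        · simp only [Finset.mul_sum, Int.cast_sum, Finset.sum_mul, Int.cast_mul]
          rw [Finset.sum_comm]
          exact Finset.sum_congr rfl fun i _ => Finset.sum_congr rfl fun j _ => by ring
      funext j
      have h2 : ∑ i, r j i * ∑ j', q i j' * m' j' = m' j := by
        simp only [Finset.mul_sum, ← mul_assoc]
        rw [Finset.sum_comm]
        simp only [← Finset.sum_mul, hrq]
        simp
      rw [← h2]
      exact Finset.sum_eq_zero fun i _ => by rw [congrFun h1 i, Pi.zero_apply, mul_zero]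
    · simpa using he.ne_zero (⟨0, Nat.pos_of_ne_zero hm⟩ : Fin m)
    · simp only [hXK]
      have := (hrange _).1 hX
      simpa [hcoe] using this
  obtain ⟨m, a, e, b, he, hb, hmain⟩ := liouville_abstract D
    (fun c => (hrange _).2 (hkdiff _ c.2))
    (fun z hz => (hrange _).2 (hkC _ (congrArg Subtype.val hz)))
    htr y x hy (fun i => Subtype.ext (hf i).2.2) hss'
    ⟨t, htL⟩ ((hrange _).2 hdt)
  refine ⟨m, a, fun j => e j, fun j => b j, a.2, fun j => ?_, fun j => ⟨(b j).2, ?_⟩, ?_⟩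
  · exact congrArg Subtype.val (he j)
  · simpa using hb j
  · have := congrArg (L.subtype) hmain
    simpa [hD, hcoe] using this
end

section
/- Let k be an algebraically closed field of characteristic zero and let L/k be a field extension. Let a, b ∈ k with 4a³ + 27b² ≠ 0, and let x, y ∈ L satisfy y² = x³ + ax + b with y ≠ 0. Let u₁, …, uₙ ∈ L^×, v ∈ L and λ₁, …, λₙ ∈ k. If the identity y⁻¹·dx + λ₁·u₁⁻¹·du₁ + ⋯ + λₙ·uₙ⁻¹·duₙ + dv = 0 holds in Ω¹_{L/k}, then x, y ∈ k (so that y⁻¹·dx = 0 in Ω¹_{L/k}) and λ₁·u₁⁻¹·du₁ + ⋯ + λₙ·uₙ⁻¹·duₙ + dv = 0 in Ω¹_{L/k}. (This is the case of the theorem on invariant differentials where the simple abelian variety is the elliptic curve y² = x³ + ax + b with invariant one-form dx/y and the commutative linear group is a product of multiplicative and additive groups.) -/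
/-!
The content is that `x` cannot be transcendental over `k`; then `x` and `y` lie in `k`, because `k`
is algebraically closed, `dx = 0`, and the rest of the identity is what remains.

Suppose `x` is transcendental. Inside an algebraic closure `M` of `L`, complete `{x}` to a
transcendence basis and let `K` be the algebraic closure of `k` adjoined the other basis elements
(`exists_base`). Then `M` is algebraic over `K(x)`, so there is exactly one `K`-derivation `D` of
`M` with `D x = y` (`derivation_of_transcendental`), the vector field dual to the invariant
differential. Contracting the given identity with `D` yields
`1 + ∑ λᵢ * uᵢ⁻¹ * D uᵢ + D v = 0` in `M`. Since `D` commutes with the `K(x, y)`-automorphisms of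
`M`, summing the conjugates of this identity (norms of the `uᵢ`, trace of `v`) moves it into the
function field `K(x, y)`, the constant `1` becoming a positive integer `m` (`exists_descent`).

It remains to use that an invariant differential of an elliptic curve is not a combination of
logarithmic and exact differentials (`no_relation`). Rewriting the `λᵢ` in a `ℤ`-basis of the group
they generate, one may assume that they are linearly independent over `ℤ`. At each point of the
affine curve, `D` is a nonvanishing vector field, so comparing poles (`residue_eq_zero`) shows that
`v` is regular and that the residue `∑ λⱼ * ord Wⱼ` vanishes; by independence every `ord Wⱼ` is zero.
Hence the `Wⱼ` are units of the coordinate ring `K[x, y]`. These are constants (`coord_unit`):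
their norms to `K[x]` are `p² - q² (x³ + ax + b)`, of which the two terms have degrees of different
parity. Finally `D v = -m` with `v ∈ K[x, y]`, which a degree count excludes
(`eq_zero_of_deriv_coord_eq_const`). The point at infinity thus never has to be considered.
-/

namespace EllipticRelation

open Polynomial

/-! ### Derivations in transcendence degree one -/

/-- In characteristic zero a field algebraic over `k(X)` is formally étale over `k[X]`: it is
separable algebraic over a localization. -/
theorem formallyEtale_of_isAlgebraic {k L : Type*} [Field k] [Field L] [Algebra k L] [CharZero k]
    [Algebra k[X] L] [IsScalarTower k k[X] L] [FaithfulSMul k[X] L]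
    [Algebra.IsAlgebraic k[X] L] : Algebra.FormallyEtale k[X] L := by
  let := FractionRing.liftAlgebra k[X] L
  have : IsScalarTower k[X] (FractionRing k[X]) L := FractionRing.isScalarTower_liftAlgebra k[X] L
  have : Algebra.IsAlgebraic (FractionRing k[X]) L :=
    (IsFractionRing.comap_isAlgebraic_iff (A := k[X])).mp inferInstance
  have : CharZero (FractionRing k[X]) := algebraRat.charZero _
  have : Algebra.FormallyEtale (FractionRing k[X]) L := Algebra.FormallyEtale.of_isSeparable _ _
  have : Algebra.FormallyEtale k[X] (FractionRing k[X]) :=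
    Algebra.FormallyEtale.of_isLocalization (nonZeroDivisors k[X])
  exact Algebra.FormallyEtale.comp k[X] (FractionRing k[X]) L

/-- If `L` is algebraic over `k(x)` in characteristic zero, then `Ω[L⁄k]` is free on `dx`, by étale base
change from `k[X]`; so a derivation is determined by its value at `x`, which is arbitrary. -/
theorem derivation_of_transcendental {k L : Type*} [Field k] [Field L] [Algebra k L] [CharZero k]
    {x : L} (hx : Transcendental k x) (halg : Algebra.IsAlgebraic (Algebra.adjoin k {x}) L) :
    (∀ y : L, ∃ D : Derivation k L L, D x = y) ∧
      ∀ D : Derivation k L L, D x = 0 → D = 0 := by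
  let : Algebra k[X] L := (aeval x : k[X] →ₐ[k] L).toAlgebra
  have hmap : ∀ p : k[X], algebraMap k[X] L p = aeval x p := fun _ => rfl
  have : IsScalarTower k k[X] L := IsScalarTower.of_algebraMap_eq' (by
    ext c; simp [hmap])
  have hinj := transcendental_iff_injective.mp hx
  have : FaithfulSMul k[X] L := (faithfulSMul_iff_algebraMap_injective _ _).mpr hinj
  have : Algebra.IsAlgebraic k[X] L := by
    refine Algebra.IsAlgebraic.of_ringHom_of_comp_eq (S := Algebra.adjoin k {x}) (B := L)
      (((aeval x : k[X] →ₐ[k] L).codRestrict (Algebra.adjoin k {x})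
        (fun p => aeval_mem_adjoin_singleton k x)).toRingHom) (RingHom.id L) ?_ ?_ ?_
    · rintro ⟨z, hz⟩
      rw [Algebra.adjoin_singleton_eq_range_aeval] at hz
      obtain ⟨p, hp⟩ := hz
      exact ⟨p, Subtype.ext hp⟩
    · exact Function.injective_id
    · rfl
  have := formallyEtale_of_isAlgebraic (k := k) (L := L)
  constructor
  · intro y
    let e := KaehlerDifferential.tensorKaehlerEquivOfFormallyEtale k k[X] L
    let g : TensorProduct k[X] L (Ω[k[X]⁄k]) →ₗ[L] L :=
      (LinearMap.toSpanSingleton L L y) ∘ₗ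
        (TensorProduct.AlgebraTensorModule.rid k[X] L L).toLinearMap ∘ₗ
        (LinearMap.baseChange L (KaehlerDifferential.polynomialEquiv k).toLinearMap)
    refine ⟨(g ∘ₗ e.symm.toLinearMap).compDer (KaehlerDifferential.D k L), ?_⟩
    have hX : x = algebraMap k[X] L X := by simp [hmap]
    change g (e.symm (KaehlerDifferential.D k L x)) = y
    conv_lhs => rw [hX]
    rw [show e.symm _ = _ from
      KaehlerDifferential.tensorKaehlerEquivOfFormallyEtale_symm_D_algebraMap k k[X] L X]
    simp [g, KaehlerDifferential.polynomialEquiv_D]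
  · intro D hD
    have : D.liftKaehlerDifferential = 0 := by
      rw [← LinearMap.cancel_right
        (KaehlerDifferential.tensorKaehlerEquivOfFormallyEtale k k[X] L).surjective]
      refine TensorProduct.AlgebraTensorModule.ext fun w m => ?_
      have hm : m ∈ Submodule.span k[X] (Set.range (KaehlerDifferential.D k k[X])) := by
        rw [KaehlerDifferential.span_range_derivation]; trivial
      induction hm using Submodule.span_induction with
      | mem m hm =>
        obtain ⟨p, rfl⟩ := hm
        have : D (algebraMap k[X] L p) = 0 := by
          rw [hmap, Derivation.map_aeval, hD, smul_zero]
        simp [KaehlerDifferential.tensorKaehlerEquivOfFormallyEtale_apply, this]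
      | zero => simp
      | add _ _ _ _ h1 h2 => rw [TensorProduct.tmul_add, map_add, map_add, h1, h2]
      | smul p m _ h =>
        rw [TensorProduct.tmul_smul, ← algebraMap_smul L p, map_smul, map_smul, h]
    rw [← Derivation.liftKaehlerDifferential_comp D, this]; ext; simp

/-- Any transcendental `x` in an algebraically closed `L` becomes a transcendence basis of `L` over a
larger algebraically closed field `K`: put the other members of a transcendence basis into `K`. -/
theorem exists_base {k L : Type*} [Field k] [Field L] [Algebra k L] [IsAlgClosed L]
    {x : L} (hx : Transcendental k x) : ∃ K : IntermediateField k L,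
      IsAlgClosed K ∧ Transcendental K x ∧ Algebra.IsAlgebraic (Algebra.adjoin K {x}) L := by
  obtain ⟨s, hxs, hs⟩ := exists_isTranscendenceBasis_superset (R := k) (s := {x})
    ((algebraicIndependent_singleton_iff (R := k) (x := fun i : ({x} : Set L) => (i : L)) ⟨x, rfl⟩).mpr hx)
  rw [Set.singleton_subset_iff] at hxs
  let K₀ := IntermediateField.adjoin k (s \ {x})
  have hK₀ : Transcendental K₀ x := by
    rw [IntermediateField.transcendental_adjoin_iff]
    have := hs.1.transcendental_adjoin (s := {i : s | (i : L) ≠ x}) (i := ⟨x, hxs⟩) (by simp)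
    have he : (Subtype.val '' {i : s | (i : L) ≠ x}) = s \ {x} := by
      ext z; simp [and_comm]
    rwa [he] at this
  let K₁ := algebraicClosure K₀ L
  have hK₁ : Transcendental K₁ x := hK₀.extendScalars K₁
  have : IsAlgClosed K₁ := (IsAlgClosure.isAlgClosed (R := K₀) (K := K₁))
  let K := K₁.restrictScalars k
  refine ⟨K, this, hK₁, ?_⟩
  have : IsScalarTower k (Algebra.adjoin K {x}) L := IsScalarTower.of_algebraMap_eq fun _ => rfl
  rw [hs.isAlgebraic_iff (S := Algebra.adjoin K {x})]
  rintro ⟨z, hz⟩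
  by_cases hzx : z = x
  · exact isAlgebraic_algebraMap (A := L)
      (⟨z, Algebra.subset_adjoin (by simp [hzx])⟩ : Algebra.adjoin K {x})
  · have hzK₀ : z ∈ K₀ := IntermediateField.subset_adjoin _ _ ⟨hz, hzx⟩
    have hzK : z ∈ K := by
      change z ∈ K₁
      rw [mem_algebraicClosure_iff]
      exact isAlgebraic_algebraMap (⟨z, hzK₀⟩ : K₀)
    exact isAlgebraic_algebraMap (A := L) (algebraMap K (Algebra.adjoin K {x}) ⟨z, hzK⟩)

/-! ### The coordinate ring of the affine curve -/

/-- The right-hand side `X ^ 3 + a X + b` of the short Weierstrass equation. -/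
noncomputable def weierstrassCubic {k : Type*} [Field k] (a b : k) : k[X] := X ^ 3 + C a * X + C b

theorem natDegree_weierstrassCubic {k : Type*} [Field k] (a b : k) : (weierstrassCubic a b).natDegree = 3 := by
  unfold weierstrassCubic; compute_degree!

theorem weierstrassCubic_ne_zero {k : Type*} [Field k] (a b : k) : weierstrassCubic a b ≠ 0 := by
  intro h; simpa [h] using natDegree_weierstrassCubic a b

theorem natDegree_sq_mul_cubic {k : Type*} [Field k] (a b : k) {q : k[X]} (hq : q ≠ 0) :
    (q ^ 2 * weierstrassCubic a b).natDegree = 2 * q.natDegree + 3 := by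
  rw [natDegree_mul (pow_ne_zero 2 hq) (weierstrassCubic_ne_zero a b), natDegree_pow, natDegree_weierstrassCubic]

/-- The two sides have degrees of different parity. -/
theorem sq_eq_sq_mul_cubic {k : Type*} [Field k] {a b : k} {p q : k[X]}
    (h : p ^ 2 = q ^ 2 * weierstrassCubic a b) : p = 0 ∧ q = 0 := by
  by_cases hq : q = 0
  · exact ⟨by simpa [hq] using h, hq⟩
  · have := congrArg natDegree h
    rw [natDegree_sq_mul_cubic a b hq, natDegree_pow] at this
    omega

/-- The norm `p ^ 2 - q ^ 2 (X ^ 3 + a X + b)` of `p + q y` has no cancellation of leading terms, so it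
is a unit only if `p` is constant and `q = 0`. -/
theorem norm_eq_one {k : Type*} [Field k] {a b : k} {p q r s : k[X]}
    (h : (p ^ 2 - q ^ 2 * weierstrassCubic a b) * (r ^ 2 - s ^ 2 * weierstrassCubic a b) = 1) :
    q = 0 ∧ p.natDegree = 0 := by
  have hd : (p ^ 2 - q ^ 2 * weierstrassCubic a b).natDegree = 0 :=
    natDegree_eq_zero_of_isUnit (IsUnit.of_mul_eq_one _ h)
  by_cases hq : q = 0
  · simpa [hq] using hd
  · exfalso
    have h1 := natDegree_sq_mul_cubic a b hq
    rcases lt_or_gt_of_ne (a := (p ^ 2).natDegree) (b := (q ^ 2 * weierstrassCubic a b).natDegree)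
      (by rw [h1, natDegree_pow]; omega) with h2 | h2
    · rw [natDegree_sub_eq_right_of_natDegree_lt h2] at hd; omega
    · rw [natDegree_sub_eq_left_of_natDegree_lt h2] at hd; omega

section Curve
variable {k L : Type*} [Field k] [Field L] [Algebra k L] {a b : k} {x y : L}

/-- The coordinate ring `k[x, y]` is generated by `1` and `y` over `k[x]`. -/
theorem mem_coord (hc : y ^ 2 = aeval x (weierstrassCubic a b)) {r : L} (hr : r ∈ Algebra.adjoin k {x, y}) :
    ∃ p q : k[X], r = aeval x p + aeval x q * y := by
  induction hr using Algebra.adjoin_induction with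
  | mem r hr =>
    rcases hr with rfl | rfl
    · exact ⟨X, 0, by simp⟩
    · exact ⟨0, 1, by simp⟩
  | algebraMap c => exact ⟨C c, 0, by simp⟩
  | add r s _ _ hr hs =>
    obtain ⟨p, q, rfl⟩ := hr
    obtain ⟨p', q', rfl⟩ := hs
    exact ⟨p + p', q + q', by simp only [map_add]; ring⟩
  | mul r s _ _ hr hs =>
    obtain ⟨p, q, rfl⟩ := hr
    obtain ⟨p', q', rfl⟩ := hs
    refine ⟨p * p' + q * q' * weierstrassCubic a b, p * q' + q * p', ?_⟩
    simp only [map_add, map_mul]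
    linear_combination (aeval x q' * aeval x q) * hc

/-- `1` and `y` are linearly independent over `k[x]`. -/
theorem coord_unique (hc : y ^ 2 = aeval x (weierstrassCubic a b)) (hx : Transcendental k x) {p q : k[X]}
    (h : aeval x p + aeval x q * y = 0) : p = 0 ∧ q = 0 := by
  refine sq_eq_sq_mul_cubic (a := a) (b := b) (transcendental_iff_injective.mp hx ?_)
  simp only [map_mul, map_pow]
  linear_combination (aeval x p - aeval x q * y) * h + aeval x q ^ 2 * hc

/-- The units of the coordinate ring of the affine curve are constants. -/
theorem coord_unit (hc : y ^ 2 = aeval x (weierstrassCubic a b)) (hx : Transcendental k x) {r s : L}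
    (hr : r ∈ Algebra.adjoin k {x, y}) (hs : s ∈ Algebra.adjoin k {x, y}) (h : r * s = 1) :
    ∃ c : k, r = algebraMap k L c := by
  obtain ⟨p, q, rfl⟩ := mem_coord hc hr
  obtain ⟨p', q', rfl⟩ := mem_coord hc hs
  obtain ⟨h1, h2⟩ := coord_unique (p := p * p' + q * q' * weierstrassCubic a b - 1) (q := p * q' + q * p')
    hc hx (by
      simp only [map_add, map_mul, map_sub, map_one]
      linear_combination h - (aeval x q * aeval x q') * hc)
  obtain ⟨rfl, h3⟩ := norm_eq_one (a := a) (b := b) (p := p) (q := q) (r := p') (s := q') (by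
    linear_combination (p * p' + q * q' * weierstrassCubic a b + 1) * h1
      - weierstrassCubic a b * (p * q' + q * p') * h2)
  rw [natDegree_eq_zero] at h3
  obtain ⟨c, rfl⟩ := h3
  exact ⟨c, by simp⟩

theorem two_mul_deriv_y (hc : y ^ 2 = aeval x (weierstrassCubic a b)) (hy : y ≠ 0)
    {D : Derivation k L L} (hD : D x = y) : 2 * D y = aeval x (derivative (weierstrassCubic a b)) := by
  have := congrArg D hc
  rw [Derivation.map_aeval, hD, Derivation.leibniz_pow] at this
  simp only [smul_eq_mul, nsmul_eq_mul] at this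
  refine mul_right_cancel₀ hy ?_
  rw [← this]; push_cast; ring

variable [CharZero k]

/-- A nonzero constant is not the `D`-derivative of a regular function `p + q y`. The `k[x]`-part of the
derivative is `q' f + q f' / 2`, where `f` is the cubic; multiplied by `2 q` it becomes the derivative
of `q ^ 2 f`, whose degree exceeds that of `q`. -/
theorem eq_zero_of_deriv_coord_eq_const (hc : y ^ 2 = aeval x (weierstrassCubic a b)) (hx : Transcendental k x)
    (hy : y ≠ 0) {D : Derivation k L L} (hD : D x = y) {r : L}
    (hr : r ∈ Algebra.adjoin k {x, y}) {c : k} (h : D r = algebraMap k L c) : c = 0 := by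
  obtain ⟨p, q, rfl⟩ := mem_coord hc hr
  have hDy := two_mul_deriv_y hc hy hD
  simp only [map_add, Derivation.leibniz, Derivation.map_aeval, hD, smul_eq_mul] at h
  obtain ⟨h1, h2⟩ := coord_unique
    (p := 2 * derivative q * weierstrassCubic a b + q * derivative (weierstrassCubic a b) - C (2 * c))
    (q := 2 * derivative p) hc hx (by
      simp only [map_add, map_mul, map_sub, aeval_C, map_ofNat]
      linear_combination 2 * h - aeval x q * hDy - 2 * aeval x (derivative q) * hc)
  have h3 : derivative (q ^ 2 * weierstrassCubic a b) = q * C (2 * c) := by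
    rw [derivative_mul, derivative_pow]
    simp only [Nat.cast_ofNat, map_ofNat]
    linear_combination q * h1
  by_cases hq : q = 0
  · simpa [hq] using h1
  · exfalso
    have h4 := natDegree_sq_mul_cubic a b hq
    have h5 : (derivative (q ^ 2 * weierstrassCubic a b)).natDegree = 2 * q.natDegree + 3 - 1 := by
      refine natDegree_eq_of_degree_eq_some ?_
      rw [degree_derivative (by omega), h4]
    rw [h3] at h5
    have h6 := natDegree_mul_le (p := q) (q := C (2 * c))
    rw [natDegree_C] at h6
    omega

theorem deriv_mem_coord (hc : y ^ 2 = aeval x (weierstrassCubic a b)) (hy : y ≠ 0)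
    {D : Derivation k L L} (hD : D x = y) {r : L} (hr : r ∈ Algebra.adjoin k {x, y}) :
    D r ∈ Algebra.adjoin k {x, y} := by
  have hxm : x ∈ Algebra.adjoin k {x, y} := Algebra.subset_adjoin (by simp)
  have hym : y ∈ Algebra.adjoin k {x, y} := Algebra.subset_adjoin (by simp)
  have hDy : D y ∈ Algebra.adjoin k {x, y} := by
    have h1 : D y = algebraMap k L 2⁻¹ * aeval x (derivative (weierstrassCubic a b)) := by
      rw [← two_mul_deriv_y hc hy hD, ← mul_assoc, map_inv₀, map_ofNat, inv_mul_cancel₀, one_mul]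
      rw [← map_ofNat (algebraMap k L) 2]
      exact (_root_.map_ne_zero _).mpr two_ne_zero
    rw [h1]
    exact mul_mem (Subalgebra.algebraMap_mem _ _)
      (Algebra.adjoin_mono (by simp) (aeval_mem_adjoin_singleton k x))
  induction hr using Algebra.adjoin_induction with
  | mem r hr =>
    rcases hr with rfl | rfl
    · rwa [hD]
    · exact hDy
  | algebraMap c => simp
  | add r s _ _ hr hs => rw [map_add]; exact add_mem hr hs
  | mul r s hr' hs' hr hs =>
    rw [Derivation.leibniz]; exact add_mem (mul_mem hr' hs) (mul_mem hs' hr)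

end Curve

/-! ### Localizations and pole orders -/

section Local
variable {k L : Type*} [Field k] [Field L] [Algebra k L]

/-- The localization `R_P` of `R` at a prime `P`, realized as a subalgebra of an ambient field `L`: the
`w` for which some denominator `s ∉ P` satisfies `s * w ∈ R`. -/
def localSubalgebra (R : Subalgebra k L) (P : Ideal R) [hP : P.IsPrime] : Subalgebra k L where
  carrier := {w | ∃ s r : R, s ∉ P ∧ (s : L) * w = r}
  mul_mem' := by
    rintro v w ⟨s, r, hs, h⟩ ⟨s', r', hs', h'⟩
    refine ⟨s * s', r * r', hP.mul_notMem hs hs', ?_⟩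
    push_cast
    rw [← h, ← h']; ring
  add_mem' := by
    rintro v w ⟨s, r, hs, h⟩ ⟨s', r', hs', h'⟩
    refine ⟨s * s', s' * r + s * r', hP.mul_notMem hs hs', ?_⟩
    push_cast
    rw [← h, ← h']; ring
  algebraMap_mem' c := ⟨1, algebraMap k R c, P.one_notMem, by simp⟩

variable {R : Subalgebra k L} {P : Ideal R}

theorem coe_mem_localSubalgebra [P.IsPrime] (r : R) : (r : L) ∈ localSubalgebra R P :=
  ⟨1, r, Ideal.one_notMem P, by simp⟩

theorem inv_mem_localSubalgebra [P.IsPrime] {r : R} (hr : r ∉ P) :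
    (r : L)⁻¹ ∈ localSubalgebra R P :=
  ⟨r, 1, hr, by
    have : (r : L) ≠ 0 := fun h => hr (by rw [show r = 0 from Subtype.ext h]; exact P.zero_mem)
    simp [this]⟩

theorem inv_notMem_localSubalgebra [hP : P.IsPrime] {r : R} (hr : r ∈ P) (hr0 : (r : L) ≠ 0) :
    (r : L)⁻¹ ∉ localSubalgebra R P := by
  rintro ⟨s, t, hs, h⟩
  refine hs ?_
  have : s = r * t := Subtype.ext (by push_cast; rw [← h]; field_simp)
  rw [this]
  exact P.mul_mem_right _ hr

theorem deriv_mem_localSubalgebra [hP : P.IsPrime] {D : Derivation k L L}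
    (hD : ∀ r ∈ R, D r ∈ R) {w : L} (hw : w ∈ localSubalgebra R P) :
    D w ∈ localSubalgebra R P := by
  obtain ⟨s, r, hs, h⟩ := hw
  refine ⟨s * s, s * ⟨D r, hD _ r.2⟩ - ⟨D s, hD _ s.2⟩ * r, hP.mul_notMem hs hs, ?_⟩
  have := congrArg D h
  rw [Derivation.leibniz] at this
  simp only [smul_eq_mul] at this
  push_cast
  linear_combination (s : L) * this - D s * h

/-- A domain is the intersection of its localizations at the maximal ideals: the ideal of
denominators of `w` lies in no maximal ideal. -/
theorem mem_of_forall_mem_localSubalgebra {w : L}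
    (h : ∀ (P : Ideal R) [P.IsMaximal], w ∈ localSubalgebra R P) : w ∈ R := by
  let I : Ideal R :=
    { carrier := {s | (s : L) * w ∈ R}
      add_mem' := by
        intro s t hs ht
        simp only [Set.mem_ofPred_eq, Subalgebra.coe_add, add_mul] at *
        exact add_mem hs ht
      zero_mem' := by simp
      smul_mem' := by
        intro c s hs
        simp only [Set.mem_ofPred_eq, smul_eq_mul, Subalgebra.coe_mul, mul_assoc] at *
        exact mul_mem c.2 hs }
  have hI : I = ⊤ := by
    by_contra hI
    obtain ⟨P, hP, hIP⟩ := Ideal.exists_le_maximal I hI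
    obtain ⟨s, r, hs, hr⟩ := h P
    exact hs (hIP (show (s : L) * w ∈ R by rw [hr]; exact r.2))
  have h1 : (1 : R) ∈ I := hI ▸ Submodule.mem_top
  simpa [I] using h1

/-- If `π ∈ P` generates `P` locally (`hloc`), then `R_P` is a discrete valuation ring with
uniformizer `π`, and nonzero elements of `R` factor as a unit of `R_P` times a power of `π`. -/
theorem exists_eq_unit_mul_pow [hP : P.IsMaximal] [IsNoetherianRing R] {π : R} (hπ : π ∈ P)
    (hπ0 : π ≠ 0) (hloc : ∀ r ∈ P, ∃ s t : R, s ∉ P ∧ s * r = π * t) {w : R} (hw : w ≠ 0) :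
    ∃ (n : ℕ) (e : L), e ∈ localSubalgebra R P ∧ e⁻¹ ∈ localSubalgebra R P ∧
      (w : L) = e * (π : L) ^ n := by
  let A := Localization.AtPrime P
  have hinj : Function.Injective (algebraMap R A) :=
    IsLocalization.injective A P.primeCompl_le_nonZeroDivisors
  have : IsDomain A := IsLocalization.isDomain_localization P.primeCompl_le_nonZeroDivisors
  have : IsNoetherianRing A := IsLocalization.isNoetherianRing P.primeCompl A inferInstance
  have hmax : IsLocalRing.maximalIdeal A = Ideal.span {algebraMap R A π} := by
    apply le_antisymm
    · rw [← Localization.AtPrime.map_eq_maximalIdeal, Ideal.map_le_iff_le_comap]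
      intro r hr
      obtain ⟨s, t, hs, h⟩ := hloc r hr
      have hu : IsUnit (algebraMap R A s) := IsLocalization.map_units A (⟨s, hs⟩ : P.primeCompl)
      rw [Ideal.mem_comap, Ideal.mem_span_singleton, ← hu.dvd_mul_left, ← map_mul, h, map_mul]
      exact dvd_mul_right _ _
    · rw [Ideal.span_singleton_le_iff_mem, ← Localization.AtPrime.map_eq_maximalIdeal]
      exact Ideal.mem_map_of_mem _ hπ
  have hπA : algebraMap R A π ≠ 0 := (map_ne_zero_iff _ hinj).mpr hπ0
  have hnf : ¬ IsField A := by
    rw [IsLocalRing.isField_iff_maximalIdeal_eq, hmax, Ideal.span_singleton_eq_bot]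
    exact hπA
  have : IsDiscreteValuationRing A :=
    ((IsDiscreteValuationRing.TFAE A hnf).out 0 4).mpr
      (show (IsLocalRing.maximalIdeal A).IsPrincipal from ⟨⟨_, hmax⟩⟩)
  have hirr := IsDiscreteValuationRing.irreducible_of_span_eq_maximalIdeal _ hπA hmax
  obtain ⟨n, e, he⟩ := IsDiscreteValuationRing.eq_unit_mul_pow_irreducible
    ((map_ne_zero_iff _ hinj).mpr hw) hirr
  obtain ⟨⟨r, s⟩, hrs⟩ := IsLocalization.surj P.primeCompl (e : A)
  simp only at hrs
  have hr : r ∉ P := by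
    intro hr
    have h1 : IsUnit (algebraMap R A r) := by
      rw [← hrs]; exact e.isUnit.mul (IsLocalization.map_units A s)
    have h2 : algebraMap R A r ∈ IsLocalRing.maximalIdeal A := by
      rw [← Localization.AtPrime.map_eq_maximalIdeal]
      exact Ideal.mem_map_of_mem _ hr
    exact h2 h1
  have hs0 : ((s : R) : L) ≠ 0 := fun h =>
    s.2 (by rw [show (s : R) = 0 from Subtype.ext h]; exact P.zero_mem)
  have hr0 : (r : L) ≠ 0 := fun h =>
    hr (by rw [show r = 0 from Subtype.ext h]; exact P.zero_mem)
  have key : (s : R) * w = r * π ^ n := hinj (by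
    rw [map_mul, he, map_mul, map_pow, ← hrs]; ring)
  refine ⟨n, r * (s : L)⁻¹, mul_mem (coe_mem_localSubalgebra r) (inv_mem_localSubalgebra s.2), ?_, ?_⟩
  · rw [mul_inv, inv_inv, mul_comm]
    exact mul_mem (coe_mem_localSubalgebra _) (inv_mem_localSubalgebra hr)
  · have := congrArg (Subtype.val) key
    push_cast at this
    field_simp
    linear_combination this

theorem exists_eq_unit_mul_zpow [hP : P.IsMaximal] [IsNoetherianRing R] {π : R} (hπ : π ∈ P)
    (hπ0 : π ≠ 0) (hloc : ∀ r ∈ P, ∃ s t : R, s ∉ P ∧ s * r = π * t) {w : L} (hw : w ≠ 0)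
    (hwR : ∃ r ∈ R, ∃ s ∈ R, w = r / s) :
    ∃ (n : ℤ) (e : L), e ∈ localSubalgebra R P ∧ e⁻¹ ∈ localSubalgebra R P ∧
      w = e * (π : L) ^ n := by
  obtain ⟨r, hr, s, hs, rfl⟩ := hwR
  obtain ⟨hr0, hs0⟩ := div_ne_zero_iff.mp hw
  obtain ⟨n, e, he, he', h⟩ := exists_eq_unit_mul_pow hπ hπ0 hloc (w := ⟨r, hr⟩)
    (fun h => hr0 (congrArg Subtype.val h))
  obtain ⟨m, f, hf, hf', h'⟩ := exists_eq_unit_mul_pow hπ hπ0 hloc (w := ⟨s, hs⟩)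
    (fun h => hs0 (congrArg Subtype.val h))
  have hπL : (π : L) ≠ 0 := fun h => hπ0 (Subtype.ext h)
  refine ⟨n - m, e * f⁻¹, mul_mem he hf', ?_, ?_⟩
  · rw [mul_inv, inv_inv]; exact mul_mem he' hf
  · simp only at h h'
    rw [h, h', zpow_sub₀ hπL, zpow_natCast, zpow_natCast, div_eq_mul_inv, div_eq_mul_inv, mul_inv]
    ring

end Local

section Residue
variable {k L : Type*} [Field k] [Field L] [Algebra k L]

theorem inv_mul_deriv_unit_mul_zpow {D : Derivation k L L} {e π : L} (he : e ≠ 0) (hπ : π ≠ 0) (n : ℤ) :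
    (e * π ^ n)⁻¹ * D (e * π ^ n) = e⁻¹ * D e + n * (π⁻¹ * D π) := by
  rw [Derivation.leibniz, Derivation.leibniz_zpow]
  have : π ^ n = π ^ (n - 1) * π := by rw [← zpow_add_one₀ hπ]; simp
  have h0 := zpow_ne_zero (n - 1) hπ
  simp only [smul_eq_mul, zsmul_eq_mul]
  rw [this]
  field_simp
  ring

variable [CharZero k]

/-- Comparison of poles in a valuation-like ring `V` with uniformizer `π`, stable under `D`, such that
`D π` is a unit. If `v` had a pole of order `m > 0`, then `D v` would have one of order `m + 1 ≥ 2`,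
while logarithmic derivatives have simple poles at most; so `v ∈ V`, and the coefficient
`∑ i, l i * n i` of `π⁻¹ * D π` vanishes. -/
theorem residue_eq_zero {V : Subalgebra k L} {D : Derivation k L L} (hDV : ∀ w ∈ V, D w ∈ V)
    {π : L} (hπ : π ∈ V) (hπ' : π⁻¹ ∉ V) (hDπ0 : D π ≠ 0) (hDπ : (D π)⁻¹ ∈ V)
    {ι : Type*} [Fintype ι] (l : ι → k) (u e : ι → L) (n : ι → ℤ)
    (he : ∀ i, e i ∈ V) (he' : ∀ i, (e i)⁻¹ ∈ V) (hu : ∀ i, u i = e i * π ^ n i)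
    (hu0 : ∀ i, u i ≠ 0) (v : L)
    (hv : v ≠ 0 → ∃ (m : ℤ) (f : L), f ∈ V ∧ f⁻¹ ∈ V ∧ v = f * π ^ m)
    (h : ∑ i, algebraMap k L (l i) * ((u i)⁻¹ * D (u i)) + D v ∈ V) :
    v ∈ V ∧ ∑ i, l i * (n i : k) = 0 := by
  have hπ0 : π ≠ 0 := by rintro rfl; exact hπ' (by simp)
  have he0 : ∀ i, e i ≠ 0 := fun i h0 => hu0 i (by simp [hu i, h0])
  -- the units `e i` contribute elements of `V` only
  have h1 : algebraMap k L (∑ i, l i * (n i : k)) * (π⁻¹ * D π) + D v ∈ V := by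
    have h2 : ∑ i, algebraMap k L (l i) * ((u i)⁻¹ * D (u i)) =
        ∑ i, algebraMap k L (l i) * ((e i)⁻¹ * D (e i)) +
          algebraMap k L (∑ i, l i * (n i : k)) * (π⁻¹ * D π) := by
      rw [map_sum, Finset.sum_mul, ← Finset.sum_add_distrib]
      refine Finset.sum_congr rfl fun i _ => ?_
      rw [hu i, inv_mul_deriv_unit_mul_zpow (he0 i) hπ0, map_mul, map_intCast]
      ring
    have h3 : ∑ i, algebraMap k L (l i) * ((e i)⁻¹ * D (e i)) ∈ V :=
      sum_mem fun i _ => mul_mem (V.algebraMap_mem _) (mul_mem (he' i) (hDV _ (he i)))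
    rw [h2, add_assoc] at h
    exact (add_mem_cancel_left h3).mp h
  set N := ∑ i, l i * (n i : k) with hN
  have hvV : v ∈ V := by
    by_cases hv0 : v = 0
    · rw [hv0]; exact V.zero_mem
    obtain ⟨m, f, hf, hf', rfl⟩ := hv hv0
    have hf0 : f ≠ 0 := left_ne_zero_of_mul hv0
    rcases le_or_gt 0 m with hm | hm
    · obtain ⟨m, rfl⟩ := Int.eq_ofNat_of_zero_le hm
      exact mul_mem hf (by simpa using pow_mem hπ m)
    · exfalso
      obtain ⟨j, rfl⟩ : ∃ j : ℕ, m = -((j : ℤ) + 1) := ⟨(-m - 1).toNat, by omega⟩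
      -- multiplying by `π ^ (j + 1)` leaves `(j + 1) f Dπ` times `π⁻¹` as the only polar term
      apply hπ'
      have hj : ((j : L) + 1) ≠ 0 := by
        have := (_root_.map_ne_zero (algebraMap k L)).mpr (Nat.cast_add_one_ne_zero (R := k) j)
        simpa using this
      have hjV : ((j : L) + 1)⁻¹ ∈ V := by
        have := V.algebraMap_mem ((j : k) + 1)⁻¹
        simpa using this
      have hE : (algebraMap k L N * (π⁻¹ * D π) + D (f * π ^ (-((j : ℤ) + 1)))) * π ^ (j + 1)
          = algebraMap k L N * π ^ j * D π + D f - ((j : L) + 1) * f * D π * π⁻¹ := by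
        rw [Derivation.leibniz, Derivation.leibniz_zpow]
        simp only [smul_eq_mul, zsmul_eq_mul]
        have e1 : π ^ (-((j : ℤ) + 1) - 1) = (π ^ (j + 1))⁻¹ * π⁻¹ := by
          rw [← zpow_natCast, ← zpow_neg, zpow_sub_one₀ hπ0]; push_cast; rfl
        have e2 : π ^ (-((j : ℤ) + 1)) = (π ^ (j + 1))⁻¹ := by
          rw [← zpow_natCast, ← zpow_neg]; push_cast; rfl
        rw [e1, e2]
        push_cast
        field_simp
        ring
      have h4 : ((j : L) + 1) * f * D π * π⁻¹ ∈ V := by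
        have := mul_mem h1 (pow_mem hπ (j + 1))
        rw [hE] at this
        have h5 : algebraMap k L N * π ^ j * D π + D f ∈ V :=
          add_mem (mul_mem (mul_mem (V.algebraMap_mem _) (pow_mem hπ j)) (hDV _ hπ)) (hDV _ hf)
        simpa using sub_mem h5 this
      have h6 := mul_mem (mul_mem (mul_mem hjV hf') hDπ) h4
      convert h6 using 1
      field_simp
  refine ⟨hvV, ?_⟩
  by_contra hN0
  apply hπ'
  have h2 : algebraMap k L N * (π⁻¹ * D π) ∈ V := (add_mem_cancel_right (hDV _ hvV)).mp h1
  have h3 := mul_mem (mul_mem (V.algebraMap_mem N⁻¹) hDπ) h2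
  have hN1 : algebraMap k L N ≠ 0 := (_root_.map_ne_zero _).mpr hN0
  convert h3 using 1
  rw [map_inv₀]
  field_simp

end Residue

/-! ### Uniformizers on the affine curve -/

section Uniformizer
variable {k L : Type*} [Field k] [Field L] [Algebra k L] {a b : k} {x y : L}

/-- Nullstellensatz: residue fields of the coordinate ring are equal to `k`. -/
theorem exists_point [IsAlgClosed k] (P : Ideal (Algebra.adjoin k {x, y})) [P.IsMaximal]
    (r : Algebra.adjoin k {x, y}) : ∃ c : k, r - algebraMap k _ c ∈ P := by
  have h1 : Algebra.FiniteType k (Algebra.adjoin k {x, y}) :=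
    Algebra.FiniteType.adjoin_of_finite (Set.toFinite _)
  let _ : Field (Algebra.adjoin k {x, y} ⧸ P) := Ideal.Quotient.field P
  have h2 : Algebra.FiniteType k (Algebra.adjoin k {x, y} ⧸ P) :=
    h1.of_surjective (Ideal.Quotient.mkₐ k P) (Ideal.Quotient.mkₐ_surjective k P)
  have h3 : Module.Finite k (Algebra.adjoin k {x, y} ⧸ P) :=
    finite_of_finite_type_of_isJacobsonRing k _
  obtain ⟨c, hc⟩ := (IsAlgClosed.algebraMap_bijective_of_isIntegral (k := k)).2
    (Ideal.Quotient.mk P r)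
  refine ⟨c, ?_⟩
  rw [← Ideal.Quotient.eq_zero_iff_mem, map_sub, ← hc, sub_eq_zero]
  rfl

theorem algebraMap_mem_iff {R : Subalgebra k L} {P : Ideal R} [hP : P.IsPrime] {c : k} :
    algebraMap k R c ∈ P ↔ c = 0 := by
  refine ⟨fun h => ?_, fun h => by simp [h]⟩
  by_contra hc
  exact hP.ne_top (Ideal.eq_top_of_isUnit_mem _ h ((IsUnit.mk0 c hc).map _))

/-- Every regular function is constant modulo the ideal of the point `(x₀, y₀)`. -/
theorem sub_const_mem_span (r : Algebra.adjoin k {x, y}) (X Y : Algebra.adjoin k {x, y})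
    (hX : (X : L) = x) (hY : (Y : L) = y) (x₀ y₀ : k) :
    ∃ c : k, r - algebraMap k _ c ∈
      Ideal.span {X - algebraMap k _ x₀, Y - algebraMap k _ y₀} := by
  obtain ⟨r, hr⟩ := r
  induction hr using Algebra.adjoin_induction with
  | mem r hr =>
    rcases hr with rfl | rfl
    · exact ⟨x₀, Ideal.subset_span (by left; congr 1; exact Subtype.ext hX.symm)⟩
    · exact ⟨y₀, Ideal.subset_span (by right; congr 1; exact Subtype.ext hY.symm)⟩
  | algebraMap c =>
    refine ⟨c, ?_⟩
    convert Ideal.zero_mem _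
    exact sub_self _
  | add r s hr hs h1 h2 =>
    obtain ⟨c, hc⟩ := h1
    obtain ⟨d, hd⟩ := h2
    refine ⟨c + d, ?_⟩
    convert Ideal.add_mem _ hc hd using 1
    have : (⟨r + s, add_mem hr hs⟩ : Algebra.adjoin k {x, y}) = ⟨r, hr⟩ + ⟨s, hs⟩ := rfl
    rw [map_add, this]; ring
  | mul r s hr hs h1 h2 =>
    obtain ⟨c, hc⟩ := h1
    obtain ⟨d, hd⟩ := h2
    refine ⟨c * d, ?_⟩
    convert Ideal.add_mem _ (Ideal.mul_mem_left _ (⟨s, hs⟩) hc)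
      (Ideal.mul_mem_left _ (algebraMap k _ c) hd) using 1
    rw [map_mul]
    have : (⟨r * s, mul_mem hr hs⟩ : Algebra.adjoin k {x, y}) = ⟨r, hr⟩ * ⟨s, hs⟩ := rfl
    rw [this]; ring

/-- Smoothness of the affine curve, and nonvanishing of `D`: each maximal ideal `P` has a local
generator `π` with `D π ∉ P`. -/
theorem exists_uniformizer [IsAlgClosed k] [CharZero k] (hab : 4 * a ^ 3 + 27 * b ^ 2 ≠ 0)
    (hc : y ^ 2 = aeval x (weierstrassCubic a b)) (hy : y ≠ 0)
    {D : Derivation k L L} (hD : D x = y) (P : Ideal (Algebra.adjoin k {x, y})) [hP : P.IsMaximal] :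
    ∃ π ∈ P, (∃ d : Algebra.adjoin k {x, y}, d ∉ P ∧ D (π : L) = d) ∧
      ∀ r ∈ P, ∃ s t, s ∉ P ∧ s * r = π * t := by
  have hPp : P.IsPrime := hP.isPrime
  obtain ⟨X, hX⟩ : ∃ X : Algebra.adjoin k {x, y}, (X : L) = x :=
    ⟨⟨x, Algebra.subset_adjoin (by simp)⟩, rfl⟩
  obtain ⟨Y, hY⟩ : ∃ Y : Algebra.adjoin k {x, y}, (Y : L) = y :=
    ⟨⟨y, Algebra.subset_adjoin (by simp)⟩, rfl⟩
  obtain ⟨x₀, hx₀⟩ := exists_point P X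
  obtain ⟨y₀, hy₀⟩ := exists_point P Y
  set ι := algebraMap k (Algebra.adjoin k {x, y}) with hι
  have hXY : Y ^ 2 = X ^ 3 + ι a * X + ι b := by
    apply Subtype.ext
    push_cast
    rw [hX, hY, hc]
    simp [weierstrassCubic, hι]
  have hpt : y₀ ^ 2 = x₀ ^ 3 + a * x₀ + b := by
    rw [← sub_eq_zero, ← algebraMap_mem_iff (P := P)]
    have h1 : ι (y₀ ^ 2 - (x₀ ^ 3 + a * x₀ + b)) =
        (X ^ 2 + X * ι x₀ + ι x₀ ^ 2 + ι a) * (X - ι x₀) - (Y + ι y₀) * (Y - ι y₀) := by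
      simp only [map_sub, map_add, map_mul, map_pow]
      linear_combination hXY
    rw [h1]
    exact sub_mem (P.mul_mem_left _ hx₀) (P.mul_mem_left _ hy₀)
  have hfac : (Y - ι y₀) * (Y + ι y₀) =
      (X - ι x₀) * (X ^ 2 + X * ι x₀ + ι x₀ ^ 2 + ι a) := by
    have := congrArg ι hpt
    simp only [map_add, map_mul, map_pow] at this
    linear_combination hXY - this
  have hcong : ∀ {r : Algebra.adjoin k {x, y}} {c : k}, r - ι c ∈ P → c ≠ 0 → r ∉ P := by
    intro r c h hc hr
    refine hc ((algebraMap_mem_iff (P := P)).mp ?_)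
    simpa using sub_mem hr h
  -- `P` is generated by `X - x₀` and `Y - y₀`, so only these have to be divided by `π` locally
  suffices h : ∃ π ∈ P, (∃ d : Algebra.adjoin k {x, y}, d ∉ P ∧ D (π : L) = d) ∧
      (∃ s t, s ∉ P ∧ s * (X - ι x₀) = π * t) ∧ (∃ s t, s ∉ P ∧ s * (Y - ι y₀) = π * t) by
    obtain ⟨π, hπ, hd, ⟨s, t, hs, hst⟩, ⟨s', t', hs', hst'⟩⟩ := h
    refine ⟨π, hπ, hd, fun r hr => ?_⟩
    obtain ⟨c, hcr⟩ := sub_const_mem_span r X Y hX hY x₀ y₀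
    have hle : Ideal.span {X - ι x₀, Y - ι y₀} ≤ P := by
      rw [Ideal.span_le]; rintro _ (rfl | rfl) <;> assumption
    have hc0 : c = 0 := by
      by_contra h0
      exact hcong (hle hcr) h0 hr
    rw [hc0, map_zero, sub_zero, Ideal.mem_span_pair] at hcr
    obtain ⟨f, g, rfl⟩ := hcr
    exact ⟨s * s', s' * f * t + s * g * t', hPp.mul_notMem hs hs', by
      linear_combination (s' * f) * hst + (s * g) * hst'⟩
  by_cases h0 : y₀ = 0
  · -- a branch point of `x`: here `y` is a uniformizer, as `x₀` is a simple root of the cubic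
    subst h0
    rw [map_zero] at hfac hy₀
    rw [sub_zero] at hfac hy₀
    have h3 : 3 * x₀ ^ 2 + a ≠ 0 := by
      intro h3
      apply hab
      have hb : b = 2 * x₀ ^ 3 := by linear_combination -hpt - x₀ * h3
      have ha : a = - 3 * x₀ ^ 2 := by linear_combination h3
      rw [hb, ha]; ring
    have hd : 2 * D (Y : L) = ((3 * X ^ 2 + ι a : Algebra.adjoin k {x, y}) : L) := by
      rw [hY, two_mul_deriv_y hc hy hD]
      have : ((3 : Algebra.adjoin k {x, y}) : L) = 3 := rfl
      push_cast
      rw [hX, this]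
      simp [weierstrassCubic, hι]
      left; rw [map_ofNat]; norm_num
    refine ⟨Y, hy₀, ⟨⟨D Y, deriv_mem_coord hc hy hD Y.2⟩, ?_, rfl⟩,
      ⟨X ^ 2 + X * ι x₀ + ι x₀ ^ 2 + ι a, Y, ?_, ?_⟩, ⟨1, 1, P.one_notMem, by simp⟩⟩
    · intro hmem
      refine hcong (r := 3 * X ^ 2 + ι a) (c := 3 * x₀ ^ 2 + a) ?_ h3 ?_
      · have := P.mul_mem_left (3 * (X + ι x₀)) hx₀
        convert this using 1
        simp only [map_add, map_mul, map_pow, map_ofNat]; ring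
      · have := P.mul_mem_left 2 hmem
        convert this using 1
        exact Subtype.ext hd.symm
    · refine hcong (c := 3 * x₀ ^ 2 + a) ?_ h3
      have := P.mul_mem_left (X + 2 * ι x₀) hx₀
      convert this using 1
      simp only [map_add, map_mul, map_pow, map_ofNat]; ring
    · linear_combination -hfac
  · -- elsewhere `x - x₀` is a uniformizer
    refine ⟨X - ι x₀, hx₀, ⟨Y, hcong hy₀ h0, ?_⟩, ⟨1, 1, P.one_notMem, by simp⟩,
      ⟨Y + ι y₀, X ^ 2 + X * ι x₀ + ι x₀ ^ 2 + ι a, ?_, by linear_combination hfac⟩⟩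
    · push_cast
      rw [map_sub, hX, hD, hY, sub_eq_self]
      exact D.map_algebraMap x₀
    · refine hcong (c := 2 * y₀) ?_ (mul_ne_zero two_ne_zero h0)
      convert hy₀ using 1
      simp only [map_mul, map_ofNat]; ring

end Uniformizer

/-! ### Descent to the function field -/

/-- Finitely many scalars are integral combinations of `ℤ`-independent ones: the group they generate
is torsion-free and finitely generated, hence free. -/
theorem exists_int_independent {k : Type*} [Field k] [CharZero k] {ι : Type*} [Finite ι] (l : ι → k) :
    ∃ (m : ℕ) (μ : Fin m → k) (c : ι → Fin m → ℤ), (∀ i, l i = ∑ j, (c i j : k) * μ j) ∧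
      ∀ n : Fin m → ℤ, ∑ j, μ j * (n j : k) = 0 → n = 0 := by
  let M := Submodule.span ℤ (Set.range l)
  have : Module.Finite ℤ M := Module.Finite.span_of_finite ℤ (Set.finite_range l)
  let B := Module.finBasis ℤ M
  refine ⟨_, fun j => (B j : k), fun i j => B.repr ⟨l i, Submodule.subset_span ⟨i, rfl⟩⟩ j, ?_, ?_⟩
  · intro i
    have := congrArg Subtype.val (B.sum_repr ⟨l i, Submodule.subset_span ⟨i, rfl⟩⟩)
    rw [Submodule.coe_sum] at this
    refine this.symm.trans (Finset.sum_congr rfl fun j _ => ?_)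
    simp
  · intro n hn
    have h := Fintype.linearIndependent_iff.mp B.linearIndependent n (Subtype.ext (by
      simpa [mul_comm] using hn))
    exact funext h

section LogDeriv
variable {k L : Type*} [Field k] [Field L] [Algebra k L] (D : Derivation k L L)

theorem inv_mul_deriv_prod {ι : Type*} (s : Finset ι) (u : ι → L) (hu : ∀ i ∈ s, u i ≠ 0) :
    (∏ i ∈ s, u i)⁻¹ * D (∏ i ∈ s, u i) = ∑ i ∈ s, (u i)⁻¹ * D (u i) := by
  classical
  induction s using Finset.induction_on with
  | empty => simp
  | insert i s hi ih =>
    have h1 : u i ≠ 0 := hu i (by simp)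
    have h2 : ∏ i ∈ s, u i ≠ 0 := Finset.prod_ne_zero_iff.mpr fun j hj => hu j (by simp [hj])
    rw [Finset.prod_insert hi, Finset.sum_insert hi, ← ih fun j hj => hu j (by simp [hj]),
      Derivation.leibniz]
    simp only [smul_eq_mul]
    field_simp
    ring

theorem inv_mul_deriv_zpow {u : L} (hu : u ≠ 0) (n : ℤ) :
    (u ^ n)⁻¹ * D (u ^ n) = n * (u⁻¹ * D u) := by
  have := inv_mul_deriv_unit_mul_zpow (D := D) one_ne_zero hu n
  simpa using this

end LogDeriv

/-- An automorphism fixing `x` and `y` commutes with `D`, because the conjugate of `D` also maps `x`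
to `y`. -/
theorem deriv_comm {k L : Type*} [Field k] [Field L] [Algebra k L] [CharZero k] {x y : L}
    (hx : Transcendental k x) (halg : Algebra.IsAlgebraic (Algebra.adjoin k {x}) L)
    {D : Derivation k L L} (hD : D x = y) (τ : L ≃ₐ[k] L) (hτx : τ x = x) (hτy : τ y = y) (w : L) :
    D (τ w) = τ (D w) := by
  let D' : Derivation k L L :=
    Derivation.mk' (τ.symm.toLinearMap ∘ₗ (D : L →ₗ[k] L) ∘ₗ τ.toLinearMap) fun u v => by
      simp
  have hD' : ∀ w, D' w = τ.symm (D (τ w)) := fun _ => rfl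
  have h := (derivation_of_transcendental hx halg).2 (D' - D) (by
    have : τ.symm y = y := by rw [AlgEquiv.symm_apply_eq, hτy]
    simp [hD', hτx, hD, this])
  have := congrArg (fun d : Derivation k L L => τ (d w)) h
  simpa [hD', sub_eq_zero] using this

/-- Descent of a relation to the function field `k(x, y)`. The `u i` and `v` generate a finite extension
`E` of it; the sum over all embeddings `E → L` replaces `u i` by its norm, `v` by its trace and `1`
by the degree `m`. -/
theorem exists_descent {k L : Type*} [Field k] [Field L] [Algebra k L] [CharZero k]
    [IsAlgClosed L] {x y : L}
    (hx : Transcendental k x) (halg : Algebra.IsAlgebraic (Algebra.adjoin k {x}) L)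
    {D : Derivation k L L} (hD : D x = y) {ι : Type*} [Fintype ι] (l : ι → k) (u : ι → L)
    (hu : ∀ i, u i ≠ 0) (v : L)
    (h : 1 + ∑ i, algebraMap k L (l i) * ((u i)⁻¹ * D (u i)) + D v = 0) :
    ∃ (m : ℕ) (U : ι → L) (V : L), m ≠ 0 ∧ (∀ i, U i ≠ 0) ∧
      (∀ i, U i ∈ IntermediateField.adjoin k {x, y}) ∧ V ∈ IntermediateField.adjoin k {x, y} ∧
      m + ∑ i, algebraMap k L (l i) * ((U i)⁻¹ * D (U i)) + D V = 0 := by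
  set F := IntermediateField.adjoin k {x, y} with hF
  have hxF : x ∈ F := IntermediateField.subset_adjoin _ _ (by simp)
  have hyF : y ∈ F := IntermediateField.subset_adjoin _ _ (by simp)
  have hle : Algebra.adjoin k {x} ≤ F.toSubalgebra := by
    rw [Algebra.adjoin_le_iff]; rintro _ rfl; exact hxF
  have : Algebra.IsAlgebraic F L := ⟨fun w =>
    (halg.isAlgebraic w).tower_top_of_subalgebra_le hle⟩
  have : CharZero L := charZero_of_injective_algebraMap (algebraMap k L).injective
  have : CharZero F := charZero_of_injective_algebraMap (algebraMap k F).injective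
  have : IsAlgClosure F L := ⟨inferInstance, inferInstance⟩
  have : Normal F L := IsAlgClosure.normal F L
  let E := IntermediateField.adjoin F (Set.range u ∪ {v})
  have : FiniteDimensional F E :=
    IntermediateField.finiteDimensional_adjoin fun w _ => Algebra.IsIntegral.isIntegral w
  have huE : ∀ i, u i ∈ E := fun i => IntermediateField.subset_adjoin _ _ (by simp)
  have hvE : v ∈ E := IntermediateField.subset_adjoin _ _ (by simp)
  -- each embedding of `E` transports the identity
  have hσ : ∀ σ : E →ₐ[F] L, 1 + ∑ i, algebraMap k L (l i) *
      ((σ ⟨u i, huE i⟩)⁻¹ * D (σ ⟨u i, huE i⟩)) + D (σ ⟨v, hvE⟩) = 0 := by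
    intro σ
    let τ₀ : L →ₐ[F] L := AlgHom.liftNormal σ L
    have hτ₀ : ∀ w : E, τ₀ w = σ w := fun w => AlgHom.liftNormal_commutes σ L w
    let τ₁ : L ≃ₐ[F] L := AlgEquiv.ofBijective τ₀ (AlgHom.normal_bijective F L L τ₀)
    let τ : L ≃ₐ[k] L := τ₁.restrictScalars k
    have hτ : ∀ w (hw : w ∈ E), σ ⟨w, hw⟩ = τ w := fun w hw => (hτ₀ ⟨w, hw⟩).symm
    have hτF : ∀ w ∈ F, τ w = w := fun w hw => τ₁.commutes ⟨w, hw⟩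
    have hcomm := deriv_comm hx halg hD τ (hτF x hxF) (hτF y hyF)
    have := congrArg τ h
    simp only [map_add, map_one, map_sum, map_mul, map_inv₀, AlgEquiv.commutes, map_zero] at this
    simpa only [hτ, hcomm] using this
  have hσ0 : ∀ (σ : E →ₐ[F] L) i, σ ⟨u i, huE i⟩ ≠ 0 := fun σ i =>
    (map_ne_zero σ).mpr fun h => hu i (congrArg Subtype.val h)
  refine ⟨Fintype.card (E →ₐ[F] L), fun i => algebraMap F L (Algebra.norm F (⟨u i, huE i⟩ : E)),
    algebraMap F L (Algebra.trace F E ⟨v, hvE⟩), ?_, ?_, fun i => Subtype.prop _,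
    Subtype.prop _, ?_⟩
  · rw [AlgHom.card]; exact Module.finrank_pos.ne'
  · intro i
    simp only [Algebra.norm_eq_prod_embeddings, Finset.prod_ne_zero_iff]
    exact fun σ _ => hσ0 σ i
  · simp only [Algebra.norm_eq_prod_embeddings, trace_eq_sum_embeddings]
    have hsum := Finset.sum_congr (rfl : (Finset.univ : Finset (E →ₐ[F] L)) = _)
      fun σ _ => hσ σ
    rw [Finset.sum_const_zero, Finset.sum_add_distrib, Finset.sum_add_distrib,
      Finset.sum_comm] at hsum
    rw [← hsum, map_sum]
    simp only [Finset.sum_const, Finset.card_univ, nsmul_eq_mul, mul_one]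
    congr 2
    refine Finset.sum_congr rfl fun i _ => ?_
    rw [inv_mul_deriv_prod D _ _ fun σ _ => hσ0 σ i, Finset.mul_sum]

/-! ### Independence of the invariant differential -/

/-- A nonzero multiple of the invariant differential is not a combination of logarithmic and exact
differentials of the function field; stated after contraction with the dual vector field `D`. -/
theorem no_relation {k L : Type*} [Field k] [Field L] [Algebra k L] [CharZero k] [IsAlgClosed k]
    {a b : k} {x y : L} (hab : 4 * a ^ 3 + 27 * b ^ 2 ≠ 0)
    (hc : y ^ 2 = aeval x (weierstrassCubic a b)) (hy : y ≠ 0) (hx : Transcendental k x)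
    {D : Derivation k L L} (hD : D x = y) {ι : Type*} [Fintype ι] (l : ι → k) (u : ι → L)
    (hu : ∀ i, u i ≠ 0) (huF : ∀ i, u i ∈ IntermediateField.adjoin k {x, y})
    (v : L) (hvF : v ∈ IntermediateField.adjoin k {x, y}) (c : k)
    (h : algebraMap k L c + ∑ i, algebraMap k L (l i) * ((u i)⁻¹ * D (u i)) + D v = 0) :
    c = 0 := by
  obtain ⟨m, μ, N, hl, hμ⟩ := exists_int_independent l
  let W : Fin m → L := fun j => ∏ i, u i ^ N i j
  have hW0 : ∀ j, W j ≠ 0 := fun j => Finset.prod_ne_zero_iff.mpr fun i _ => zpow_ne_zero _ (hu i)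
  have hWF : ∀ j, W j ∈ IntermediateField.adjoin k {x, y} := fun j =>
    prod_mem fun i _ => zpow_mem (huF i) _
  have hsum : ∑ i, algebraMap k L (l i) * ((u i)⁻¹ * D (u i)) =
      ∑ j, algebraMap k L (μ j) * ((W j)⁻¹ * D (W j)) := by
    have h1 : ∀ j, (W j)⁻¹ * D (W j) = ∑ i, (N i j : L) * ((u i)⁻¹ * D (u i)) := fun j => by
      rw [inv_mul_deriv_prod D _ _ fun i _ => zpow_ne_zero _ (hu i)]
      exact Finset.sum_congr rfl fun i _ => inv_mul_deriv_zpow D (hu i) _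
    simp only [h1, hl, map_sum, map_mul, map_intCast, Finset.sum_mul, Finset.mul_sum]
    rw [Finset.sum_comm]
    exact Finset.sum_congr rfl fun j _ => Finset.sum_congr rfl fun i _ => by ring
  rw [hsum] at h
  set R := Algebra.adjoin k {x, y} with hR
  have : Algebra.FiniteType k R := Algebra.FiniteType.adjoin_of_finite (Set.toFinite _)
  have : IsNoetherianRing R := Algebra.FiniteType.isNoetherianRing k R
  have hfrac : ∀ w ∈ IntermediateField.adjoin k {x, y}, ∃ r ∈ R, ∃ s ∈ R, w = r / s :=
    fun w hw => by
      obtain ⟨r, hr, s, hs, h⟩ := IntermediateField.mem_adjoin_iff_div.mp hw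
      exact ⟨r, hr, s, hs, h⟩
  -- on the affine curve `v` has no poles, and the `W j` have neither poles nor zeros
  have hloc : ∀ (P : Ideal R) [P.IsMaximal], v ∈ localSubalgebra R P ∧
      ∀ j, W j ∈ localSubalgebra R P ∧ (W j)⁻¹ ∈ localSubalgebra R P := by
    intro P hP
    have hPp : P.IsPrime := hP.isPrime
    obtain ⟨π, hπ, ⟨d, hd, hDπ⟩, hP'⟩ := exists_uniformizer hab hc hy hD P
    have hd0 : (d : L) ≠ 0 := fun h0 => hd (by
      rw [show d = 0 from Subtype.ext h0]; exact P.zero_mem)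
    have hπ0 : π ≠ 0 := by
      rintro rfl
      exact hd0 (by rw [← hDπ]; simp)
    have hπL : (π : L) ≠ 0 := fun h0 => hπ0 (Subtype.ext h0)
    choose n e he he' hWe using fun j =>
      exists_eq_unit_mul_zpow hπ hπ0 hP' (hW0 j) (hfrac _ (hWF j))
    obtain ⟨h1, h2⟩ := residue_eq_zero (V := localSubalgebra R P) (D := D)
      (fun w hw => deriv_mem_localSubalgebra (fun r hr => deriv_mem_coord hc hy hD hr) hw)
      (coe_mem_localSubalgebra π) (inv_notMem_localSubalgebra hπ hπL) (by rwa [hDπ])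
      (by rw [hDπ]; exact inv_mem_localSubalgebra hd) μ W e n he he' hWe hW0 v
      (fun hv0 => exists_eq_unit_mul_zpow hπ hπ0 hP' hv0 (hfrac _ hvF))
      (by
        have h3 : ∑ j, algebraMap k L (μ j) * ((W j)⁻¹ * D (W j)) + D v = algebraMap k L (-c) := by
          rw [map_neg]; linear_combination h
        rw [h3]; exact Subalgebra.algebraMap_mem _ _)
    have hn := hμ n h2
    refine ⟨h1, fun j => ?_⟩
    have : W j = e j := by rw [hWe j, hn]; simp
    rw [this]
    exact ⟨he j, he' j⟩
  have hDW : ∀ j, D (W j) = 0 := by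
    intro j
    obtain ⟨w, hw⟩ := coord_unit hc hx
      (mem_of_forall_mem_localSubalgebra fun P _ => ((hloc P).2 j).1)
      (mem_of_forall_mem_localSubalgebra fun P _ => ((hloc P).2 j).2) (mul_inv_cancel₀ (hW0 j))
    rw [hw]; exact D.map_algebraMap w
  have hv : v ∈ R := mem_of_forall_mem_localSubalgebra fun P _ => (hloc P).1
  refine neg_eq_zero.mp (eq_zero_of_deriv_coord_eq_const hc hx hy hD hv (c := -c) ?_)
  simp only [hDW, mul_zero, Finset.sum_const_zero, add_zero] at h
  rw [map_neg]
  linear_combination h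

/-- The heart of the theorem, relative to an arbitrary algebraically closed `M` containing `L`. -/
theorem isAlgebraic_of_relation {k L M : Type*} [Field k] [Field L] [Field M] [Algebra k L]
    [Algebra k M] [Algebra L M] [IsScalarTower k L M] [CharZero k] [IsAlgClosed M]
    {a b : k} (hab : 4 * a ^ 3 + 27 * b ^ 2 ≠ 0) {x y : L} (hy : y ≠ 0)
    (hcurve : y ^ 2 = x ^ 3 + algebraMap k L a * x + algebraMap k L b)
    {ι : Type*} [Fintype ι] (u : ι → L) (hu : ∀ i, u i ≠ 0) (v : L) (l : ι → k)
    (heq : y⁻¹ • KaehlerDifferential.D k L x +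
        ∑ i, algebraMap k L (l i) • (u i)⁻¹ • KaehlerDifferential.D k L (u i) +
        KaehlerDifferential.D k L v = 0) : IsAlgebraic k x := by
  by_contra hx
  let j := algebraMap L M
  have hxM : Transcendental k (j x) := (transcendental_algebraMap_iff j.injective).mpr hx
  obtain ⟨K, hK, hxK, halg⟩ := exists_base hxM
  have hyM : j y ≠ 0 := (_root_.map_ne_zero j).mpr hy
  have hcM : j y ^ 2 = aeval (j x) (weierstrassCubic (algebraMap k K a) (algebraMap k K b)) := by
    rw [← map_pow, hcurve]
    simp [weierstrassCubic, j, ← IsScalarTower.algebraMap_apply]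
  have habK : 4 * algebraMap k K a ^ 3 + 27 * algebraMap k K b ^ 2 ≠ 0 := by
    have := (_root_.map_ne_zero (algebraMap k K)).mpr hab
    rwa [map_add, map_mul, map_mul, map_pow, map_pow, map_ofNat, map_ofNat] at this
  have : CharZero K := charZero_of_injective_algebraMap (algebraMap k K).injective
  obtain ⟨D, hD⟩ := (derivation_of_transcendental hxK halg).1 (j y)
  let D' : Derivation k L M := (D.restrictScalars k).compAlgebraMap L
  have hD' : ∀ w, D' w = D (j w) := fun _ => rfl
  have h1 : 1 + ∑ i, algebraMap K M (algebraMap k K (l i)) * ((j (u i))⁻¹ * D (j (u i)))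
      + D (j v) = 0 := by
    have := congrArg D'.liftKaehlerDifferential heq
    simp only [map_add, map_sum, map_smul, Derivation.liftKaehlerDifferential_comp_D,
      map_zero, hD', Algebra.smul_def, hD, map_inv₀] at this
    rw [inv_mul_cancel₀ hyM] at this
    simpa only [← IsScalarTower.algebraMap_apply] using this
  obtain ⟨m, U, V, hm, hU, hUF, hVF, h2⟩ := exists_descent hxK halg hD
    (fun i => algebraMap k K (l i)) (fun i => j (u i))
    (fun i => (_root_.map_ne_zero j).mpr (hu i)) (j v) h1
  have h3 := no_relation habK hcM hyM hxK hD _ U hU hUF V hVF (m : K)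
    (by rw [map_natCast]; exact h2)
  exact hm (Nat.cast_eq_zero.mp h3)

end EllipticRelation

theorem stmt12 (k L : Type*) [Field k] [Field L] [Algebra k L]
    [CharZero k] [IsAlgClosed k]
    (a b : k) (hab : 4 * a ^ 3 + 27 * b ^ 2 ≠ 0)
    (x y : L) (hy : y ≠ 0)
    (hcurve : y ^ 2 = x ^ 3 + algebraMap k L a * x + algebraMap k L b)
    {n : ℕ} (u : Fin n → Lˣ) (v : L) (l : Fin n → k)
    (heq : y⁻¹ • KaehlerDifferential.D k L x +
        ∑ i, algebraMap k L (l i) •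
          (((u i)⁻¹ : Lˣ) : L) • KaehlerDifferential.D k L ((u i : L)) +
        KaehlerDifferential.D k L v = 0) :
    (x ∈ Set.range (algebraMap k L) ∧ y ∈ Set.range (algebraMap k L)) ∧
    y⁻¹ • KaehlerDifferential.D k L x = 0 ∧
    ∑ i, algebraMap k L (l i) •
        (((u i)⁻¹ : Lˣ) : L) • KaehlerDifferential.D k L ((u i : L)) +
      KaehlerDifferential.D k L v = 0 := by
  have hclosed : ∀ z : L, IsAlgebraic k z → z ∈ Set.range (algebraMap k L) := fun z hz =>
    minpoly.mem_range_of_degree_eq_one k z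
      (IsAlgClosed.degree_eq_one_of_irreducible k (minpoly.irreducible hz.isIntegral))
  have hxk : IsAlgebraic k x :=
    EllipticRelation.isAlgebraic_of_relation (M := AlgebraicClosure L) hab hy hcurve (fun i => (u i : L))
      (fun i => (u i).ne_zero) v l (by simpa only [Units.val_inv_eq_inv_val] using heq)
  have hyk : IsAlgebraic k y := by
    refine IsAlgebraic.of_pow two_pos ?_
    rw [hcurve]
    exact ((hxk.pow 3).add ((isAlgebraic_algebraMap a).mul hxk)).add (isAlgebraic_algebraMap b)
  have hx0 : y⁻¹ • KaehlerDifferential.D k L x = 0 := by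
    obtain ⟨c, rfl⟩ := hclosed x hxk
    rw [Derivation.map_algebraMap, smul_zero]
  refine ⟨⟨hclosed x hxk, hclosed y hyk⟩, hx0, ?_⟩
  rwa [hx0, zero_add] at heq
end

section
/- Let U ⊆ ℂ be a nonempty connected open set and let W₁, …, Wₙ : U → ℂ be pairwise distinct holomorphic functions each satisfying Lambert's equation Wᵢ(ζ)·exp(Wᵢ(ζ)) = ζ for all ζ ∈ U. Then W₁, …, Wₙ are algebraically independent over ℂ(z): for every nonzero polynomial P ∈ ℂ[X₀, X₁, …, Xₙ], the holomorphic function ζ ↦ P(ζ, W₁(ζ), …, Wₙ(ζ)) is not identically zero on U. -/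
/-!
Differentiating `W * exp W = z` and eliminating the exponential gives `(1 + W) * z * W' = W`, so
with the derivation `D = z d/dz` the functions `z` and `W i` satisfy the autonomous equations
`D z = z` and `(1 + W i) * D (W i) = W i` in the fraction field `K` of the ring of holomorphic
functions on `U`, where the constants of `D` are `ℂ`. All of them have the shape
`(1 + ε * x) * D x = x` with `ε ∈ {0, 1}`, and the theorem becomes a purely algebraic statement
about solutions of these equations in a differential field (`algebraicIndependent_cons`).

That statement is proved by adjoining one `y = W i` at a time (`step`). Suppose `y` is algebraic
over an independent family `x` of solutions found so far. On the algebraic closure of `ℂ(x)` in `K` the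
derivation `D` is the sum of the commuting derivations `E j = D (x j) ∂/∂x_j`, and commutation makes
`E j y / D y` a constant `a j`, with `∑ a j = 1` (`step_aux`). Choose `j` with `a j ≠ 0`. Then, over
the constants of `∂/∂x_j`, the pair `(x j, y)` is algebraic and lies on a curve invariant under the
planar vector field `X (1 + Y) ∂/∂X + a Y (1 + ε X) ∂/∂Y`. The Darboux polynomials of that field can
be determined by comparing coefficients (`darboux`): the only invariant irreducible curve other than
the axis `Y = 0` and the lines `X = const` that can occur is the diagonal, and only for `ε = 1`.
Hence `y = x j` (`one_variable`), contradicting distinctness.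
-/

section

open Polynomial

/-! ### Darboux polynomials of a planar vector field -/

/-- The partial derivative `∂/∂X` on `k[X][Y]`, written `k[X][X]` with the outer variable playing
the role of `Y`: it differentiates the coefficients and kills the outer variable. -/
noncomputable def dX (k : Type*) [Field k] : Derivation k k[X][X] k[X][X] :=
  PolynomialModule.equivPolynomialSelf.compDer (derivative' (R := k)).mapCoeffs

theorem coeff_dX {k : Type*} [Field k] (P : k[X][X]) (j : ℕ) :
    (dX k P).coeff j = derivative (P.coeff j) := rfl

theorem dX_monomial {k : Type*} [Field k] (n : ℕ) (p : k[X]) :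
    dX k (monomial n p) = monomial n (derivative p) := by
  ext1 j
  rw [coeff_dX, coeff_monomial, coeff_monomial]
  split_ifs <;> simp

/-- Chain rule: `δ (P(w, y)) = (∂P/∂X)(w, y) + (∂P/∂Y)(w, y) δ y` when `δ w = 1`. -/
theorem derivation_aeval {k L : Type*} [Field k] [CommRing L] [Algebra k L] [Algebra k[X] L]
    [IsScalarTower k k[X] L] (δ : Derivation k L L) (hw : δ (algebraMap k[X] L X) = 1)
    (y : L) (P : k[X][X]) :
    δ (aeval y P) = aeval y (dX k P) + aeval y (derivative P) * δ y := by
  have h : ∀ p : k[X], δ (algebraMap k[X] L p) = algebraMap k[X] L (derivative p) := by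
    intro p
    have h1 : ∀ q : k[X], algebraMap k[X] L q = aeval (algebraMap k[X] L X) q := fun q ↦ by
      rw [aeval_algebraMap_apply]; simp
    rw [h1 p, Derivation.map_aeval, hw, h1 (derivative p), smul_eq_mul, mul_one]
  induction P using Polynomial.induction_on' with
  | add p q hp hq =>
    simp only [map_add, hp, hq]
    ring
  | monomial n p =>
    simp only [dX_monomial, aeval_monomial, Derivation.leibniz, Derivation.leibniz_pow, h,
      derivative_monomial, map_mul, map_natCast, smul_eq_mul, nsmul_eq_mul]
    ring

/-- The operator `a X ∂/∂X` does not raise degrees, so the cofactor of a polynomial that is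
Darboux for it is constant. -/
theorem const_of_log_deriv {k : Type*} [Field k] {a : k} {p f : k[X]} (hp : p ≠ 0)
    (h : C a * X * derivative p = f * p) : ∃ c, f = C c := by
  refine ⟨f.coeff 0, eq_C_of_natDegree_eq_zero ?_⟩
  by_contra hf
  have hf0 : f ≠ 0 := by rintro rfl; simp at hf
  have h1 := congrArg natDegree h
  rw [natDegree_mul hf0 hp] at h1
  have h2 : (C a * X * derivative p).natDegree ≤ p.natDegree := by
    rw [natDegree_le_iff_coeff_eq_zero]
    rintro (_ | N) hN
    · simp at hN
    · rw [mul_assoc, coeff_C_mul, coeff_X_mul, coeff_derivative,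
        coeff_eq_zero_of_natDegree_lt hN]; simp
  omega

/-- Darboux polynomials of the vector field `X (1 + Y) ∂/∂X + a Y (1 + ε X) ∂/∂Y` with `a ≠ 0`,
`ε ∈ {0, 1}`, other than those divisible by a coordinate or free of `Y`: none exist for `ε = 0`,
and for `ε = 1` each is divisible by `Y - X`.

With `q i j` the coefficient of `X ^ i * Y ^ j` and `m` the degree in `Y`, the cofactor is first
shown to be a constant `l`; comparing coefficients gives `l = a * m`. For `ε = 0` descending
induction on `j` shows `P` does not involve `X`, and `q 0 0 ≠ 0` then forces `l = 0`. For `ε = 1`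
the total degree of `P` is at most `m`, the pure power `X ^ m` occurs and yields `l = m`, so that
`a = 1` and `P(X, X)` satisfies an equation whose only polynomial solution is `0`. -/
theorem darboux {k : Type*} [Field k] [CharZero k] {a ε : k} (hε : ε = 0 ∨ ε = 1)
    {P Λ : k[X][X]} (hX : ¬ X ∣ P) (hC : ¬ C X ∣ P) (hdeg : P.natDegree ≠ 0) (ha : a ≠ 0)
    (h : C X * (1 + X) * dX k P + C (C a * (1 + C ε * X)) * X * derivative P = Λ * P) :
    ε = 1 ∧ (X - C X) ∣ P := by
  have hP0 : P ≠ 0 := by rintro rfl; simp at hdeg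
  set m := P.natDegree with hm
  have hpm : P.coeff m ≠ 0 := by simpa [hm] using hP0
  have hp0 : P.coeff 0 ≠ 0 := fun h0 ↦ hX (X_dvd_iff.2 h0)
  have htop : ∀ j, m < j → P.coeff j = 0 := fun j hj ↦ coeff_eq_zero_of_natDegree_lt hj
  have hL : ∀ j, (Λ * P).coeff (j + 1) = X * derivative (P.coeff (j + 1))
      + X * derivative (P.coeff j) +
      C a * (1 + C ε * X) * (P.coeff (j + 1) * ((j : k[X]) + 1)) := by
    intro j
    rw [← h, coeff_add, mul_assoc, coeff_C_mul, add_mul, one_mul, coeff_add, coeff_X_mul,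
      mul_assoc, coeff_C_mul, coeff_X_mul, coeff_dX, coeff_dX, coeff_derivative]
    ring
  have hL0 : (Λ * P).coeff 0 = X * derivative (P.coeff 0) := by
    rw [← h, coeff_add, mul_assoc, coeff_C_mul, add_mul, one_mul, coeff_add, mul_assoc,
      coeff_C_mul]
    simp [coeff_dX]
  have hΛ : Λ.natDegree ≤ 1 := by
    by_cases hΛ0 : Λ = 0
    · simp [hΛ0]
    have h1 : (Λ * P).natDegree ≤ m + 1 := by
      rw [natDegree_le_iff_coeff_eq_zero]
      rintro (_ | N) hN
      · omega
      · rw [hL, htop (N + 1) (by omega), htop N (by omega)]; simp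
    rw [natDegree_mul hΛ0 hP0] at h1
    omega
  obtain ⟨Λ₁, Λ₀, rfl⟩ := exists_eq_X_add_C_of_natDegree_le_one hΛ
  have hR : ∀ j, ((C Λ₁ * X + C Λ₀) * P).coeff (j + 1)
      = Λ₁ * P.coeff j + Λ₀ * P.coeff (j + 1) := by
    intro j
    rw [add_mul, coeff_add, mul_assoc, coeff_C_mul, coeff_X_mul, coeff_C_mul]
  have hR0 : ((C Λ₁ * X + C Λ₀) * P).coeff 0 = Λ₀ * P.coeff 0 := by simp [add_mul, mul_assoc]
  obtain ⟨l, rfl⟩ : ∃ c, Λ₀ = C c := by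
    refine const_of_log_deriv (a := 1) hp0 ?_
    rw [← hR0, hL0]; simp
  obtain ⟨ν, rfl⟩ : ∃ c, Λ₁ = C c := by
    refine const_of_log_deriv (a := 1) hpm ?_
    have := hR m
    rw [hL, htop (m + 1) (by omega)] at this
    simpa using this
  set q : ℕ → ℕ → k := fun i j ↦ (P.coeff j).coeff i with hq
  have e00 : l * q 0 0 = 0 := by
    have := congrArg (fun p ↦ coeff p 0) (hR0.symm.trans hL0)
    simpa [mul_coeff_zero] using this
  have ei0 : ∀ i : ℕ, (i : k) * q i 0 = l * q i 0 := by
    rintro (_ | i)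
    · rw [e00]; simp
    have := congrArg (fun p ↦ coeff p (i + 1)) (hR0.symm.trans hL0)
    simp only [coeff_C_mul, coeff_X_mul, coeff_derivative] at this
    simp only [hq]; push_cast; linear_combination -this
  have e0j : ∀ j : ℕ, a * (j + 1) * q 0 (j + 1) = l * q 0 (j + 1) + ν * q 0 j := by
    intro j
    have := congrArg (fun p ↦ coeff p 0) ((hR j).symm.trans (hL j))
    simp [mul_coeff_zero] at this
    simp only [hq]; linear_combination -this
  have eij : ∀ i j : ℕ, (i + 1 : k) * q (i + 1) (j + 1) + (i + 1) * q (i + 1) j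
      + a * (j + 1) * (q (i + 1) (j + 1) + ε * q i (j + 1))
      = l * q (i + 1) (j + 1) + ν * q (i + 1) j := by
    intro i j
    have := congrArg (fun p ↦ coeff p (i + 1)) ((hR j).symm.trans (hL j))
    have e : C a * (1 + C ε * X) * (P.coeff (j + 1) * ((j : k[X]) + 1))
        = C (a * (j + 1)) * P.coeff (j + 1) + C (a * (j + 1) * ε) * (X * P.coeff (j + 1)) := by
      simp only [map_mul, map_add, map_one, map_natCast]; ring
    rw [e] at this
    simp only [coeff_add, coeff_C_mul, coeff_X_mul, coeff_derivative] at this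
    simp only [hq]; linear_combination -this
  have hqtop : ∀ i j, m < j → q i j = 0 := fun i j hj ↦ by simp [hq, htop j hj]
  -- `P(0, Y) ≠ 0`, and the equation just above its leading coefficient forces `ν = 0`
  obtain rfl : ν = 0 := by
    set p₀ := P.map (constantCoeff (R := k)) with hp₀
    have hne : p₀ ≠ 0 := by
      intro h0
      refine hC ((C_dvd_iff_dvd_coeff _ _).2 fun j ↦ X_dvd_iff.2 ?_)
      simpa [hp₀] using congrArg (fun p ↦ coeff p j) h0
    have h1 : ∀ j, p₀.coeff j = q 0 j := fun j ↦ by simp [hp₀, hq]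
    have h2 := e0j p₀.natDegree
    rw [← h1, ← h1, coeff_eq_zero_of_natDegree_lt (Nat.lt_succ_self _)] at h2
    simpa [hne] using h2
  -- the leading coefficient in `Y` is constant
  have hqm : ∀ i, q (i + 1) m = 0 := by
    intro i
    have := eij i m
    rw [hqtop _ (m + 1) (by omega), hqtop _ (m + 1) (by omega)] at this
    have hi : (i + 1 : k) ≠ 0 := by exact_mod_cast Nat.succ_ne_zero i
    simpa [hi] using this
  have hq0m : q 0 m ≠ 0 := by
    intro h0
    apply hpm
    ext (_ | i)
    · simpa using h0
    · simpa using hqm i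
  have hlam : l = a * m := by
    obtain ⟨m', hm'⟩ := Nat.exists_eq_succ_of_ne_zero hdeg
    have := e0j m'
    rw [← Nat.succ_eq_add_one, ← hm', zero_mul, add_zero] at this
    rw [← mul_right_cancel₀ hq0m this, hm']; push_cast; ring
  have hm0 : (m : k) ≠ 0 := by exact_mod_cast hdeg
  rcases hε with rfl | rfl
  · exfalso
    have hz : ∀ d j, j + d = m → ∀ i, q (i + 1) j = 0 := by
      intro d
      induction d with
      | zero => rintro j rfl i; exact hqm i
      | succ d ih =>
        intro j hj i
        have := eij i j
        rw [ih (j + 1) (by omega) i] at this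
        have hi : (i + 1 : k) ≠ 0 := by exact_mod_cast Nat.succ_ne_zero i
        simpa [hi] using this
    have h00 : q 0 0 ≠ 0 := by
      intro h0
      apply hp0
      ext (_ | i)
      · simpa using h0
      · simpa using hz m 0 (by simp) i
    have : l = 0 := by simpa [h00] using e00
    rw [hlam] at this
    simp [ha, hm0] at this
  · refine ⟨rfl, ?_⟩
    have hz : ∀ d j, j + d = m → ∀ i, m < i + j → q i j = 0 := by
      intro d
      induction d with
      | zero =>
        rintro j rfl (_ | i) hi
        · omega
        · exact hqm i
      | succ d ih =>
        rintro j hj (_ | i) hi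
        · omega
        have := eij i j
        rw [ih (j + 1) (by omega) (i + 1) (by omega), ih (j + 1) (by omega) i (by omega)] at this
        have hi : (i + 1 : k) ≠ 0 := by exact_mod_cast Nat.succ_ne_zero i
        simpa [hi] using this
    -- the homogeneous part of degree `m` is a nonzero multiple of `(Y - a X) ^ m`
    have hdiag : ∀ i j, i + j = m → q i j ≠ 0 := by
      intro i
      induction i with
      | zero =>
        intro j hj
        obtain rfl : j = m := by omega
        exact hq0m
      | succ i ih =>
        intro j hj h0
        have := eij i j
        rw [hz (m - (j + 1)) (j + 1) (by omega) (i + 1) (by omega), h0] at this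
        have hj1 : (j + 1 : k) ≠ 0 := by exact_mod_cast Nat.succ_ne_zero j
        simp [ha, hj1, ih (j + 1) (by omega)] at this
    have hlm : l = m := (mul_right_cancel₀ (hdiag m 0 rfl) (ei0 m)).symm
    obtain rfl : a = 1 := by
      rw [hlam] at hlm
      exact mul_right_cancel₀ hm0 (by rw [hlm, one_mul])
    -- `P(X, X)` is annihilated by `X (1 + X) d/dX - m`, which sends `X ^ d` with `d ≠ 0` to a
    -- polynomial of degree `d + 1`
    rw [dvd_iff_isRoot, IsRoot]
    set R := P.eval X with hRdef
    have hchain : derivative R = (dX k P).eval X + (derivative P).eval X := by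
      have := derivation_aeval (L := k[X]) (derivative' (R := k)) (by simp) X P
      simpa using this
    have hRe : X * (1 + X) * derivative R = C (m : k) * R := by
      have := congrArg (eval X) h
      simp only [hlm, eval_add, eval_mul, eval_C, eval_X, eval_one, map_one, map_zero, one_mul,
        zero_mul, zero_add] at this
      rw [hchain, hRdef]
      linear_combination this
    by_contra hR0
    have h1 := congrArg (fun p ↦ coeff p (R.natDegree + 1)) hRe
    have e : X * (1 + X) * derivative R = X * derivative R + X * (X * derivative R) := by ring
    simp only [e, coeff_add, coeff_X_mul, coeff_derivative, coeff_C_mul,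
      coeff_eq_zero_of_natDegree_lt (Nat.lt_succ_self R.natDegree)] at h1
    rcases hd : R.natDegree with _ | d
    · rw [eq_C_of_natDegree_eq_zero hd] at hRe
      have hc : R.coeff 0 = 0 := by simpa [hdeg] using hRe
      apply hR0
      rw [eq_C_of_natDegree_eq_zero hd, hc, map_zero]
    · rw [hd, coeff_X_mul, coeff_derivative, ← hd] at h1
      have hd1 : (d + 1 : k) ≠ 0 := by exact_mod_cast Nat.succ_ne_zero d
      simp [hd1, hR0] at h1

/-! ### Relations between two elements of a differential field -/

/-- Over a unique factorization domain the relations satisfied by an algebraic element form a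
principal ideal: by the Gauss lemma a primitive multiple of the minimal polynomial generates it. -/
theorem exists_generator {R L : Type*} [CommRing R] [IsDomain R] [UniqueFactorizationMonoid R]
    [Field L] [Algebra R L] [FaithfulSMul R L] {y : L} (hy : IsAlgebraic R y) :
    ∃ P : R[X], Irreducible P ∧ P.natDegree ≠ 0 ∧ aeval y P = 0 ∧
      ∀ Q : R[X], aeval y Q = 0 → P ∣ Q := by
  classical
  let _ : NormalizedGCDMonoid R := Classical.choice inferInstance
  let _ := FractionRing.liftAlgebra R L
  have hprime : (RingHom.ker (aeval (R := R) y)).IsPrime := RingHom.ker_isPrime _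
  have hne : RingHom.ker (aeval (R := R) y) ≠ ⊥ := by
    obtain ⟨p, hp, hp0⟩ := hy
    intro h
    exact hp (by simpa [h] using (RingHom.mem_ker (f := aeval (R := R) y)).2 hp0)
  obtain ⟨P, hPmem, hP⟩ := hprime.exists_mem_prime_of_ne_bot hne
  have hP0 : aeval y P = 0 := hPmem
  have hdeg : P.natDegree ≠ 0 := by
    intro h
    rw [eq_C_of_natDegree_eq_zero h, aeval_C] at hP0
    apply hP.ne_zero
    rw [eq_C_of_natDegree_eq_zero h,
      (FaithfulSMul.algebraMap_injective R L) (hP0.trans (map_zero _).symm), map_zero]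
  have hprim : P.IsPrimitive := hP.irreducible.isPrimitive hdeg
  refine ⟨P, hP.irreducible, hdeg, hP0, fun Q hQ ↦ ?_⟩
  have hirr := (hprim.irreducible_iff_irreducible_map_fraction_map
    (K := FractionRing R)).1 hP.irreducible
  rw [hprim.dvd_iff_fraction_map_dvd_fraction_map (FractionRing R)]
  have h1 : minpoly (FractionRing R) y ∣ P.map (algebraMap R (FractionRing R)) :=
    minpoly.dvd _ _ (by rwa [aeval_map_algebraMap])
  have h2 : minpoly (FractionRing R) y ∣ Q.map (algebraMap R (FractionRing R)) :=
    minpoly.dvd _ _ (by rwa [aeval_map_algebraMap])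
  have hu : ¬ IsUnit (minpoly (FractionRing R) y) := minpoly.not_isUnit _ _
  exact ((hirr.dvd_iff.1 h1).resolve_left hu).dvd.trans h2

/-- In characteristic zero, elements algebraic over the constants are constants. -/
theorem derivation_ne_zero_transcendental {k L : Type*} [Field k] [CharZero k] [Field L]
    [Algebra k L] (δ : Derivation k L L) {w : L} (hw : δ w ≠ 0) : Transcendental k w := by
  intro h
  have h1 : (minpoly k w).Separable := (minpoly.irreducible h.isIntegral).separable
  have h2 := h1.aeval_derivative_ne_zero (minpoly.aeval k w)
  have h3 : δ (aeval w (minpoly k w)) = 0 := by rw [minpoly.aeval, map_zero]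
  rw [Derivation.map_aeval, smul_eq_mul] at h3
  exact (mul_ne_zero h2 hw) h3

/-- The one-variable case: if `y ≠ 0` is algebraic over `k(w)` and its logarithmic derivative
satisfies `(1 + y) δy / y = a (1 + ε w) / w` with `a ≠ 0` constant, then `ε = 1` and `y = w`. The
irreducible relation between `w` and `y` is a Darboux polynomial of the vector field in `darboux`,
since that vector field is tangent to the curve traced by `(w, y)`. -/
theorem one_variable {k L : Type*} [Field k] [CharZero k] [Field L] [Algebra k L]
    (δ : Derivation k L L) {w y : L} (hw : δ w = 1) (hy0 : y ≠ 0) {a ε : k}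
    (hε : ε = 0 ∨ ε = 1) (ha : a ≠ 0)
    (hy : ∃ P : k[X][X], P ≠ 0 ∧ eval₂ ((aeval w : k[X] →ₐ[k] L) : k[X] →+* L) y P = 0)
    (h : (1 + y) * w * δ y = algebraMap k L a * (1 + algebraMap k L ε * w) * y) :
    ε = 1 ∧ y = w := by
  let _ : Algebra k[X] L := ((aeval w : k[X] →ₐ[k] L) : k[X] →+* L).toAlgebra
  have hmap : ∀ p : k[X], algebraMap k[X] L p = aeval w p := fun _ ↦ rfl
  have : IsScalarTower k k[X] L := .of_algebraMap_eq fun c ↦ by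
    rw [hmap]; simp
  have htr : Transcendental k w :=
    derivation_ne_zero_transcendental δ (by rw [hw]; exact one_ne_zero)
  have : FaithfulSMul k[X] L := (faithfulSMul_iff_algebraMap_injective _ _).2
    (transcendental_iff_injective.1 htr)
  obtain ⟨P, hirr, hdeg, hP0, hgen⟩ := exists_generator (R := k[X]) (y := y) hy
  have hchain := derivation_aeval δ (by rw [hmap, aeval_X, hw]) y P
  rw [hP0, map_zero] at hchain
  have hmem : aeval y (C X * (1 + X) * dX k P + C (C a * (1 + C ε * X)) * X * derivative P)
      = 0 := by
    simp only [map_add, map_mul, aeval_C, aeval_X, map_one, hmap]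
    linear_combination aeval y (derivative P) * (-h) - w * (1 + y) * hchain
  obtain ⟨Λ, hΛ⟩ := hgen _ hmem
  have hX : ¬ X ∣ P := by
    intro hd
    obtain ⟨c, hc⟩ := (irreducible_X).dvd_symm hirr hd
    apply hy0
    have := congrArg (aeval y) hc
    rwa [aeval_X, map_mul, hP0, zero_mul] at this
  have hC : ¬ C X ∣ P := fun hd ↦ not_isUnit_X (hirr.isPrimitive hdeg _ hd)
  obtain ⟨hε1, hd⟩ := darboux hε hX hC hdeg ha (hΛ.trans (mul_comm _ _))
  refine ⟨hε1, ?_⟩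
  obtain ⟨c, hc⟩ := ((prime_X_sub_C (X : k[X])).irreducible).dvd_symm hirr hd
  have := congrArg (aeval y) hc
  rw [map_sub, aeval_X, aeval_C, hmap, aeval_X, map_mul, hP0, zero_mul] at this
  exact sub_eq_zero.1 this

/-! ### Extension of derivations -/

/-- Derivations extend along formally étale maps. -/
theorem exists_derivation_ext {R A L : Type*} [CommRing R] [CommRing A] [CommRing L] [Algebra R A]
    [Algebra A L] [Algebra R L] [IsScalarTower R A L] [Algebra.FormallyEtale A L]
    (d : Derivation R A L) : ∃ δ : Derivation R L L, ∀ a, δ (algebraMap A L a) = d a := by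
  refine ⟨((d.liftKaehlerDifferential.liftBaseChange L) ∘ₗ
    (KaehlerDifferential.tensorKaehlerEquivOfFormallyEtale R A L).symm.toLinearMap).compDer
      (KaehlerDifferential.D R L), fun a ↦ ?_⟩
  simp [KaehlerDifferential.tensorKaehlerEquivOfFormallyEtale_symm_D_algebraMap]

/-- Derivations extend in at most one way along formally unramified maps. -/
theorem derivation_eq_zero_of_formallyUnramified {R A L M : Type*} [CommRing R] [CommRing A]
    [CommRing L] [Algebra R A] [Algebra A L] [Algebra R L] [IsScalarTower R A L]
    [Algebra.FormallyUnramified A L] [AddCommGroup M] [Module R M] [Module L M]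
    (δ : Derivation R L M) (h : ∀ a, δ (algebraMap A L a) = 0) (x : L) : δ x = 0 := by
  let _ : Module A M := Module.compHom M (algebraMap A L)
  have hs : ∀ (a : A) (m : M), a • m = algebraMap A L a • m := fun _ _ ↦ rfl
  have : IsScalarTower A L M := ⟨fun a l m ↦ by rw [hs, Algebra.smul_def, mul_smul]⟩
  let δ' : Derivation A L M :=
    { toFun := δ
      map_add' := map_add δ
      map_smul' := fun a x ↦ by
        rw [Algebra.smul_def, δ.leibniz, h, smul_zero, add_zero, hs]; rfl
      map_one_eq_zero' := by simp
      leibniz' := δ.leibniz }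
  have : δ x = δ'.liftKaehlerDifferential (KaehlerDifferential.D A L x) := by
    rw [Derivation.liftKaehlerDifferential_comp_D]; rfl
  rw [this, Subsingleton.elim (KaehlerDifferential.D A L x) 0, map_zero]

theorem derivation_inv {k L : Type*} [CommRing k] [Field L] [Algebra k L] (δ : Derivation k L L)
    {y : L} (h : δ y = 0) : δ y⁻¹ = 0 := by
  rw [Derivation.leibniz_inv, h, smul_zero]

/-- The field of constants of a derivation. -/
def derivConst {k L : Type*} [CommRing k] [Field L] [Algebra k L] (δ : Derivation k L L) :
    Subfield L where
  carrier := {x | δ x = 0}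
  mul_mem' := by intro a b ha hb; simp_all
  one_mem' := by simp
  add_mem' := by intro a b ha hb; simp_all
  zero_mem' := by simp
  neg_mem' := by intro a ha; simp_all
  inv_mem' := by intro a ha; exact derivation_inv δ ha

/-- A derivation, regarded as linear over its field of constants. -/
def derivConstDer {k L : Type*} [CommRing k] [Field L] [Algebra k L] (δ : Derivation k L L) :
    Derivation (derivConst δ) L L where
  toFun := δ
  map_add' := map_add δ
  map_smul' a x := by
    have : δ a = 0 := a.2
    simp [Algebra.smul_def, Subfield.algebraMap_ofSubfield, this]
  map_one_eq_zero' := by simp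
  leibniz' := δ.leibniz

theorem derivation_eq_zero_of_X {ι k L M : Type*} [Field k] [Field L] [Algebra k L]
    [Algebra (MvPolynomial ι k) L] [IsScalarTower k (MvPolynomial ι k) L]
    [Algebra.FormallyEtale (MvPolynomial ι k) L] [AddCommGroup M] [Module k M] [Module L M]
    (δ : Derivation k L M)
    (h : ∀ i, δ (algebraMap (MvPolynomial ι k) L (MvPolynomial.X i)) = 0) (u : L) : δ u = 0 := by
  refine derivation_eq_zero_of_formallyUnramified (A := MvPolynomial ι k) δ (fun a ↦ ?_) u
  induction a using MvPolynomial.induction_on with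
  | C c =>
    rw [← MvPolynomial.algebraMap_eq, ← IsScalarTower.algebraMap_apply, Derivation.map_algebraMap]
  | add p q hp hq => rw [map_add, map_add, hp, hq, add_zero]
  | mul_X p i hp => rw [map_mul, Derivation.leibniz, hp, h, smul_zero, smul_zero, add_zero]

/-! ### Adjoining a solution -/

/-- The differentiated form of `(1 + e * x) * g = x` with `T e = 0`. It shows that `T g` depends on
`T` only through `T x`, which is what makes the vector fields in `step_aux` commute. -/
theorem derivation_of_lambert {k L : Type*} [CommRing k] [Field L] [Algebra k L]
    (T : Derivation k L L) {e x g : L} (he : T e = 0) (h : (1 + e * x) * g = x) :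
    (1 + e * x) * T g = T x * (1 - e * g) := by
  have := congrArg T h
  simp only [Derivation.leibniz, map_add, Derivation.map_one_eq_zero, smul_eq_mul, he] at this
  linear_combination this

theorem derivation_sum_apply {ι k L : Type*} [Fintype ι] [Field k] [Field L] [Algebra k L]
    (E : ι → Derivation k L L) (u : L) : (∑ j, E j) u = ∑ j, E j u := by
  have := congrFun
    (map_sum (Derivation.coeFnAddMonoidHom (R := k) (A := L) (M := L)) E Finset.univ) u
  rw [Finset.sum_apply] at this
  exact this

/-- Let `L` be algebraic (formally étale) over `k[X_i]`, with `x i` the images of the variables, and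
let `D` be a derivation with constants `k` and `(1 + ε i * x i) * D (x i) = x i`. A nonzero solution
of `(1 + y) * D y = y` that is algebraic over `k[X_i]` is one of the `x i` with `ε i = 1`.

Write `D = ∑ E j` with `E j = D (x j) ∂/∂x_j`. The `E j` commute with `D`, so each `E j y / D y` is
a constant `c j ∈ k`, and `∑ c j = 1`. If `c j ≠ 0` then `one_variable` applies to `y` and `x j`
over the field of constants of `∂/∂x_j`. -/
theorem step_aux {ι k L : Type*} [Fintype ι] [Field k] [CharZero k] [Field L] [Algebra k L]
    [Algebra (MvPolynomial ι k) L] [IsScalarTower k (MvPolynomial ι k) L]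
    [Algebra.FormallyEtale (MvPolynomial ι k) L] [FaithfulSMul (MvPolynomial ι k) L]
    (D : Derivation k L L) (hconst : ∀ u, D u = 0 → ∃ c, algebraMap k L c = u)
    {ε : ι → k} (hε : ∀ i, ε i = 0 ∨ ε i = 1) {x : ι → L}
    (hx : ∀ i, algebraMap (MvPolynomial ι k) L (MvPolynomial.X i) = x i)
    (hDx : ∀ i, (1 + algebraMap k L (ε i) * x i) * D (x i) = x i)
    {y : L} (hy0 : y ≠ 0) (hDy : (1 + y) * D y = y) (hy : IsAlgebraic (MvPolynomial ι k) y) :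
    ∃ i, ε i = 1 ∧ y = x i := by
  classical
  have hinj : Function.Injective (algebraMap (MvPolynomial ι k) L) :=
    FaithfulSMul.algebraMap_injective _ _
  have hx0 : ∀ i, x i ≠ 0 := fun i h ↦ by
    rw [← hx, map_eq_zero_iff _ hinj] at h
    exact MvPolynomial.X_ne_zero i h
  have hx1 : ∀ i, 1 + algebraMap k L (ε i) * x i ≠ 0 := fun i h ↦ hx0 i <| by
    rw [← hDx, h, zero_mul]
  have hy1 : 1 + y ≠ 0 := fun h ↦ hy0 <| by rw [← hDy, h, zero_mul]
  have hv0 : D y ≠ 0 := fun h ↦ hy0 <| by rw [← hDy, h, mul_zero]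
  have hext : ∀ j, ∃ δ : Derivation k L L, ∀ i, δ (x i) = if i = j then 1 else 0 := by
    intro j
    obtain ⟨δ, hδ⟩ := exists_derivation_ext (L := L)
      (MvPolynomial.mkDerivation k (fun i : ι ↦ if i = j then (1 : L) else 0))
    exact ⟨δ, fun i ↦ by rw [← hx, hδ, MvPolynomial.mkDerivation_X]⟩
  choose d hd using hext
  -- `d j` is `∂/∂x_j` on `L`
  set E : ι → Derivation k L L := fun j ↦ D (x j) • d j with hE
  have hEx : ∀ i j, E j (x i) = if i = j then D (x i) else 0 := by
    intro i j
    rw [hE, Derivation.smul_apply, hd]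
    split_ifs with h
    · rw [h, smul_eq_mul, mul_one]
    · rw [smul_zero]
  have hsum : ∀ u, D u = ∑ j, E j u := by
    intro u
    have := derivation_eq_zero_of_X (D - ∑ j, E j) (fun i ↦ by
      rw [hx, Derivation.sub_apply, derivation_sum_apply]
      simp [hEx]) u
    rw [Derivation.sub_apply, derivation_sum_apply] at this
    exact sub_eq_zero.1 this
  have hcomm : ∀ j u, D (E j u) = E j (D u) := by
    intro j u
    have := derivation_eq_zero_of_X ⁅D, E j⁆ (fun i ↦ by
      have h1 := derivation_of_lambert D (D.map_algebraMap _) (hDx i)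
      have h2 := derivation_of_lambert (E j) ((E j).map_algebraMap _) (hDx i)
      rw [hx, Derivation.commutator_apply]
      apply mul_left_cancel₀ (hx1 i)
      rw [mul_sub, h2, hEx]
      split_ifs
      · rw [h1]; ring
      · simp) u
    rw [Derivation.commutator_apply] at this
    exact sub_eq_zero.1 this
  have hval : ∀ j, ∃ c, algebraMap k L c = E j y / D y := by
    intro j
    apply hconst
    have hDy' : (1 + 1 * y) * D y = y := by rw [one_mul, hDy]
    have h1 := derivation_of_lambert D D.map_one_eq_zero hDy'
    have h2 := derivation_of_lambert (E j) (E j).map_one_eq_zero hDy'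
    rw [← hcomm] at h2
    rw [Derivation.leibniz_div]
    have : D y * D (E j y) - E j y * D (D y) = 0 := by
      apply mul_left_cancel₀ hy1
      linear_combination D y * h2 - E j y * h1
    simp [smul_eq_mul, this]
  choose c hc using hval
  obtain ⟨j, hj⟩ : ∃ j, c j ≠ 0 := by
    by_contra! h
    apply hv0
    rw [hsum]
    refine Finset.sum_eq_zero fun j _ ↦ ?_
    have := hc j
    rw [h, map_zero, eq_comm, div_eq_zero_iff] at this
    exact this.resolve_right hv0
  set k' := derivConst (d j) with hk'
  have hmem : ∀ t, algebraMap k L t ∈ k' := fun t ↦ (d j).map_algebraMap t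
  let r : k →+* k' := (algebraMap k L).codRestrict k' hmem
  have : CharZero k' := charZero_of_injective_ringHom r.injective
  have hr : ∀ t, algebraMap k' L (r t) = algebraMap k L t := fun t ↦ rfl
  -- a map from `k[X_i]` to one-variable polynomials, sending `X_j` to `X` and the other variables
  -- to constants of `∂/∂x_j`
  let φ : MvPolynomial ι k →+* k'[X] := MvPolynomial.eval₂Hom (C.comp r)
    fun i ↦ if h : i = j then X else C ⟨x i, by
      change d j (x i) = 0
      rw [hd, if_neg h]⟩
  have hφ : ((aeval (x j) : k'[X] →ₐ[k'] L) : k'[X] →+* L).comp φ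
      = algebraMap (MvPolynomial ι k) L := by
    refine MvPolynomial.ringHom_ext (fun t ↦ ?_) fun i ↦ ?_
    · simp only [φ, RingHom.comp_apply, MvPolynomial.coe_eval₂Hom, MvPolynomial.eval₂_C,
        RingHom.coe_coe, aeval_C, hr]
      rw [← MvPolynomial.algebraMap_eq, ← IsScalarTower.algebraMap_apply]
    · simp only [φ, RingHom.comp_apply, MvPolynomial.coe_eval₂Hom, MvPolynomial.eval₂_X,
        RingHom.coe_coe, hx]
      split_ifs with h
      · rw [aeval_X, h]
      · rw [aeval_C]; rfl
  have hφi : Function.Injective φ := by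
    refine Function.Injective.of_comp
      (f := ((aeval (x j) : k'[X] →ₐ[k'] L) : k'[X] →+* L)) ?_
    rw [← RingHom.coe_comp, hφ]
    exact hinj
  obtain ⟨P, hP0, hP⟩ := hy
  have key := one_variable (derivConstDer (d j)) (w := x j) (y := y) (a := r (c j)) (ε := r (ε j))
    (by change d j (x j) = 1; rw [hd, if_pos rfl]) hy0
    ((hε j).imp (by simp +contextual) (by simp +contextual))
    (by simpa using hj)
    ⟨P.map φ, (Polynomial.map_ne_zero_iff hφi).2 hP0, by
      rw [eval₂_map, hφ]; exact hP⟩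
    (by
      change (1 + y) * x j * d j y = _
      rw [hr, hr, hc]
      have h1 : E j y = D (x j) * d j y := rfl
      field_simp
      linear_combination (-(1 + y) * D y * d j y) * hDx j
        - (1 + algebraMap k L (ε j) * x j) * (1 + y) * D y * h1
        + (1 + algebraMap k L (ε j) * x j) * E j y * hDy)
  exact ⟨j, r.injective (key.1.trans r.map_one.symm), key.2⟩

/-- Adjoining one more solution: a nonzero solution `y` of `(1 + y) * D y = y`, distinct from the
`x i` satisfying the same equation, is transcendental over an algebraically independent family of
solutions of `(1 + ε i * x i) * D (x i) = x i`. This is `step_aux` applied in the relative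
algebraic closure `L` of `k(x)` in `K`, to which `D` restricts. -/
theorem step {ι k K : Type*} [Fintype ι] [Field k] [CharZero k] [Field K] [Algebra k K]
    (D : Derivation k K K) (hconst : ∀ u, D u = 0 → ∃ c, algebraMap k K c = u)
    {ε : ι → k} (hε : ∀ i, ε i = 0 ∨ ε i = 1) {x : ι → K} (hx : AlgebraicIndependent k x)
    (hDx : ∀ i, (1 + algebraMap k K (ε i) * x i) * D (x i) = x i)
    {y : K} (hy0 : y ≠ 0) (hDy : (1 + y) * D y = y) (hne : ∀ i, ε i = 1 → y ≠ x i) :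
    Transcendental (Algebra.adjoin k (Set.range x)) y := by
  intro halg
  let _ : Algebra (MvPolynomial ι k) K := (MvPolynomial.aeval x).toAlgebra
  have hA : ∀ p, algebraMap (MvPolynomial ι k) K p = MvPolynomial.aeval x p := fun _ ↦ rfl
  have : IsScalarTower k (MvPolynomial ι k) K := .of_algebraMap_eq' (by ext; simp [hA])
  have : FaithfulSMul (MvPolynomial ι k) K :=
    (faithfulSMul_iff_algebraMap_injective _ _).2 hx
  replace halg : IsAlgebraic (MvPolynomial ι k) y :=
    halg.of_ringHom_of_comp_eq (hx.aevalEquiv : MvPolynomial ι k →+* _) (RingHom.id K)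
      hx.aevalEquiv.surjective Function.injective_id (by ext <;> simp [hA])
  let F := FractionRing (MvPolynomial ι k)
  let _ : Algebra F K := FractionRing.liftAlgebra (MvPolynomial ι k) K
  have : IsScalarTower (MvPolynomial ι k) F K := FractionRing.isScalarTower_liftAlgebra _ K
  have : IsScalarTower k F K := inferInstance
  let L := algebraicClosure F K
  have : CharZero F := charZero_of_injective_algebraMap (algebraMap k F).injective
  have : Algebra.IsAlgebraic F L := inferInstance
  have : Algebra.FormallyEtale F L := Algebra.FormallyEtale.of_isSeparable F L
  have : Algebra.FormallyEtale (MvPolynomial ι k) F :=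
    Algebra.FormallyEtale.of_isLocalization (nonZeroDivisors (MvPolynomial ι k))
  have : IsScalarTower (MvPolynomial ι k) F L := inferInstance
  have : Algebra.FormallyEtale (MvPolynomial ι k) L := .comp _ F L
  have : IsScalarTower k (MvPolynomial ι k) L := .of_algebraMap_eq fun c ↦ by
    rw [IsScalarTower.algebraMap_apply (MvPolynomial ι k) F L,
      ← IsScalarTower.algebraMap_apply k (MvPolynomial ι k) F]
    exact Subtype.ext (IsScalarTower.algebraMap_apply k F K c)
  have : IsScalarTower F L K := inferInstance
  have : IsScalarTower (MvPolynomial ι k) L K := .of_algebraMap_eq fun p ↦ by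
    rw [IsScalarTower.algebraMap_apply (MvPolynomial ι k) F L,
      ← IsScalarTower.algebraMap_apply F L K, ← IsScalarTower.algebraMap_apply]
  have : IsScalarTower k L K := .of_algebraMap_eq fun c ↦ by
    rw [IsScalarTower.algebraMap_apply k (MvPolynomial ι k) L,
      ← IsScalarTower.algebraMap_apply _ L K, ← IsScalarTower.algebraMap_apply]
  have : FaithfulSMul (MvPolynomial ι k) L := (faithfulSMul_iff_algebraMap_injective _ _).2 <| by
    refine Function.Injective.of_comp (f := algebraMap L K) ?_
    rw [← RingHom.coe_comp, ← IsScalarTower.algebraMap_eq]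
    exact hx
  let X' : ι → L := fun i ↦ algebraMap (MvPolynomial ι k) L (MvPolynomial.X i)
  have hX' : ∀ i, (X' i : K) = x i := fun i ↦ by
    change algebraMap L K (X' i) = x i
    rw [← IsScalarTower.algebraMap_apply, hA, MvPolynomial.aeval_X]
  have hx0 : ∀ i, x i ≠ 0 := fun i ↦ hx.ne_zero i
  have hx1 : ∀ i, 1 + algebraMap k K (ε i) * x i ≠ 0 := fun i h ↦ hx0 i <| by
    rw [← hDx, h, zero_mul]
  obtain ⟨DL, hDL⟩ := exists_derivation_ext (L := L)
    (MvPolynomial.mkDerivation k (fun i : ι ↦ X' i / (1 + algebraMap k L (ε i) * X' i)))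
  replace hDL : ∀ i, (DL (X' i) : K) = D (x i) := fun i ↦ by
    rw [hDL, MvPolynomial.mkDerivation_X]
    apply mul_left_cancel₀ (hx1 i)
    rw [hDx]
    have : ((X' i / (1 + algebraMap k L (ε i) * X' i) : L) : K)
        = x i / (1 + algebraMap k K (ε i) * x i) := by
      push_cast
      rw [hX']
      rfl
    rw [this, mul_div_cancel₀ _ (hx1 i)]
  -- by uniqueness of extensions `DL` is the restriction of `D`
  have hDLD : ∀ u : L, (DL u : K) = D u := fun u ↦ by
    have := derivation_eq_zero_of_X
      ((Algebra.linearMap L K).compDer DL - D.compAlgebraMap L) (fun i ↦ by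
        change (DL (X' i) : K) - D (X' i) = 0
        rw [hDL, hX', sub_self]) u
    exact sub_eq_zero.1 this
  have hyL : y ∈ L := by
    rw [mem_algebraicClosure_iff]
    exact halg.extendScalars (IsFractionRing.injective _ F)
  obtain ⟨i, hi, hyi⟩ := step_aux DL (x := X') (y := ⟨y, hyL⟩) (fun u hu ↦ by
      obtain ⟨c, hc⟩ := hconst u (by rw [← hDLD, hu]; rfl)
      exact ⟨c, Subtype.ext hc⟩) hε (fun i ↦ rfl)
    (fun i ↦ Subtype.ext (by
      have := hDx i
      rw [← hDL, ← hX'] at this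
      exact this))
    (fun h ↦ hy0 (congrArg Subtype.val h))
    (Subtype.ext (by
      have := hDLD ⟨y, hyL⟩
      change (1 + y) * (DL ⟨y, hyL⟩ : K) = y
      rw [this]
      exact hDy))
    (halg.of_ringHom_of_comp_eq (RingHom.id _) (algebraMap L K) Function.surjective_id
      (algebraMap L K).injective rfl)
  exact hne i hi (by rw [← hX', ← hyi])

/-- The differential-algebraic form of the result: `z` with `D z = z`, together with distinct
nonzero solutions of `(1 + w) * D w = w`, is an algebraically independent family over the constants. -/
theorem algebraicIndependent_cons {k K : Type*} [Field k] [CharZero k] [Field K] [Algebra k K]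
    (D : Derivation k K K) (hconst : ∀ u, D u = 0 → ∃ c, algebraMap k K c = u)
    {z : K} (hz0 : z ≠ 0) (hDz : D z = z) {n : ℕ} {w : Fin n → K} (hw : Function.Injective w)
    (hw0 : ∀ i, w i ≠ 0) (hDw : ∀ i, (1 + w i) * D (w i) = w i) :
    AlgebraicIndependent k (Fin.cons z w : Fin (n + 1) → K) := by
  set f : Fin (n + 1) → K := Fin.cons z w with hf
  have key : ∀ s : Finset (Fin n),
      AlgebraicIndepOn k f (insert 0 (Fin.succ '' (s : Set (Fin n)))) := by
    intro s
    induction s using Finset.induction_on with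
    | empty =>
      rw [Finset.coe_empty, Set.image_empty, insert_empty_eq]
      refine (algebraicIndependent_singleton_iff ⟨0, rfl⟩).2 ?_
      exact derivation_ne_zero_transcendental D (w := z) (by rwa [hDz])
    | insert i s hi ih =>
      rw [Finset.coe_insert, Set.image_insert_eq, Set.insert_comm]
      refine AlgebraicIndepOn.insert ih ?_
      rw [Set.image_eq_range]
      -- `D z = z` is the equation with `ε = 0`, those of the `w i` have `ε = 1`
      let e : Fin (n + 1) → k := Fin.cons 0 fun _ ↦ 1
      have : Fintype ↑(insert 0 (Fin.succ '' (s : Set (Fin n)))) := Fintype.ofFinite _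
      refine step D hconst (ε := fun j : ↑(insert 0 (Fin.succ '' (s : Set (Fin n)))) ↦ e j)
        ?_ ih ?_ (hw0 i) (hDw i) ?_
      · rintro ⟨j, -⟩
        cases j using Fin.cases <;> simp [e]
      · rintro ⟨j, -⟩
        cases j using Fin.cases <;> simp [e, f, hDz, hDw]
      · rintro ⟨j, hj⟩ h1 h2
        cases j using Fin.cases with
        | zero => simp [e] at h1
        | succ j =>
          have : i = j := hw (by simpa [f] using h2)
          subst this
          simp [Fin.succ_ne_zero] at hj
          exact hi hj
  have h := key Finset.univ
  have hall : ∀ j, j ∈ insert 0 (Fin.succ '' ((Finset.univ : Finset (Fin n)) : Set (Fin n))) := by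
    intro j
    cases j using Fin.cases <;> simp
  exact h.comp (fun j ↦ ⟨j, hall j⟩) fun a b hab ↦ congrArg Subtype.val hab

end

/-! ### Holomorphic functions on a domain -/

/-- Meromorphic functions `F / G` on a connected open set with zero derivative are constant. -/
theorem eqOn_const_mul {U : Set ℂ} (hUo : IsOpen U) (hUc : IsPreconnected U) {F G : ℂ → ℂ}
    (hF : DifferentiableOn ℂ F U) (hG : DifferentiableOn ℂ G U) {x₀ : ℂ} (hx₀ : x₀ ∈ U)
    (hGx : G x₀ ≠ 0) (h : ∀ ζ ∈ U, G ζ * deriv F ζ = F ζ * deriv G ζ) :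
    ∃ c, Set.EqOn F (fun ζ ↦ c * G ζ) U := by
  refine ⟨F x₀ / G x₀, ?_⟩
  refine (hF.analyticOnNhd hUo).eqOn_of_preconnected_of_eventuallyEq
    ((hG.const_mul _).analyticOnNhd hUo) hUc hx₀ ?_
  have hd : ∀ ζ ∈ U, DifferentiableAt ℂ F ζ ∧ DifferentiableAt ℂ G ζ := fun ζ hζ ↦
    ⟨hF.differentiableAt (hUo.mem_nhds hζ), hG.differentiableAt (hUo.mem_nhds hζ)⟩
  have hev : ∀ᶠ ζ in nhds x₀, ζ ∈ U ∧ G ζ ≠ 0 :=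
    Filter.Eventually.and (hUo.mem_nhds hx₀) ((hd x₀ hx₀).2.continuousAt.eventually_ne hGx)
  obtain ⟨r, hr, hball⟩ := Metric.eventually_nhds_iff_ball.1 hev
  filter_upwards [Metric.ball_mem_nhds x₀ hr] with ζ hζ
  have hq := Metric.isOpen_ball.is_const_of_deriv_eq_zero (f := fun ζ ↦ F ζ / G ζ)
    (convex_ball x₀ r).isPreconnected
    (fun ξ hξ ↦ ((hd ξ (hball ξ hξ).1).1.div (hd ξ (hball ξ hξ).1).2
      (hball ξ hξ).2).differentiableWithinAt)
    (fun ξ hξ ↦ by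
      rw [deriv_fun_div (hd ξ (hball ξ hξ).1).1 (hd ξ (hball ξ hξ).1).2 (hball ξ hξ).2]
      have := h ξ (hball ξ hξ).1
      rw [show deriv F ξ * G ξ - F ξ * deriv G ξ = 0 by linear_combination this, zero_div]
      rfl)
    hζ (Metric.mem_ball_self hr)
  rw [← hq, div_mul_cancel₀ _ (hball ζ hζ).2]

/-- Extension of a function on `U` by zero, so that `deriv` and `DifferentiableOn` apply to it. -/
noncomputable def ext0 {U : Set ℂ} (f : U → ℂ) : ℂ → ℂ := Function.extend Subtype.val f 0

theorem ext0_apply {U : Set ℂ} (f : U → ℂ) (x : U) : ext0 f x = f x :=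
  Subtype.val_injective.extend_apply f 0 x

theorem ext0_apply' {U : Set ℂ} (f : U → ℂ) {ζ : ℂ} (h : ζ ∈ U) : ext0 f ζ = f ⟨ζ, h⟩ :=
  ext0_apply f ⟨ζ, h⟩

/-- The algebra of holomorphic functions on `U` (for `U` open). Elements are functions on the
subtype `U`, so equality means equality on `U`. -/
def holo (U : Set ℂ) : Subalgebra ℂ (U → ℂ) where
  carrier := {f | DifferentiableOn ℂ (ext0 f) U}
  mul_mem' {f g} hf hg := (DifferentiableOn.mul hf hg).congr fun ζ h ↦ by
    simp [ext0_apply' _ h]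
  add_mem' {f g} hf hg := (DifferentiableOn.add hf hg).congr fun ζ h ↦ by
    simp [ext0_apply' _ h]
  algebraMap_mem' c := (differentiableOn_const c).congr fun ζ h ↦ by
    simp [ext0_apply' _ h]

theorem restrict_mem_holo {U : Set ℂ} {F : ℂ → ℂ} (hF : DifferentiableOn ℂ F U) :
    U.domRestrict F ∈ holo U := hF.congr fun ζ h ↦ by
  rw [ext0_apply' _ h, Set.domRestrict_apply]

theorem deriv_ext0_restrict {U : Set ℂ} (hUo : IsOpen U) {F : ℂ → ℂ} (f : U → ℂ)
    (h : ∀ x : U, f x = F x) (x : U) : deriv (ext0 f) x = deriv F x := by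
  refine Filter.EventuallyEq.deriv_eq ?_
  filter_upwards [hUo.mem_nhds x.2] with ζ hζ
  rw [ext0_apply' _ hζ, h]

/-- Complex differentiation, as a derivation of the algebra of holomorphic functions on `U`. -/
noncomputable def holoDeriv {U : Set ℂ} (hUo : IsOpen U) : Derivation ℂ (holo U) (holo U) :=
  have hd : ∀ (f : holo U) (x : U), DifferentiableAt ℂ (ext0 f.1) x := fun f x ↦
    DifferentiableOn.differentiableAt f.2 (hUo.mem_nhds x.2)
  Derivation.mk'
    { toFun := fun f ↦ ⟨U.domRestrict (deriv (ext0 f.1)),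
        restrict_mem_holo (DifferentiableOn.deriv f.2 hUo)⟩
      map_add' := fun f g ↦ Subtype.ext <| funext fun x ↦ by
        refine (deriv_ext0_restrict hUo (F := fun ζ ↦ ext0 f.1 ζ + ext0 g.1 ζ) _
          (fun x ↦ by simp [ext0_apply]) x).trans ?_
        exact deriv_fun_add (hd f x) (hd g x)
      map_smul' := fun c f ↦ Subtype.ext <| funext fun x ↦ by
        refine (deriv_ext0_restrict hUo (F := fun ζ ↦ c * ext0 f.1 ζ) _
          (fun x ↦ by simp [ext0_apply]) x).trans ?_
        exact deriv_const_mul _ (hd f x) }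
    fun f g ↦ Subtype.ext <| funext fun x ↦ by
      refine (deriv_ext0_restrict hUo (F := fun ζ ↦ ext0 f.1 ζ * ext0 g.1 ζ) _
        (fun x ↦ by simp [ext0_apply]) x).trans ?_
      refine (deriv_fun_mul (hd f x) (hd g x)).trans ?_
      simp only [ext0_apply]
      change _ = f.1 x * deriv (ext0 g.1) x + g.1 x * deriv (ext0 f.1) x
      ring

theorem holoDeriv_apply {U : Set ℂ} (hUo : IsOpen U) (f : holo U) (x : U) :
    (holoDeriv hUo f).1 x = deriv (ext0 f.1) x := rfl

/-- The identity theorem in algebraic form. -/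
theorem holo_isDomain {U : Set ℂ} (hUo : IsOpen U) (hUc : IsConnected U) : IsDomain (holo U) := by
  obtain ⟨x₀, hx₀⟩ := hUc.nonempty
  have : Nontrivial (holo U) := ⟨0, 1, fun h ↦ by
    simpa using congrFun (congrArg Subtype.val h) ⟨x₀, hx₀⟩⟩
  have : NoZeroDivisors (holo U) := ⟨fun {f g} h ↦ by
    have h0 : ∀ ζ ∈ U, ext0 f.1 ζ = 0 ∨ ext0 g.1 ζ = 0 := fun ζ hζ ↦ by
      have := congrFun (congrArg Subtype.val h) ⟨ζ, hζ⟩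
      rw [ext0_apply' _ hζ, ext0_apply' _ hζ]
      exact mul_eq_zero.1 this
    have := (DifferentiableOn.analyticOnNhd f.2 hUo).eq_zero_or_eq_zero_of_mul_eq_zero
      (DifferentiableOn.analyticOnNhd g.2 hUo) (fun ζ hζ ↦ mul_eq_zero.2 (h0 ζ hζ))
      hUc.isPreconnected
    refine this.imp (fun h ↦ ?_) fun h ↦ ?_ <;>
    · refine Subtype.ext (funext fun x ↦ ?_)
      exact (ext0_apply _ x).symm.trans (h x x.2)⟩
  exact NoZeroDivisors.to_isDomain _

/-- `algebraicIndependent_cons` over a domain `R`, with `δ` in the role of `d/dz`. The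
derivation used on the fraction field is `z • δ`, for which `z` satisfies the autonomous equation
`D z = z`; the hypothesis `hconst` says that quotients with zero derivative are in `k`. -/
theorem algebraicIndependent_cons_of_isDomain {k R : Type*} [Field k] [CharZero k] [CommRing R]
    [IsDomain R] [Algebra k R] (δ : Derivation k R R)
    (hconst : ∀ f g, g ≠ 0 → g * δ f = f * δ g → ∃ c, f = algebraMap k R c * g)
    {z : R} (hδz : δ z = 1) {n : ℕ} {w : Fin n → R} (hw : Function.Injective w)
    (hw0 : ∀ i, w i ≠ 0) (hδw : ∀ i, (1 + w i) * (z * δ (w i)) = w i) :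
    AlgebraicIndependent k (Fin.cons z w : Fin (n + 1) → R) := by
  let K := FractionRing R
  have : Algebra.FormallyEtale R K := Algebra.FormallyEtale.of_isLocalization (nonZeroDivisors R)
  have hinj : Function.Injective (algebraMap R K) := IsFractionRing.injective R K
  obtain ⟨δK, hδK⟩ := exists_derivation_ext (L := K) ((Algebra.linearMap R K).compDer δ)
  replace hδK : ∀ f, δK (algebraMap R K f) = algebraMap R K (δ f) := hδK
  have hz0 : z ≠ 0 := fun h ↦ one_ne_zero (α := R) <| by rw [← hδz, h, map_zero]
  have hzK : algebraMap R K z ≠ 0 := (map_ne_zero_iff _ hinj).2 hz0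
  have hK : ∀ u, δK u = 0 → ∃ c, algebraMap k K c = u := by
    intro u hu
    obtain ⟨f, g, hg, rfl⟩ := IsFractionRing.div_surjective (A := R) u
    have hg0 : g ≠ 0 := nonZeroDivisors.ne_zero hg
    have hgK : algebraMap R K g ≠ 0 := (map_ne_zero_iff _ hinj).2 hg0
    obtain ⟨c, rfl⟩ := hconst f g hg0 <| by
      apply hinj
      rw [Derivation.leibniz_div, hδK, hδK, smul_eq_mul, smul_eq_mul, smul_eq_mul] at hu
      have := (mul_eq_zero.1 hu).resolve_left (by simpa using hgK)
      rw [map_mul, map_mul]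
      exact sub_eq_zero.1 this
    refine ⟨c, ?_⟩
    rw [map_mul, mul_div_cancel_right₀ _ hgK, ← IsScalarTower.algebraMap_apply]
  have key := algebraicIndependent_cons (algebraMap R K z • δK)
    (fun u hu ↦ hK u ((mul_eq_zero.1 hu).resolve_left hzK)) hzK
    (by rw [Derivation.smul_apply, hδK, hδz, map_one, smul_eq_mul, mul_one])
    (w := fun i ↦ algebraMap R K (w i)) (hinj.comp hw)
    (fun i ↦ (map_ne_zero_iff _ hinj).2 (hw0 i))
    (fun i ↦ by
      rw [Derivation.smul_apply, hδK, smul_eq_mul, ← map_mul, ← map_one (algebraMap R K),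
        ← map_add, ← map_mul, hδw])
  have hcons : (Fin.cons (algebraMap R K z) fun i ↦ algebraMap R K (w i) : Fin (n + 1) → K)
      = IsScalarTower.toAlgHom k R K ∘ (Fin.cons z w : Fin (n + 1) → R) := by
    ext j
    cases j using Fin.cases <;> rfl
  rw [hcons] at key
  exact key.of_comp _

open Complex

theorem stmt13 (U : Set ℂ) (hUo : IsOpen U) (hUc : IsConnected U)
    {n : ℕ} (W : Fin n → (ℂ → ℂ))
    (hdiff : ∀ i, DifferentiableOn ℂ (W i) U)
    (hlambert : ∀ i, ∀ ζ ∈ U, W i ζ * Complex.exp (W i ζ) = ζ)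
    (hdistinct : ∀ i j, i ≠ j → ¬ Set.EqOn (W i) (W j) U) :
    ∀ P : MvPolynomial (Fin (n + 1)) ℂ, P ≠ 0 →
      ¬ ∀ ζ ∈ U, MvPolynomial.eval (Fin.cons ζ fun i => W i ζ) P = 0 := by
  intro P hP hzero
  obtain ⟨x₀, hx₀⟩ := hUc.nonempty
  have := holo_isDomain hUo hUc
  let z : holo U := ⟨U.domRestrict id, restrict_mem_holo differentiableOn_id⟩
  let w : Fin n → holo U := fun i ↦ ⟨U.domRestrict (W i), restrict_mem_holo (hdiff i)⟩
  have key : AlgebraicIndependent ℂ (Fin.cons z w : Fin (n + 1) → holo U) := by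
    refine algebraicIndependent_cons_of_isDomain (holoDeriv hUo) ?_ ?_ ?_ ?_ ?_
    · intro f g hg0 hfg
      obtain ⟨x, hx⟩ : ∃ x, g.1 x ≠ 0 := by
        by_contra! h
        exact hg0 (Subtype.ext (funext h))
      obtain ⟨c, hc⟩ := eqOn_const_mul hUo hUc.isPreconnected f.2 g.2 x.2
        (by rwa [ext0_apply]) (fun ζ hζ ↦ by
          have := congrFun (congrArg Subtype.val hfg) ⟨ζ, hζ⟩
          rw [ext0_apply' _ hζ, ext0_apply' _ hζ]
          exact this)
      refine ⟨c, Subtype.ext <| funext fun x ↦ ?_⟩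
      have := hc x.2
      simp only [ext0_apply] at this
      exact this
    · refine Subtype.ext <| funext fun x ↦ ?_
      refine (deriv_ext0_restrict hUo (F := id) _ (fun _ ↦ rfl) x).trans ?_
      rw [deriv_id]
      rfl
    · intro i j h
      by_contra hij
      exact hdistinct i j hij fun ζ hζ ↦ congrFun (congrArg Subtype.val h) ⟨ζ, hζ⟩
    · intro i h
      -- a solution vanishing on `U` would force `ζ = 0` for every `ζ ∈ U`
      have hz0 : ∀ ζ ∈ U, id ζ = (0 : ℂ) := fun ζ hζ ↦ by
        have h1 : W i ζ = 0 := congrFun (congrArg Subtype.val h) ⟨ζ, hζ⟩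
        have h2 := hlambert i ζ hζ
        rw [h1, zero_mul] at h2
        exact h2.symm
      have h3 : deriv (id : ℂ → ℂ) x₀ = deriv (fun _ ↦ (0 : ℂ)) x₀ := by
        refine Filter.EventuallyEq.deriv_eq ?_
        filter_upwards [hUo.mem_nhds hx₀] with ζ hζ using hz0 ζ hζ
      simp at h3
    · intro i
      refine Subtype.ext <| funext fun x ↦ ?_
      have h1 : (holoDeriv hUo (w i)).1 x = deriv (W i) x :=
        deriv_ext0_restrict hUo (F := W i) _ (fun _ ↦ rfl) x
      change (1 + W i x) * ((x : ℂ) * (holoDeriv hUo (w i)).1 x) = W i x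
      have hd := ((hdiff i).differentiableAt (hUo.mem_nhds x.2)).hasDerivAt
      have h2 : deriv (fun ζ ↦ W i ζ * Complex.exp (W i ζ)) x = _ := (hd.mul hd.cexp).deriv
      have h3 : deriv (fun ζ ↦ W i ζ * Complex.exp (W i ζ)) x = 1 := by
        rw [← deriv_id (x : ℂ)]
        refine Filter.EventuallyEq.deriv_eq ?_
        filter_upwards [hUo.mem_nhds x.2] with ζ hζ using hlambert i ζ hζ
      have h4 := h3.symm.trans h2
      rw [h1]
      have h5 := hlambert i x x.2
      -- `W * exp W` has derivative `1`; multiply by `W` and use the equation once more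
      linear_combination (-W i x) * h4 - (1 + W i x) * deriv (W i) x * h5
  refine hP (key.eq_zero_of_aeval_eq_zero P (Subtype.ext <| funext fun x ↦ ?_))
  refine Eq.trans ?_ (hzero x x.2)
  let ev : holo U →ₐ[ℂ] ℂ := (Pi.evalAlgHom ℂ (fun _ : U ↦ ℂ) x).comp (holo U).val
  change ev (MvPolynomial.aeval _ P) = _
  rw [MvPolynomial.comp_aeval_apply, ← MvPolynomial.coe_aeval_eq_eval]
  change _ = MvPolynomial.aeval _ P
  congr 2
  ext j
  cases j using Fin.cases <;> rfl
end
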